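/- Let p be a prime, n = d + m with d, m ≥ 1, and let α ∈ ℤ_p^m satisfy τ(α) = m+1. Let τ = (τ₁,…,τₙ) ∈ ℝ^n_{>0} be a weight vector with Σ_{i=1}^m τ_{d+i} < m+1, Σ_{i=1}^n τ_i > n+1, and τ_i > 1 for all 1 ≤ i ≤ n. Then the Hausdorff dimension of 𝔚_n(τ) ∩ Π_α equals s := min_{1≤i≤d} ( n + 1 − Σ_{i=1}^m τ_{d+i} + Σ_{1≤j≤d, τ_j ≤ τ_i} (τ_i − τ_j) ) / τ_i, and moreover ℋ^s(𝔚_n(τ) ∩ Π_α) = ∞. -/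

import Mathlib

/-!
Identify `Π_α` with `ℤ_p^d`. For exponents `k i ≈ g τ i`, the integer vectors `(q₀, q)` with
`q₀ α i ≡ q i` modulo `p ^ k i` form a lattice `lat α k` in `ℤ^(m+1)` of covolume `p ^ ∑ k i`. If it
had a nonzero vector much shorter than the `(m+1)`-st root of the covolume, `α` would have an exponent
greater than `m + 1`. As `τ(α) = m + 1` and `∑ τ_{d+i} < m + 1`, the lattice therefore has covering
radius at most `p ^ ((1 - δ) g)` (`exists_covers`), and the number of its points in a box of size
`p ^ g` is what the covolume predicts, also with prescribed residues.

Upper bound: this count bounds the number of rectangles with sides `p ^ (-g τ j)`, `j ≤ d`, around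
the rational points with denominators about `p ^ g`. Cutting them into balls of radius `p ^ (-g τ i₀)`
for an index `i₀` where the minimum is attained gives `dim ≤ s` (`dimH_le_of_lt_mul`).

Lower bound and infinite measure: given a ball, consider the points `x` of it that are resolved at a
precision `ρ`. By the pigeonhole principle, the lattice of `(x, α)` has many vectors of size `p ^ g`
as long as `∑ ρ j + ∑ k i` is slightly less than `(d + m + 1) g`. A first moment bound shows that, for
most `x`, this lattice has no very short vectors; the number of its vectors with `q₀ ≡ 1` modulo the
factorial of a large constant can then be bounded below, while a sieve in the lattice of `α` shows
that on average few of these vectors violate the coprimality condition. So at least half of the `x`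
have a good rational approximation (`exists_half_good`). Around each of these lies a rectangle with
sides `p ^ (-t j)`, `t j ≈ g τ j`, of approximable points (`locUbiq_approxSet`).

Such locally ubiquitous rectangles support a mass distribution argument. Given countably many balls
of finite total `s`-dimensional size and small total volume, a ball that is not essentially covered
by them contains a much smaller such ball inside one of the rectangles (`Free.exists_next`); iterating
this yields a point of the limsup set outside all of the given balls. As `s < d`, a set of finite
`s`-dimensional measure has covers of bounded `s`-size and arbitrarily small volume, so the limsup set
has infinite measure (`LocUbiq.measure_eq_top`). What has to be known about `s` is the inequality
`s v ≤ n + 1 - ∑ τ_{d+i} + ∑ max (v - τ j) 0` for all `v`; by piecewise linearity it suffices to have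
it at the `v = τ i`, which is the definition of `s` as a minimum (`mul_le_of_le_at_kinks`).
-/

open scoped BigOperators ENNReal Classical
open MeasureTheory

noncomputable instance {p : ℕ} [Fact p.Prime] : MeasurableSpace ℤ_[p] := borel _
instance {p : ℕ} [Fact p.Prime] : BorelSpace ℤ_[p] := ⟨rfl⟩

/-- The Diophantine exponent of `α ∈ ℤ_p^m`. -/
noncomputable def dioExp {p : ℕ} [Fact p.Prime] {m : ℕ} (α : Fin m → ℤ_[p]) : ℝ :=
  sSup {s : ℝ | ∃ τ : Fin m → ℝ, s = ∑ i, τ i ∧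
    ∀ Q₀ : ℕ, ∃ Q : ℕ, Q₀ ≤ Q ∧ ∃ q₀ : ℤ, ∃ q : Fin m → ℤ,
      0 < q₀ ∧ q₀ ≤ (Q : ℤ) ∧ (∀ i, |q i| ≤ (Q : ℤ)) ∧
      ∀ i, ‖(q₀ : ℤ_[p]) * α i - (q i : ℤ_[p])‖ < (Q : ℝ) ^ (-(τ i))}

/-- The set `𝔄_{q₀}(τ)` of weighted `τ`-approximable points with denominator `q₀`. -/
def Aset {p : ℕ} [Fact p.Prime] {n : ℕ} (τ : Fin n → ℝ) (q₀ : ℕ) :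
    Set (Fin n → ℤ_[p]) :=
  ⋃ (q : Fin n → ℤ) (_ : ∀ i, |q i| ≤ (q₀ : ℤ) ∧ Int.gcd (q i) q₀ = 1),
    {x | ∀ i, ‖(x i : ℚ_[p]) - (q i : ℚ_[p]) / (q₀ : ℚ_[p])‖ < (q₀ : ℝ) ^ (-(τ i))}

/-- The set `𝔚_n(τ) = limsup_{q₀ → ∞} 𝔄_{q₀}(τ)` of weighted `τ`-approximable points. -/
def Wset {p : ℕ} [Fact p.Prime] {n : ℕ} (τ : Fin n → ℝ) : Set (Fin n → ℤ_[p]) :=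
  ⋂ (Q : ℕ), ⋃ (q₀ : ℕ) (_ : Q ≤ q₀), Aset τ q₀

/-- The coordinate hyperplane `Π_α ⊆ ℤ_p^{d+m}` determined by `α ∈ ℤ_p^m`. -/
def Pialpha {p : ℕ} [Fact p.Prime] {d m : ℕ} (α : Fin m → ℤ_[p]) :
    Set (Fin (d + m) → ℤ_[p]) :=
  {x | ∀ i : Fin m, x (Fin.natAdd d i) = α i}

namespace PadicHyperplane

/-! ### Counting lattice points in boxes -/

section Lattice

variable {κ G : Type*} [Fintype κ]

/-- The integer points of the cube with centre `c` and half-side `X`. -/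
noncomputable def box (c : κ → ℤ) (X : ℕ) : Finset (κ → ℤ) :=
  Fintype.piFinset fun i => Finset.Icc (c i - X) (c i + X)

lemma mem_box {c z : κ → ℤ} {X : ℕ} : z ∈ box c X ↔ ∀ i, |z i - c i| ≤ X := by
  simp only [box, Fintype.mem_piFinset, Finset.mem_Icc, abs_le]
  refine forall_congr' fun i => ?_
  constructor <;> rintro ⟨h1, h2⟩ <;> constructor <;> linarith

lemma card_box (c : κ → ℤ) (X : ℕ) : (box c X).card = (2 * X + 1) ^ Fintype.card κ := by
  simp only [box, Fintype.card_piFinset, Int.card_Icc]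
  rw [Finset.prod_eq_pow_card (b := 2 * X + 1)]
  · simp
  · intro i _
    omega

variable [AddCommGroup G]

/-- The points of the lattice `ker φ` in the cube with centre `c` and half-side `X`. -/
noncomputable def latBox (φ : (κ → ℤ) →+ G) (c : κ → ℤ) (X : ℕ) : Finset (κ → ℤ) :=
  (box c X).filter fun z => φ z = 0

lemma mem_latBox {φ : (κ → ℤ) →+ G} {c z : κ → ℤ} {X : ℕ} :
    z ∈ latBox φ c X ↔ (∀ i, |z i - c i| ≤ X) ∧ φ z = 0 := by
  simp [latBox, mem_box]

/-- Every class modulo the lattice `ker φ` has a representative of sup-norm at most `ρ`; this says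
that the covering radius of the lattice is about `ρ`. -/
def Covers (φ : (κ → ℤ) →+ G) (ρ : ℕ) : Prop := ∀ g, ∃ f, (∀ i, |f i| ≤ (ρ : ℤ)) ∧ φ f = g

/-- A lattice without nonzero vectors of size `λ` has covering radius at most `3Hλ`, where `H`
exceeds the ratio of its covolume to `λ ^ dim`: if the image of the box of size `3Hλ` were not
everything, the images of the boxes of sizes `3jλ`, `j < H`, would keep growing, and picking a new
point each time would produce `H` disjoint translates of the image of a box of side `λ`. -/
lemma covers_of_no_short [Fintype G] (φ : (κ → ℤ) →+ G) (hφ : Function.Surjective φ) {lam H : ℕ}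
    (hlam : 1 ≤ lam) (hshort : ∀ z, φ z = 0 → (∀ i, |z i| ≤ (lam : ℤ)) → z = 0)
    (hH : Fintype.card G < H * (lam + 1) ^ Fintype.card κ) : Covers φ (3 * H * lam) := by
  let A : ℕ → Set G := fun h => {g | ∃ f : κ → ℤ, (∀ i, |f i| ≤ ((h * lam : ℕ) : ℤ)) ∧ φ f = g}
  have hAmono : ∀ {h h'}, h ≤ h' → A h ⊆ A h' := by
    rintro h h' hh g ⟨f, hf, rfl⟩
    exact ⟨f, fun i => (hf i).trans (by exact_mod_cast Nat.mul_le_mul_right _ hh), rfl⟩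
  have hAadd : ∀ {h h' g g'}, g ∈ A h → g' ∈ A h' → g + g' ∈ A (h + h') := by
    rintro h h' g g' ⟨f, hf, rfl⟩ ⟨f', hf', rfl⟩
    refine ⟨f + f', fun i => ?_, map_add _ _ _⟩
    have := abs_add_le (f i) (f' i)
    have h1 := hf i
    have h2 := hf' i
    simp only [Pi.add_apply]
    push_cast at *
    linarith
  have hstab : ∀ h, A (h + 1) ⊆ A h → ∀ g, g ∈ A h := by
    intro h hh
    have key : ∀ t, A (h + t) ⊆ A h := by
      intro t
      induction t with
      | zero => exact subset_rfl
      | succ t ih =>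
        rintro g ⟨f, hf, rfl⟩
        -- split off a vector of size at most `lam`
        let f1 : κ → ℤ := fun i => max (-lam) (min lam (f i))
        have e : f = (f - f1) + f1 := by simp
        rw [e, map_add]
        refine hh (hAadd (ih ⟨f - f1, fun i => ?_, rfl⟩) ⟨f1, fun i => ?_, rfl⟩)
        · have := hf i
          simp only [Pi.sub_apply, f1]
          have hn : 0 ≤ ((h + t : ℕ) : ℤ) * lam := by positivity
          push_cast at *
          rw [abs_le] at *
          have : ((h : ℤ) + (t + 1)) * lam = (h + t) * lam + lam := by ring
          constructor
          · rcases le_total (f i) (-lam) with h1 | h1 <;> rcases le_total (lam : ℤ) (f i) with h2 | h2 <;>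
              simp_all <;> omega
          · rcases le_total (f i) (-lam) with h1 | h1 <;> rcases le_total (lam : ℤ) (f i) with h2 | h2 <;>
              simp_all <;> omega
        · simp only [f1, one_mul, abs_le]
          constructor
          · exact le_max_left _ _
          · exact max_le (by omega) (min_le_left _ _)
    intro g
    obtain ⟨z, rfl⟩ := hφ g
    let t : ℕ := ∑ i, (z i).natAbs
    refine key t ⟨z, fun i => ?_, rfl⟩
    have h1 : (z i).natAbs ≤ t :=
      Finset.single_le_sum (f := fun i => (z i).natAbs) (fun _ _ => Nat.zero_le _) (Finset.mem_univ i)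
    have h2 : t ≤ (h + t) * lam := by nlinarith
    rw [Int.abs_eq_natAbs]
    exact_mod_cast h1.trans h2
  intro g
  by_contra hcon
  have hg : g ∉ A (3 * H) := hcon
  have hex : ∀ j : Fin H, ∃ x, x ∈ A (3 * j + 1) ∧ x ∉ A (3 * j) := by
    intro j
    by_contra! hj
    exact hg (hAmono (by omega) (hstab (3 * j) hj g))
  choose x hx1 hx2 using hex
  let S : Finset (κ → ℤ) := Fintype.piFinset fun _ => Finset.Icc (0 : ℤ) lam
  have hScard : S.card = (lam + 1) ^ Fintype.card κ := by
    simp only [S, Fintype.card_piFinset, Int.card_Icc]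
    rw [Finset.prod_eq_pow_card (b := lam + 1)]
    · simp
    · intro i _
      omega
  have hdiff : ∀ s ∈ S, ∀ s' ∈ S, ∀ i, |(s' - s) i| ≤ (lam : ℤ) := by
    intro s hs s' hs' i
    simp only [S, Fintype.mem_piFinset, Finset.mem_Icc] at hs hs'
    have h1 := hs i
    have h2 := hs' i
    simp only [Pi.sub_apply, abs_le]
    constructor <;> linarith
  have hneq : ∀ j j' : Fin H, j' < j → ∀ s ∈ S, ∀ s' ∈ S, x j + φ s ≠ x j' + φ s' := by
    intro j j' hlt s hs s' hs' he
    have e : x j = x j' + φ (s' - s) := by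
      rw [map_sub, ← add_sub_assoc, ← he]
      abel
    refine hx2 j ?_
    rw [e]
    have hj' : (j' : ℕ) < j := hlt
    refine hAmono (by omega) (hAadd (hx1 j') (h' := 1) ⟨s' - s, fun i => ?_, rfl⟩)
    simpa using hdiff s hs s' hs' i
  have hinj : Set.InjOn (fun q : Fin H × (κ → ℤ) => x q.1 + φ q.2)
      ((Finset.univ ×ˢ S : Finset (Fin H × (κ → ℤ))) : Set _) := by
    rintro ⟨j, s⟩ hs ⟨j', s'⟩ hs' he
    simp only [Finset.coe_product, Set.mem_prod, Finset.mem_coe, Finset.mem_univ, true_and,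
      Finset.coe_univ, Set.mem_univ] at hs hs' he
    have hj : j = j' := by
      rcases lt_trichotomy j j' with h | h | h
      · exact absurd he.symm (hneq j' j h s' hs' s hs)
      · exact h
      · exact absurd he (hneq j j' h s hs s' hs')
    subst hj
    have h0 : φ (s - s') = 0 := by
      rw [map_sub, sub_eq_zero]
      exact add_left_cancel he
    have := hshort _ h0 (hdiff s' hs' s hs)
    rw [sub_eq_zero] at this
    rw [this]
  have := Finset.card_le_card_of_injOn (t := Finset.univ) _ (fun _ _ => Finset.mem_univ _) hinj
  rw [Finset.card_product, hScard, Finset.card_univ, Finset.card_univ, Fintype.card_fin] at this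
  omega

/-- The translates of the lattice points by representatives of the classes are distinct. -/
lemma card_latBox_mul_le [Fintype G] {φ : (κ → ℤ) →+ G} {ρ : ℕ} (h : Covers φ ρ) (c : κ → ℤ)
    (X : ℕ) :
    (latBox φ c X).card * Fintype.card G ≤ (2 * (X + ρ) + 1) ^ Fintype.card κ := by
  choose f hf hf' using h
  rw [← card_box c (X + ρ), ← Finset.card_univ, ← Finset.card_product]
  refine Finset.card_le_card_of_injOn (fun q => q.1 + f q.2) ?_ ?_
  · rintro ⟨v, g⟩ hv
    simp only [Finset.coe_product, Set.mem_prod, Finset.mem_coe, mem_latBox] at hv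
    simp only [Finset.mem_coe, mem_box, Pi.add_apply]
    intro i
    have h1 := hv.1.1 i
    have h2 := hf g i
    push_cast
    rw [abs_le] at *
    constructor <;> linarith
  · rintro ⟨v, g⟩ hv ⟨v', g'⟩ hv' he
    simp only [Finset.coe_product, Set.mem_prod, Finset.mem_coe, mem_latBox] at hv hv' he
    have hg : g = g' := by
      have := congrArg φ he
      rwa [map_add, map_add, hv.1.2, hv'.1.2, zero_add, zero_add, hf', hf'] at this
    subst hg
    simpa using he

omit [Fintype κ] in
/-- Representatives of a class modulo `ker φ` with prescribed residues modulo `D`. -/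
lemma Covers.exists_modEq {φ : (κ → ℤ) →+ G} {ρ : ℕ} (h : Covers φ ρ) {D : ℕ} (hD : 1 ≤ D)
    (w : κ → ℤ) :
    ∃ f, φ f = φ w ∧ (∀ i, (D : ℤ) ∣ f i - w i) ∧ ∀ i, |f i| ≤ ((D * (ρ + 1) : ℕ) : ℤ) := by
  obtain ⟨f', hf', he⟩ := h (φ fun i => w i / D)
  have hD' : (0 : ℤ) < D := by exact_mod_cast hD
  refine ⟨fun i => D * f' i + w i % D, ?_, fun i => ?_, fun i => ?_⟩
  · have e1 : (fun i => (D : ℤ) * f' i + w i % D) = D • f' + fun i => w i % D := by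
      ext i; simp
    have e2 : w = D • (fun i => w i / D) + fun i => w i % D := by
      ext i
      simp only [Pi.add_apply, Pi.smul_apply, nsmul_eq_mul]
      exact (Int.mul_ediv_add_emod _ _).symm
    rw [e1, map_add, map_nsmul, he, ← map_nsmul, ← map_add, ← e2]
  · have := Int.mul_ediv_add_emod (w i) D
    exact ⟨f' i - w i / D, by linear_combination this⟩
  · have h1 := Int.emod_nonneg (w i) hD'.ne'
    have h2 := Int.emod_lt_of_pos (w i) hD'
    have h3 := hf' i
    push_cast
    rw [abs_le] at *
    constructor <;> nlinarith

/-- Lower bound for the number of lattice points with first coordinate `≡ 1` modulo `M`. -/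
lemma le_card_latBox_modEq [Fintype G] {φ : (κ → ℤ) →+ G} {ρ : ℕ} (h : Covers φ ρ) {M : ℕ}
    (hM : 1 ≤ M) (i₀ : κ) (e : κ → ℤ) (he : φ e = 0) (he1 : e i₀ = 1) (c : κ → ℤ) (X : ℕ) :
    (2 * X + 1) ^ Fintype.card κ ≤
      ((latBox φ c (X + M * (ρ + 1))).filter fun v => (M : ℤ) ∣ v i₀ - 1).card *
        (Fintype.card G * M) := by
  have : NeZero M := ⟨by omega⟩
  have hex : ∀ z : κ → ℤ, ∃ f, φ f = φ z ∧ (M : ℤ) ∣ f i₀ - (z i₀ - 1) ∧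
      ∀ i, |f i| ≤ ((M * (ρ + 1) : ℕ) : ℤ) := by
    intro z
    obtain ⟨f, h1, h2, h3⟩ := h.exists_modEq hM (z - e)
    refine ⟨f, ?_, ?_, h3⟩
    · rw [h1, map_sub, he, sub_zero]
    · have := h2 i₀
      simpa [he1] using this
  -- the representative is chosen as a function of the class only
  let cls : (κ → ℤ) → G × ZMod M := fun z => (φ z, (z i₀ : ZMod M))
  have hex' : ∀ q : G × ZMod M, ∃ f : κ → ℤ, (∃ z, cls z = q) → φ f = q.1 ∧
      ((f i₀ : ℤ) : ZMod M) = q.2 - 1 ∧ ∀ i, |f i| ≤ ((M * (ρ + 1) : ℕ) : ℤ) := by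
    intro q
    by_cases hq : ∃ z, cls z = q
    · obtain ⟨z, rfl⟩ := hq
      obtain ⟨f, h1, h2, h3⟩ := hex z
      refine ⟨f, fun _ => ⟨h1, ?_, h3⟩⟩
      have := (ZMod.intCast_zmod_eq_zero_iff_dvd _ M).2 h2
      push_cast at this
      exact sub_eq_zero.1 this
    · exact ⟨0, fun hh => absurd hh hq⟩
  choose F hF using hex'
  rw [← card_box c X]
  have : Fintype.card G * M = (Finset.univ : Finset (G × ZMod M)).card := by
    simp [ZMod.card]
  rw [this, ← Finset.card_product]
  refine Finset.card_le_card_of_injOn (fun z => (z - F (cls z), cls z)) ?_ ?_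
  · intro z hz
    obtain ⟨h1, h2, h3⟩ := hF (cls z) ⟨z, rfl⟩
    simp only [Finset.mem_coe, mem_box] at hz
    simp only [Finset.coe_product, Set.mem_prod, Finset.mem_coe, Finset.mem_filter, mem_latBox,
      Finset.mem_univ, and_true, Pi.sub_apply]
    refine ⟨⟨fun i => ?_, ?_⟩, ?_⟩
    · have h4 := hz i
      have h5 := h3 i
      push_cast at *
      rw [abs_le] at *
      constructor <;> linarith
    · rw [map_sub, h1, sub_self]
    · rw [← ZMod.intCast_zmod_eq_zero_iff_dvd]
      push_cast
      rw [h2]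
      simp [cls]
  · intro z _ z' _ he
    simp only [Prod.mk.injEq] at he
    have h1 := he.1
    have h2 : cls z = cls z' := he.2
    rw [h2] at h1
    simpa using h1

/-- Double counting of translates: if each point is hit at most `μ` times by the translates of `S`
by the lattice vectors `u j`, then `S` is small. -/
lemma card_mul_le_of_translates {J : Type*} (φ : (κ → ℤ) →+ G) (c : κ → ℤ) {X W μ : ℕ}
    (S : Finset (κ → ℤ)) (hS : S ⊆ latBox φ c X) (Js : Finset J) (u : J → κ → ℤ)
    (hu : ∀ j ∈ Js, φ (u j) = 0) (hW : ∀ j ∈ Js, ∀ i, |u j i| ≤ (W : ℤ))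
    (hμ : ∀ w, (Js.filter fun j => w - u j ∈ S).card ≤ μ) :
    S.card * Js.card ≤ μ * (latBox φ c (X + W)).card := by
  rw [← Finset.card_product]
  refine Finset.card_le_mul_card_image_of_maps_to (f := fun q => q.1 + u q.2) ?_ _ ?_
  · rintro ⟨s, j⟩ hs
    simp only [Finset.mem_product] at hs
    have h1 := mem_latBox.1 (hS hs.1)
    rw [mem_latBox]
    refine ⟨fun i => ?_, ?_⟩
    · have h2 := h1.1 i
      have h3 := hW j hs.2 i
      simp only [Pi.add_apply]
      push_cast
      rw [abs_le] at *
      constructor <;> linarith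
    · simp only [map_add, h1.2, hu j hs.2, add_zero]
  · intro w _
    refine le_trans ?_ (hμ w)
    refine Finset.card_le_card_of_injOn (fun q => q.2) ?_ ?_
    · rintro ⟨s, j⟩ hs
      simp only [Finset.coe_filter, Finset.mem_product, Set.mem_ofPred_eq] at hs ⊢
      refine ⟨hs.1.2, ?_⟩
      rw [← hs.2]
      simpa using hs.1.1
    · rintro ⟨s, j⟩ hs ⟨s', j'⟩ hs' he
      simp only [Finset.coe_filter, Finset.mem_product, Set.mem_ofPred_eq] at hs hs' he
      subst he
      have := hs.2.trans hs'.2.symm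
      simp only [add_left_inj] at this
      rw [this]

/-- The case of disjoint translates. -/
lemma card_mul_le_of_disjoint_translates {J : Type*} (φ : (κ → ℤ) →+ G) (c : κ → ℤ) {X W : ℕ}
    (S : Finset (κ → ℤ)) (hS : S ⊆ latBox φ c X) (Js : Finset J) (u : J → κ → ℤ)
    (hu : ∀ j ∈ Js, φ (u j) = 0) (hW : ∀ j ∈ Js, ∀ i, |u j i| ≤ (W : ℤ))
    (hdis : ∀ j ∈ Js, ∀ j' ∈ Js, ∀ s ∈ S, ∀ s' ∈ S, s + u j = s' + u j' → j = j') :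
    S.card * Js.card ≤ (latBox φ c (X + W)).card := by
  have := card_mul_le_of_translates (μ := 1) φ c S hS Js u hu hW (fun w => ?_)
  · simpa using this
  · rw [Finset.card_le_one]
    intro j hj j' hj'
    simp only [Finset.mem_filter] at hj hj'
    exact hdis j hj.1 j' hj'.1 _ hj.2 _ hj'.2 (by abel)

lemma card_latBox_mono {φ : (κ → ℤ) →+ G} {c : κ → ℤ} {X X' : ℕ} (h : X ≤ X') :
    (latBox φ c X).card ≤ (latBox φ c X').card := by
  refine Finset.card_le_card fun z hz => ?_
  rw [mem_latBox] at *
  exact ⟨fun i => (hz.1 i).trans (by exact_mod_cast h), hz.2⟩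

end Lattice

/-! ### Lattices of simultaneous `p`-adic approximation -/

section Approx

variable {p : ℕ} [hp : Fact p.Prime] {ι : Type*}

/-- The homomorphism whose kernel is the lattice of those `(q₀, q)` (with `q₀` at the index `none`)
for which `q₀ β i ≡ q i` modulo `p ^ k i` for all `i`. -/
noncomputable def lat (β : ι → ℤ_[p]) (k : ι → ℕ) : (Option ι → ℤ) →+ (∀ i, ZMod (p ^ k i)) where
  toFun z i := PadicInt.toZModPow (k i) ((z none : ℤ_[p]) * β i - (z (some i) : ℤ_[p]))
  map_zero' := by ext i; simp
  map_add' x y := by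
    ext i
    simp only [Pi.add_apply, ← map_add]
    congr 1
    push_cast
    ring

lemma toZModPow_eq_zero {k : ℕ} {x : ℤ_[p]} :
    PadicInt.toZModPow k x = 0 ↔ (p : ℤ_[p]) ^ k ∣ x := by
  rw [← RingHom.mem_ker, PadicInt.ker_toZModPow, Ideal.mem_span_singleton]

lemma lat_eq_zero {β : ι → ℤ_[p]} {k : ι → ℕ} {z : Option ι → ℤ} :
    lat β k z = 0 ↔
      ∀ i, (p : ℤ_[p]) ^ k i ∣ (z none : ℤ_[p]) * β i - (z (some i) : ℤ_[p]) := by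
  rw [funext_iff]
  exact forall_congr' fun i => toZModPow_eq_zero

lemma lat_surjective (β : ι → ℤ_[p]) (k : ι → ℕ) : Function.Surjective (lat β k) := by
  intro g
  refine ⟨fun o => o.elim 0 fun i => -((g i).val : ℤ), ?_⟩
  ext i
  simp [lat]

omit hp in
lemma card_lat [Fintype ι] (k : ι → ℕ) [Fintype (∀ i, ZMod (p ^ k i))] :
    Fintype.card (∀ i, ZMod (p ^ k i)) = p ^ ∑ i, k i := by
  rw [← Nat.card_eq_fintype_card, Nat.card_pi]
  simp [Finset.prod_pow_eq_pow_sum]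

/-- An integer congruent to `x` modulo `p ^ k`. -/
lemma exists_int_dvd_sub (x : ℤ_[p]) (k : ℕ) : ∃ b : ℤ, (p : ℤ_[p]) ^ k ∣ x - b := by
  refine ⟨x.appr k, ?_⟩
  have := PadicInt.appr_spec k x
  rw [Ideal.mem_span_singleton] at this
  exact_mod_cast this

lemma exists_lat_one (β : ι → ℤ_[p]) (k : ι → ℕ) : ∃ e, lat β k e = 0 ∧ e none = 1 := by
  choose b hb using fun i => exists_int_dvd_sub (β i) (k i)
  refine ⟨fun o => o.elim 1 b, ?_, rfl⟩
  rw [lat_eq_zero]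
  simpa using hb

lemma norm_le_iff_dvd {x : ℤ_[p]} {k : ℕ} :
    ‖x‖ ≤ (p : ℝ) ^ (-(k : ℝ)) ↔ (p : ℤ_[p]) ^ k ∣ x := by
  rw [← Ideal.mem_span_singleton, ← PadicInt.norm_le_pow_iff_mem_span_pow, ← Real.rpow_intCast]
  norm_num

lemma natCast_pow_dvd_intCast {k : ℕ} {a : ℤ} :
    (p : ℤ_[p]) ^ k ∣ (a : ℤ_[p]) ↔ ((p ^ k : ℕ) : ℤ) ∣ a := by
  have := PadicInt.pow_p_dvd_int_iff (p := p) k a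
  push_cast at *
  exact this

lemma eq_zero_of_pow_dvd {k : ℕ} {a : ℤ} (h : (p : ℤ_[p]) ^ k ∣ (a : ℤ_[p]))
    (ha : |a| < (p : ℤ) ^ k) : a = 0 := by
  rw [natCast_pow_dvd_intCast] at h
  push_cast at h
  exact Int.eq_zero_of_abs_lt_dvd h ha

end Approx

/-! ### The Diophantine exponent and covering radii -/

section Dio

variable {p : ℕ} [hp : Fact p.Prime] {m : ℕ} {α : Fin m → ℤ_[p]}

/-- Above the Diophantine exponent there are only finitely many good approximations. -/
lemma exists_forall_norm_ge (h : dioExp α = (m : ℝ) + 1) {τ : Fin m → ℝ}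
    (hτ : (m : ℝ) + 1 < ∑ i, τ i) :
    ∃ Q₀ : ℕ, ∀ Q : ℕ, Q₀ ≤ Q → ∀ q₀ : ℤ, ∀ q : Fin m → ℤ, 0 < q₀ → q₀ ≤ Q →
      (∀ i, |q i| ≤ (Q : ℤ)) →
      ∃ i, (Q : ℝ) ^ (-(τ i)) ≤ ‖(q₀ : ℤ_[p]) * α i - (q i : ℤ_[p])‖ := by
  by_contra! hcon
  unfold dioExp at h
  by_cases hb : BddAbove {s : ℝ | ∃ τ : Fin m → ℝ, s = ∑ i, τ i ∧
    ∀ Q₀ : ℕ, ∃ Q : ℕ, Q₀ ≤ Q ∧ ∃ q₀ : ℤ, ∃ q : Fin m → ℤ,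
      0 < q₀ ∧ q₀ ≤ (Q : ℤ) ∧ (∀ i, |q i| ≤ (Q : ℤ)) ∧
      ∀ i, ‖(q₀ : ℤ_[p]) * α i - (q i : ℤ_[p])‖ < (Q : ℝ) ^ (-(τ i))}
  · have := le_csSup hb (a := ∑ i, τ i) ⟨τ, rfl, hcon⟩
    rw [h] at this
    linarith
  · rw [Real.sSup_of_not_bddAbove hb] at h
    have : (0 : ℝ) ≤ m := Nat.cast_nonneg m
    linarith

/-- The coordinates of a point with finite Diophantine exponent are irrational. -/
lemma mul_ne_intCast (h : dioExp α = (m : ℝ) + 1) (i : Fin m) (q₀ q : ℤ) (h0 : q₀ ≠ 0) :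
    (q₀ : ℤ_[p]) * α i ≠ q := by
  intro he
  wlog hpos : 0 < q₀ generalizing q₀ q
  · refine this (-q₀) (-q) (by simpa using h0) ?_ (by omega)
    push_cast
    rw [← he]
    ring
  -- exponents `-1` make the other conditions void
  obtain ⟨Q₀, hQ₀⟩ := exists_forall_norm_ge h (τ := fun j => if j = i then 2 * m + 2 else -1) (by
    rw [Finset.sum_ite]
    simp only [Finset.sum_const, Finset.filter_eq', Finset.mem_univ, if_true, Finset.card_singleton,
      one_smul, nsmul_eq_mul]
    have : ((Finset.univ.filter fun j => ¬ j = i).card : ℝ) ≤ m := by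
      exact_mod_cast (Finset.card_le_univ _).trans (by simp)
    linarith)
  obtain ⟨j, hj⟩ := hQ₀ (Q₀ + q₀.natAbs + q.natAbs + 2) (by omega) q₀
    (fun j => if j = i then q else 0) hpos (by omega) (by
      intro j
      split_ifs
      · rw [Int.abs_eq_natAbs]; omega
      · simp only [abs_zero]; omega)
  have hQ : (1 : ℝ) < ((Q₀ + q₀.natAbs + q.natAbs + 2 : ℕ) : ℝ) := by
    exact_mod_cast (by omega : 1 < Q₀ + q₀.natAbs + q.natAbs + 2)
  split_ifs at hj with hji
  · subst hji
    rw [he, sub_self, norm_zero] at hj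
    have := Real.rpow_pos_of_pos (zero_lt_one.trans hQ) (-(2 * (m : ℝ) + 2))
    linarith
  · rw [neg_neg, Real.rpow_one] at hj
    have := PadicInt.norm_le_one ((q₀ : ℤ_[p]) * α j - ((0 : ℤ) : ℤ_[p]))
    linarith

lemma eventually_le_mul {η : ℝ} (hη : 0 < η) (C : ℝ) : ∀ᶠ g : ℕ in Filter.atTop, C ≤ η * g :=
  (tendsto_natCast_atTop_atTop.const_mul_atTop hη).eventually_ge_atTop C

set_option maxHeartbeats 1000000 in
/-- The lattice belonging to `α` alone and to exponents `k i` close to `g τ i`, where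
`∑ i, τ i < m + 1`, has covering radius at most `p ^ ((1 - δ) g)`: otherwise its first minimum would
be much smaller than the `(m + 1)`-st root of its covolume, and this would yield approximations
beating the Diophantine exponent. -/
lemma exists_covers (hm : 1 ≤ m) (h : dioExp α = (m : ℝ) + 1) {τ : Fin m → ℝ}
    (hτ1 : ∀ i, 1 < τ i) (hτ : ∑ i, τ i < (m : ℝ) + 1) (c : ℝ) :
    ∃ δ : ℝ, 0 < δ ∧ ∀ᶠ g : ℕ in Filter.atTop, ∀ k : Fin m → ℕ, (∀ i, |(k i : ℝ) - g * τ i| ≤ c) →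
      ∃ L, 1 ≤ L ∧ L * p ^ ⌊δ * g⌋₊ ≤ p ^ g ∧ Covers (lat α k) L := by
  set S := ∑ i, τ i with hS
  have hm' : (1 : ℝ) ≤ m := by exact_mod_cast hm
  have hSm : (m : ℝ) < S := by
    have : ∑ i : Fin m, (1 : ℝ) < ∑ i, τ i := Finset.sum_lt_sum_of_nonempty
      ⟨⟨0, hm⟩, Finset.mem_univ _⟩ fun i _ => hτ1 i
    simpa using this
  set θ := S / (m + 1) with hθ
  have hθS : θ * (m + 1) = S := by rw [hθ]; field_simp
  have hθ1 : θ < 1 := by rw [hθ, div_lt_one (by linarith)]; exact hτ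
  have hθ2 : 1 / 2 < θ := by
    by_contra! hh
    nlinarith
  set ε := (1 - θ) / (2 * (m + 1)) with hε
  have hεm : ε * (2 * (m + 1)) = 1 - θ := by rw [hε]; field_simp
  have hε0 : 0 < ε := div_pos (by linarith) (by linarith)
  have hε1 : ε < 1 / 4 := by nlinarith
  set θ' := θ - ε with hθ'
  set θ'' := θ - ε / 2 with hθ''
  have hc0 : ∀ {g : ℕ} {k : Fin m → ℕ}, (∀ i, |(k i : ℝ) - g * τ i| ≤ c) → 0 ≤ c :=
    fun hk => (abs_nonneg _).trans (hk ⟨0, hm⟩)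
  obtain ⟨Q₀, hQ₀⟩ := exists_forall_norm_ge h (τ := fun i => τ i / θ'') (by
    rw [← Finset.sum_div, ← hS, lt_div_iff₀ (by linarith)]
    nlinarith)
  have hp1 : 1 < p := hp.out.one_lt
  have hpR : (1 : ℝ) < p := by exact_mod_cast hp1
  refine ⟨(1 - θ) / 4, by linarith, ?_⟩
  have hη : 0 < (1 - θ' / θ'') := by
    rw [sub_pos, div_lt_one (by linarith)]
    linarith
  filter_upwards [eventually_le_mul hη (c + 1), eventually_le_mul (by linarith : 0 < θ') (Q₀ + 1),
    eventually_le_mul (by linarith : 0 < (1 - θ) / 4) (m * c + m + 1 + 2)] with g hg1 hg2 hg3 k hk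
  have hc := hc0 hk
  have hg0 : (0 : ℝ) ≤ g := Nat.cast_nonneg g
  set a := ⌊θ' * g⌋₊ with ha
  have ha1 : (a : ℝ) ≤ θ' * g := Nat.floor_le (by nlinarith)
  have ha2 : θ' * g < a + 1 := Nat.lt_floor_add_one _
  have hka : ∀ i, a * (τ i / θ'') < k i := by
    intro i
    have h1 := (abs_le.1 (hk i)).1
    have h2 : a * (τ i / θ'') ≤ θ' * g * (τ i / θ'') :=
      mul_le_mul_of_nonneg_right ha1 (div_nonneg (by linarith [hτ1 i]) (by linarith))
    have h3 : θ' * g * (τ i / θ'') = g * τ i - τ i * ((1 - θ' / θ'') * g) := by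
      field_simp
      ring
    have h4 : c + 1 ≤ τ i * ((1 - θ' / θ'') * g) := by nlinarith [hτ1 i]
    linarith
  have hka' : ∀ i, a < k i := by
    intro i
    have h1 : (1 : ℝ) ≤ τ i / θ'' := by
      rw [le_div_iff₀ (by linarith)]
      linarith [hτ1 i]
    have : (a : ℝ) < k i := lt_of_le_of_lt (by nlinarith [Nat.cast_nonneg (α := ℝ) a]) (hka i)
    exact_mod_cast this
  set h' := (∑ i, k i) - (m + 1) * a with hh'
  refine ⟨3 * p ^ h' * p ^ a, ?_, ?_, ?_⟩
  · exact Nat.one_le_iff_ne_zero.2 (by positivity)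
  · have hk' : (∑ i, (k i : ℝ)) ≤ g * S + m * c := by
      have : ∑ i, (k i : ℝ) ≤ ∑ i, (g * τ i + c) :=
        Finset.sum_le_sum fun i _ => by linarith [(abs_le.1 (hk i)).2]
      refine this.trans (le_of_eq ?_)
      rw [Finset.sum_add_distrib, ← Finset.mul_sum, ← hS]
      simp
    have hfl : (⌊(1 - θ) / 4 * g⌋₊ : ℝ) ≤ (1 - θ) / 4 * g := Nat.floor_le (by nlinarith)
    have hexp : 2 + h' + a + ⌊(1 - θ) / 4 * g⌋₊ ≤ g := by
      rcases le_total (∑ i, k i) ((m + 1) * a) with hle | hle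
      · rw [hh', Nat.sub_eq_zero_of_le hle]
        have e6 : θ' * g ≤ θ * g := mul_le_mul_of_nonneg_right (by linarith) hg0
        have e7 : (0 : ℝ) ≤ m * c := mul_nonneg (by linarith) hc
        have e8 : (0 : ℝ) ≤ (1 - θ) * g := mul_nonneg (by linarith) hg0
        have : (2 + 0 + a + ⌊(1 - θ) / 4 * g⌋₊ : ℝ) ≤ g := by linarith
        exact_mod_cast this
      · have e : (h' : ℝ) = (∑ i, (k i : ℝ)) - (m + 1) * a := by
          rw [hh', Nat.cast_sub hle]
          push_cast
          ring
        have : (2 + h' + a + ⌊(1 - θ) / 4 * g⌋₊ : ℝ) ≤ g := by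
          rw [e]
          have e2 : (m : ℝ) * (θ' * g) ≤ m * (a + 1) :=
            mul_le_mul_of_nonneg_left ha2.le (by linarith)
          have e3 : S - m * θ' = θ + m * ε := by
            rw [hθ']
            linear_combination -hθS
          have e4 : m * ε ≤ (1 - θ) / 2 := by linarith
          have e5 : g * S - m * (θ' * g) ≤ g * ((1 + θ) / 2) := by
            have : g * S - m * (θ' * g) = g * (S - m * θ') := by ring
            rw [this]
            exact mul_le_mul_of_nonneg_left (by rw [e3]; linarith) hg0
          linarith
        exact_mod_cast this
    calc 3 * p ^ h' * p ^ a * p ^ ⌊(1 - θ) / 4 * g⌋₊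
        ≤ p ^ 2 * p ^ h' * p ^ a * p ^ ⌊(1 - θ) / 4 * g⌋₊ := by
          have : 3 ≤ p ^ 2 := by nlinarith
          gcongr
      _ = p ^ (2 + h' + a + ⌊(1 - θ) / 4 * g⌋₊) := by simp only [pow_add]
      _ ≤ p ^ g := Nat.pow_le_pow_right (by omega) hexp
  · refine covers_of_no_short _ (lat_surjective _ _) (Nat.one_le_pow _ _ (by omega)) ?_ ?_
    · intro z hz hz'
      have hlow : ∀ y : Option (Fin m) → ℤ, lat α k y = 0 →
          (∀ i, |y i| ≤ ((p ^ a : ℕ) : ℤ)) → ¬ 0 < y none := by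
        intro y hy hy' hpos
        obtain ⟨i, hi⟩ := hQ₀ (p ^ a) (by
          have h1 : (Q₀ : ℝ) ≤ a := by linarith
          have h2 : Q₀ ≤ a := by exact_mod_cast h1
          exact h2.trans (Nat.lt_pow_self hp1).le) (y none) (fun i => y (some i)) hpos
          ((le_abs_self _).trans (hy' none)) (fun i => hy' (some i))
        have h1 := norm_le_iff_dvd.2 (lat_eq_zero.1 hy i)
        have h2 := hi.trans h1
        push_cast at h2
        rw [← Real.rpow_natCast, ← Real.rpow_mul (by linarith),
          Real.rpow_le_rpow_left_iff hpR] at h2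
        have := hka i
        linarith
      have h0 : z none = 0 := by
        have h1 := hlow z hz hz'
        have h2 := hlow (-z) (by rw [map_neg, hz, neg_zero]) (by simpa using hz')
        simp only [Pi.neg_apply] at h2
        omega
      ext o
      rcases o with _ | i
      · exact h0
      · have h1 := lat_eq_zero.1 hz i
        rw [h0, Int.cast_zero, zero_mul, zero_sub, dvd_neg] at h1
        refine eq_zero_of_pow_dvd h1 ((hz' (some i)).trans_lt ?_)
        exact_mod_cast Nat.pow_lt_pow_right hp1 (hka' i)
    · rw [card_lat, Fintype.card_option, Fintype.card_fin]
      calc p ^ ∑ i, k i ≤ p ^ h' * (p ^ a) ^ (m + 1) := by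
            rw [← pow_mul, ← pow_add]
            refine Nat.pow_le_pow_right (by omega) ?_
            rw [hh', mul_comm a]
            omega
        _ < p ^ h' * (p ^ a + 1) ^ (m + 1) := by
            have : (p ^ a) ^ (m + 1) < (p ^ a + 1) ^ (m + 1) :=
              Nat.pow_lt_pow_left (by omega) (by omega)
            have h0 : 0 < p ^ h' := by positivity
            exact Nat.mul_lt_mul_of_pos_left this h0

end Dio

/-! ### A sieve for lattice points with non-coprime coordinates -/

section Sieve

lemma nsmul_apply_int {κ : Type*} (t : ℕ) (u : κ → ℤ) (o : κ) : (t • u) o = t * u o := by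
  rw [Pi.smul_apply, nsmul_eq_mul]

lemma card_primeFactors_le_log (n : ℕ) : n.primeFactors.card ≤ Nat.log 2 n := by
  rcases Nat.eq_zero_or_pos n with rfl | hn
  · simp
  · refine Nat.le_log_of_pow_le one_lt_two ?_
    calc 2 ^ n.primeFactors.card ≤ ∏ q ∈ n.primeFactors, q :=
          Finset.pow_card_le_prod _ _ _ fun q hq => (Nat.prime_of_mem_primeFactors hq).two_le
      _ ≤ n := Nat.le_of_dvd hn (Nat.prod_primeFactors_dvd n)

variable {ι G : Type*} [Fintype ι] [AddCommGroup G] [Fintype G]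

/-- The centre of the box in which denominators are sought: its first coordinate is much larger than
the others, so that `|q i| ≤ q₀` is automatic. -/
def ctr (X : ℕ) : Option ι → ℤ := fun o => o.elim (4 * X) fun _ => 0

/-- The lattice points of the box with `q₀ ≡ 1` modulo `M`. -/
noncomputable def Fset (φ : (Option ι → ℤ) →+ G) (X M : ℕ) : Finset (Option ι → ℤ) :=
  (latBox φ (ctr X) X).filter fun v => (M : ℤ) ∣ v none - 1

variable {φ : (Option ι → ℤ) →+ G} {X L M C : ℕ}

omit [Fintype G] in
lemma mem_Fset {v : Option ι → ℤ} : v ∈ Fset φ X M ↔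
    (3 * X ≤ v none ∧ v none ≤ 5 * X) ∧ (∀ i, |v (some i)| ≤ X) ∧ φ v = 0 ∧
      (M : ℤ) ∣ v none - 1 := by
  simp only [Fset, Finset.mem_filter, mem_latBox, Option.forall, ctr, Option.elim, sub_zero, abs_le,
    and_assoc]
  constructor
  · rintro ⟨h1, h2, h3, h4, h5⟩
    exact ⟨by linarith, by linarith, h3, h4, h5⟩
  · rintro ⟨h1, h2, h3, h4, h5⟩
    exact ⟨by linarith, by linarith, h3, h4, h5⟩

omit [Fintype G] in
lemma Fset_subset : Fset φ X M ⊆ latBox φ (ctr X) X := Finset.filter_subset _ _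

omit [Fintype G] in
lemma card_Fset_le : (Fset φ X M).card ≤ (latBox φ (ctr X) (2 * X)).card :=
  (Finset.card_le_card Fset_subset).trans (card_latBox_mono (by omega))

omit [Fintype ι] [Fintype G] in
/-- A lattice vector of size `O(L)` whose `o`-th coordinate dominates. -/
lemma Covers.exists_dominant (h : Covers φ L) (o : Option ι) :
    ∃ u, φ u = 0 ∧ (L : ℤ) + 1 ≤ u o ∧ u o ≤ 3 * L + 1 ∧ ∀ o', o' ≠ o → |u o'| ≤ L := by
  obtain ⟨f, hf, he⟩ := h (φ fun o' => if o' = o then 2 * (L : ℤ) + 1 else 0)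
  refine ⟨(fun o' => if o' = o then 2 * (L : ℤ) + 1 else 0) - f, by rw [map_sub, he, sub_self], ?_, ?_, ?_⟩
  · have := (abs_le.1 (hf o)).2
    simp only [Pi.sub_apply, if_true]
    linarith
  · have := (abs_le.1 (hf o)).1
    simp only [Pi.sub_apply, if_true]
    linarith
  · intro o' ho'
    simpa [ho'] using hf o'

omit [Fintype ι] in
/-- Some short lattice vector has first coordinate not divisible by `ℓ`: otherwise the first
coordinate of a short representative would define a homomorphism from the finite `p`-group `G` to
`ℤ / ℓ` which is not zero. -/
lemma Covers.exists_not_dvd (h : Covers φ L) (hL : 1 ≤ L) {l : ℕ} (hl : ¬ l ∣ Fintype.card G) :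
    ∃ u, φ u = 0 ∧ (∀ o, |u o| ≤ 3 * (L : ℤ)) ∧ ¬ (l : ℤ) ∣ u none := by
  by_contra! hcon
  choose f hf hf' using h
  have hadd : ∀ a b, ((f (a + b) none : ℤ) : ZMod l) = (f a none : ℤ) + (f b none : ℤ) := by
    intro a b
    have := hcon (f a + f b - f (a + b)) (by rw [map_sub, map_add, hf', hf', hf', sub_self]) (by
      intro o
      have h1 := hf a o
      have h2 := hf b o
      have h3 := hf (a + b) o
      simp only [Pi.sub_apply, Pi.add_apply]
      rw [abs_le] at *
      constructor <;> linarith)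
    have := (ZMod.intCast_zmod_eq_zero_iff_dvd _ l).2 this
    simp only [Pi.sub_apply, Pi.add_apply] at this
    push_cast at this
    exact (sub_eq_zero.1 this).symm
  let Φ : G →+ ZMod l := AddMonoidHom.mk' (fun a => ((f a none : ℤ) : ZMod l)) hadd
  let e : Option ι → ℤ := fun o => if o = none then 1 else 0
  have h1 : Φ (φ e) = 1 := by
    have := hcon (e - f (φ e)) (by rw [map_sub, hf', sub_self]) (by
      intro o
      have h1 := hf (φ e) o
      have h2 : |e o| ≤ 1 := by simp only [e]; split_ifs <;> simp
      have h3 : (1 : ℤ) ≤ L := by exact_mod_cast hL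
      simp only [Pi.sub_apply]
      rw [abs_le] at *
      constructor <;> linarith)
    have := (ZMod.intCast_zmod_eq_zero_iff_dvd _ l).2 this
    simp only [Pi.sub_apply, e, if_true] at this
    push_cast at this
    exact (sub_eq_zero.1 this).symm
  have h2 : Φ (Fintype.card G • φ e) = 0 := by rw [card_nsmul_eq_zero, map_zero]
  rw [map_nsmul, h1, nsmul_one, ZMod.natCast_eq_zero_iff] at h2
  exact hl h2

/-- For a large prime `ℓ` few lattice points have first coordinate divisible by `ℓ`: such points have
disjoint translates by the multiples `t u`, `t < C < ℓ`, of a short vector `u` with `ℓ ∤ u none`. -/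
lemma card_dvd_large (h : Covers φ L) (hL : 1 ≤ L) (hX : C * (3 * L + 1) ≤ X) {l : ℕ}
    (hp : l.Prime) (hl : ¬ l ∣ Fintype.card G) (hC : C < l) :
    ((Fset φ X M).filter fun v => (l : ℤ) ∣ v none).card * C ≤
      (latBox φ (ctr X) (2 * X)).card := by
  obtain ⟨u, hu, hu1, hu2⟩ := h.exists_not_dvd hL hl
  rw [two_mul]
  nth_rewrite 1 [← Finset.card_range C]
  refine card_mul_le_of_disjoint_translates φ (ctr X) _
    ((Finset.filter_subset _ _).trans Fset_subset) (Finset.range C) (fun t => t • u) ?_ ?_ ?_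
  · intro t _
    rw [map_nsmul, hu, smul_zero]
  · intro t ht o
    rw [Finset.mem_range] at ht
    simp only [nsmul_apply_int, abs_mul, Nat.abs_cast]
    have h1 := hu1 o
    have h2 : (C : ℤ) * (3 * L + 1) ≤ X := by exact_mod_cast hX
    have h3 : (t : ℤ) ≤ C := by exact_mod_cast ht.le
    nlinarith [abs_nonneg (u o)]
  · intro t ht t' ht' s hs s' hs' he
    rw [Finset.mem_range] at ht ht'
    rw [Finset.mem_filter] at hs hs'
    have e1 := congrFun he none
    simp only [Pi.add_apply, nsmul_apply_int] at e1
    have e2 : (l : ℤ) ∣ ((t : ℤ) - t') * u none := by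
      have : ((t : ℤ) - t') * u none = s' none - s none := by linear_combination e1
      rw [this]
      exact dvd_sub hs'.2 hs.2
    rcases (Nat.prime_iff_prime_int.1 hp).dvd_or_dvd e2 with h3 | h3
    · have := Int.eq_zero_of_abs_lt_dvd h3 (by rw [abs_lt]; constructor <;> omega)
      omega
    · exact absurd h3 hu2

/-- The lattice points whose coordinates `q₀` and `q i` have a large common prime factor `ℓ`. Up to a
thin set, they are controlled by the determinant of the two coordinates with those of a fixed short
lattice vector: it is nonzero and divisible by `ℓ`, and invariant under translation by that
vector. -/
lemma card_bad_large (h : Covers φ L) (hL : 1 ≤ L) (hX : C * (3 * L + 1) ≤ X)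
    (hG : ∀ l : ℕ, l.Prime → C < l → ¬ l ∣ Fintype.card G) (i : ι) :
    ((Fset φ X M).filter fun v => ∃ l : ℕ, l.Prime ∧ C < l ∧ (l : ℤ) ∣ v none ∧
      (l : ℤ) ∣ v (some i)).card * C ≤
      (1 + 2 * Nat.log 2 (9 * X ^ 2)) * (latBox φ (ctr X) (2 * X)).card := by
  rcases Nat.eq_zero_or_pos C with rfl | hC0
  · simp
  have hLX : 3 * L + 1 ≤ X := le_trans (by nlinarith) hX
  have hLX' : 3 * (L : ℤ) + 1 ≤ X := by exact_mod_cast hLX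
  have hL' : (1 : ℤ) ≤ L := by exact_mod_cast hL
  obtain ⟨u, hu, hu1, hu2, hu3⟩ := h.exists_dominant none
  obtain ⟨u', hu', hu1', hu2', hu3'⟩ := h.exists_dominant (some i)
  have hui := hu3 (some i) (by simp)
  have hui' := hu3' none (by simp)
  set N := (latBox φ (ctr X) (2 * X)).card with hN
  set W := Nat.log 2 (9 * X ^ 2) with hW
  let R : (Option ι → ℤ) → ℤ := fun v => u (some i) * v none - u none * v (some i)
  have hRu' : R u' ≠ 0 := by
    have h1 : |u (some i) * u' none| ≤ L * L := by
      rw [abs_mul]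
      exact mul_le_mul hui hui' (abs_nonneg _) (by linarith)
    have h2 : ((L : ℤ) + 1) * (L + 1) ≤ u none * u' (some i) :=
      mul_le_mul hu1 hu1' (by linarith) (by linarith)
    have := (abs_le.1 h1).2
    simp only [R]
    intro h0
    nlinarith
  let F := Fset φ X M
  let B0 := F.filter fun v => R v = 0
  let B1 := F.filter fun v => R v ≠ 0 ∧ ∃ l : ℕ, l.Prime ∧ C < l ∧ ¬ (l : ℤ) ∣ u none ∧
    (l : ℤ) ∣ v none ∧ (l : ℤ) ∣ v (some i)
  let B2 := ((u none).natAbs.primeFactors.filter fun l => C < l).biUnion fun l =>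
    F.filter fun v => (l : ℤ) ∣ v none
  have hsub : (F.filter fun v => ∃ l : ℕ, l.Prime ∧ C < l ∧ (l : ℤ) ∣ v none ∧
      (l : ℤ) ∣ v (some i)) ⊆ (B0 ∪ B1) ∪ B2 := by
    intro v hv
    rw [Finset.mem_filter] at hv
    obtain ⟨hvF, l, hl, hlC, hl0, hli⟩ := hv
    simp only [Finset.mem_union, B0, B1, B2, Finset.mem_filter, Finset.mem_biUnion,
      Nat.mem_primeFactors]
    by_cases h0 : R v = 0
    · exact Or.inl (Or.inl ⟨hvF, h0⟩)
    by_cases h1 : (l : ℤ) ∣ u none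
    · exact Or.inr ⟨l, ⟨⟨hl, Int.natCast_dvd.1 h1, by
        rw [Int.natAbs_ne_zero]; omega⟩, hlC⟩, hvF, hl0⟩
    · exact Or.inl (Or.inr ⟨hvF, h0, l, hl, hlC, h1, hl0, hli⟩)
  have hB0 : B0.card * C ≤ N := by
    rw [hN, two_mul, ← Finset.card_range C]
    refine card_mul_le_of_disjoint_translates φ (ctr X) _
      ((Finset.filter_subset _ _).trans Fset_subset) (Finset.range C) (fun t => t • u') ?_ ?_ ?_
    · intro t _
      rw [map_nsmul, hu', smul_zero]
    · intro t ht o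
      rw [Finset.mem_range] at ht
      simp only [nsmul_apply_int, abs_mul, Nat.abs_cast]
      have h1 : |u' o| ≤ 3 * (L : ℤ) + 1 := by
        by_cases ho : o = some i
        · subst ho
          rw [abs_le]
          constructor <;> linarith
        · exact (hu3' o ho).trans (by linarith)
      have h2 : (C : ℤ) * (3 * L + 1) ≤ X := by exact_mod_cast hX
      have h3 : (t : ℤ) ≤ C := by exact_mod_cast ht.le
      nlinarith [abs_nonneg (u' o)]
    · intro t ht t' ht' s hs s' hs' he
      simp only [B0, Finset.mem_filter] at hs hs'
      have e1 := congrFun he none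
      have e2 := congrFun he (some i)
      simp only [Pi.add_apply, nsmul_apply_int] at e1 e2
      have e3 : ((t : ℤ) - t') * R u' = 0 := by
        have h1 := hs.2
        have h2 := hs'.2
        simp only [R] at h1 h2 ⊢
        linear_combination u (some i) * e1 - u none * e2 - h1 + h2
      rcases mul_eq_zero.1 e3 with h3 | h3
      · omega
      · exact absurd h3 hRu'
  have hB1 : B1.card * C ≤ W * N := by
    rw [hN]
    nth_rewrite 1 [← Finset.card_range C]
    rw [two_mul X]
    refine card_mul_le_of_translates φ (ctr X) _
      ((Finset.filter_subset _ _).trans Fset_subset) (Finset.range C) (fun t => t • u) ?_ ?_ ?_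
    · intro t _
      rw [map_nsmul, hu, smul_zero]
    · intro t ht o
      rw [Finset.mem_range] at ht
      simp only [nsmul_apply_int, abs_mul, Nat.abs_cast]
      have h1 : |u o| ≤ 3 * (L : ℤ) + 1 := by
        by_cases ho : o = none
        · subst ho
          rw [abs_le]
          constructor <;> linarith
        · exact (hu3 o ho).trans (by linarith)
      have h2 : (C : ℤ) * (3 * L + 1) ≤ X := by exact_mod_cast hX
      have h3 : (t : ℤ) ≤ C := by exact_mod_cast ht.le
      nlinarith [abs_nonneg (u o)]
    · intro w
      have hinv : ∀ t : ℕ, R (w - t • u) = R w := by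
        intro t
        simp only [R, Pi.sub_apply, nsmul_apply_int]
        ring
      rcases Finset.eq_empty_or_nonempty
        ((Finset.range C).filter fun t => w - t • u ∈ B1) with hemp | ⟨t0, ht0⟩
      · rw [hemp]
        simp
      -- the invariant is nonzero and at most `9 X ^ 2`
      have hR : (R w).natAbs ≤ 9 * X ^ 2 ∧ R w ≠ 0 := by
        simp only [B1, Finset.mem_filter] at ht0
        obtain ⟨_, h1, h2, _⟩ := ht0
        refine ⟨?_, by rwa [hinv] at h2⟩
        rw [← hinv t0]
        obtain ⟨⟨h3, h4⟩, h5, -⟩ := mem_Fset.1 h1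
        have h6 := h5 i
        generalize w - t0 • u = v at *
        have hX0 : (0 : ℤ) ≤ X := by positivity
        have e1 : |u (some i) * v none| ≤ L * (5 * X) := by
          rw [abs_mul]
          exact mul_le_mul hui (abs_le.2 ⟨by linarith, h4⟩) (abs_nonneg _) (by linarith)
        have e2 : |u none * v (some i)| ≤ (3 * L + 1) * X := by
          rw [abs_mul]
          exact mul_le_mul (abs_le.2 ⟨by linarith, hu2⟩) h6 (abs_nonneg _) (by linarith)
        have e3 : |R v| ≤ 9 * X ^ 2 := by
          refine (abs_sub _ _).trans ?_
          nlinarith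
        rw [Int.abs_eq_natAbs] at e3
        exact_mod_cast e3
      have hlog : (R w).natAbs.primeFactors.card ≤ W :=
        (card_primeFactors_le_log _).trans (Nat.log_mono_right hR.1)
      refine le_trans ?_ hlog
      refine Finset.card_le_card_of_forall_subsingleton
        (fun t l => C < l ∧ l.Prime ∧ ¬ (l : ℤ) ∣ u none ∧ (l : ℤ) ∣ (w - t • u) none) ?_ ?_
      · intro t ht
        simp only [B1, Finset.mem_filter] at ht
        obtain ⟨_, _, _, l, h1, h2, h3, h4, h5⟩ := ht
        refine ⟨l, ?_, h2, h1, h3, h4⟩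
        rw [Nat.mem_primeFactors]
        refine ⟨h1, ?_, by rw [Int.natAbs_ne_zero]; exact hR.2⟩
        rw [← Int.natCast_dvd, ← hinv t]
        exact dvd_sub (h4.mul_left _) (h5.mul_left _)
      · intro l _ t ht t' ht'
        obtain ⟨ht, h1, h2, h3, h4⟩ := ht
        obtain ⟨ht', -, -, -, h5⟩ := ht'
        rw [Finset.mem_filter, Finset.mem_range] at ht ht'
        simp only [Pi.sub_apply, nsmul_apply_int] at h4 h5
        have h6 : (l : ℤ) ∣ ((t : ℤ) - t') * u none := by
          have := dvd_sub h5 h4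
          have e : (w none - (t' : ℤ) * u none) - (w none - (t : ℤ) * u none) =
            ((t : ℤ) - t') * u none := by ring
          rwa [e] at this
        rcases (Nat.prime_iff_prime_int.1 h2).dvd_or_dvd h6 with h7 | h7
        · have := Int.eq_zero_of_abs_lt_dvd h7 (by rw [abs_lt]; constructor <;> omega)
          omega
        · exact absurd h7 h3
  have hB2 : B2.card * C ≤ W * N := by
    have hcard : ((u none).natAbs.primeFactors.filter fun l => C < l).card ≤ W := by
      refine (Finset.card_filter_le _ _).trans ((card_primeFactors_le_log _).trans
        (Nat.log_mono_right ?_))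
      have : (u none).natAbs ≤ 3 * L + 1 := by omega
      nlinarith
    calc B2.card * C ≤ (∑ l ∈ (u none).natAbs.primeFactors.filter fun l => C < l,
          (F.filter fun v => (l : ℤ) ∣ v none).card) * C :=
          Nat.mul_le_mul_right _ Finset.card_biUnion_le
      _ = ∑ l ∈ (u none).natAbs.primeFactors.filter fun l => C < l,
          (F.filter fun v => (l : ℤ) ∣ v none).card * C := Finset.sum_mul _ _ _
      _ ≤ ∑ l ∈ (u none).natAbs.primeFactors.filter fun l => C < l, N := by
          refine Finset.sum_le_sum fun l hl => ?_
          rw [Finset.mem_filter, Nat.mem_primeFactors] at hl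
          exact card_dvd_large h hL hX hl.1.1 (hG l hl.1.1 hl.2) hl.2
      _ ≤ W * N := by
          rw [Finset.sum_const, smul_eq_mul]
          exact Nat.mul_le_mul_right _ hcard
  have h1 := Finset.card_le_card hsub
  have h2 := Finset.card_union_le (B0 ∪ B1) B2
  have h3 := Finset.card_union_le B0 B1
  calc _ ≤ (B0.card + B1.card + B2.card) * C := Nat.mul_le_mul_right _ (by linarith)
    _ = B0.card * C + B1.card * C + B2.card * C := by ring
    _ ≤ N + W * N + W * N := by gcongr
    _ = (1 + 2 * W) * N := by ring

end Sieve

/-! ### Counting the non-coprime lattice points -/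

section Sieve2

/-- At most `2X / n + 1` integers of absolute value at most `X` lie in one class modulo `n`. -/
lemma card_le_of_dvd_sub {S : Finset ℤ} {n X : ℕ} (hn : 1 ≤ n) (hX : ∀ x ∈ S, |x| ≤ (X : ℤ))
    (hd : ∀ x ∈ S, ∀ y ∈ S, (n : ℤ) ∣ x - y) : S.card ≤ 2 * X / n + 1 := by
  rw [← Finset.card_range (2 * X / n + 1)]
  have hn' : (0 : ℤ) < n := by exact_mod_cast hn
  have hpos : ∀ x ∈ S, 0 ≤ x + X ∧ x + X ≤ 2 * X := fun x hx => by
    have := abs_le.1 (hX x hx)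
    constructor <;> linarith
  refine Finset.card_le_card_of_injOn (fun x => ((x + X) / n).toNat) ?_ ?_
  · intro x hx
    obtain ⟨h1, h2⟩ := hpos x hx
    simp only [Finset.coe_range, Set.mem_Iio]
    have h3 : (x + X) / n ≤ 2 * X / n := Int.ediv_le_ediv hn' h2
    rw [Int.toNat_lt (Int.ediv_nonneg h1 hn'.le)]
    push_cast
    linarith
  · intro x hx y hy he
    have h1 := Int.ediv_nonneg (hpos x hx).1 hn'.le
    have h2 := Int.ediv_nonneg (hpos y hy).1 hn'.le
    have h3 : (x + X) / n = (y + X) / n := by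
      dsimp only at he
      omega
    have h4 : (x + X) % n = (y + X) % n := by
      refine Int.emod_emod_of_dvd _ (dvd_refl _) ▸ ?_
      have := hd y hy x hx
      have h5 : (n : ℤ) ∣ (y + X) - (x + X) := by
        rwa [add_sub_add_right_eq_sub]
      rw [Int.emod_emod_of_dvd _ (dvd_refl _)]
      exact (Int.modEq_iff_dvd.2 h5)
    have h5 := Int.mul_ediv_add_emod (x + X) n
    have h6 := Int.mul_ediv_add_emod (y + X) n
    rw [h3, h4] at h5
    linarith

variable {p : ℕ} [hp : Fact p.Prime] {ι : Type*} [Fintype ι] {β : ι → ℤ_[p]} {k : ι → ℕ}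
  {X L M C Y : ℕ}

omit [Fintype ι] in
/-- Short lattice vectors with prescribed residues of two coordinates. -/
lemma Covers.exists_residue (h : Covers (lat β k) L) (hM : 1 ≤ M) {l : ℕ} (hl : l.Prime)
    (hlp : l ≠ p) (i : ι) (a b : ℤ) :
    ∃ u, lat β k u = 0 ∧ ((M * l : ℕ) : ℤ) ∣ u none - a ∧ (l : ℤ) ∣ u (some i) - b ∧
      ∀ o, |u o| ≤ ((M * l * (L + 1) : ℕ) : ℤ) := by
  obtain ⟨e, he, he1⟩ := exists_lat_one β k
  let E : Option ι → ℤ := fun o => if o = some i then (p : ℤ) ^ k i else 0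
  have hE : lat β k E = 0 := by
    rw [lat_eq_zero]
    intro j
    by_cases hj : j = i
    · subst hj
      simp [E]
    · simp [E, hj]
  -- `p ^ k i` is invertible modulo `ℓ`
  obtain ⟨y, hy⟩ : ∃ y : ℤ, (l : ℤ) ∣ a * e (some i) + y * (p : ℤ) ^ k i - b := by
    have hcop : IsCoprime ((p : ℤ) ^ k i) (l : ℤ) := by
      refine IsCoprime.pow_left ?_
      rw [Nat.isCoprime_iff_coprime]
      exact (Nat.coprime_primes hp.out hl).2 (Ne.symm hlp)
    obtain ⟨s, t, hst⟩ := hcop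
    refine ⟨s * (b - a * e (some i)), -(t * (b - a * e (some i))), ?_⟩
    linear_combination (b - a * e (some i)) * hst
  obtain ⟨u, hu1, hu2, hu3⟩ := h.exists_modEq (D := M * l) (Nat.mul_pos hM hl.pos) (a • e + y • E)
  refine ⟨u, ?_, ?_, ?_, hu3⟩
  · rw [hu1, map_add, map_zsmul, map_zsmul, he, hE, smul_zero, smul_zero, add_zero]
  · have := hu2 none
    simpa [E, he1] using this
  · have h1 := hu2 (some i)
    have h2 : (l : ℤ) ∣ u (some i) - (a * e (some i) + y * (p : ℤ) ^ k i) := by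
      have h3 : (l : ℤ) ∣ ((M * l : ℕ) : ℤ) := Int.natCast_dvd_natCast.2 (Dvd.intro_left M rfl)
      refine (h3.trans h1).trans (dvd_of_eq ?_)
      simp [E]
    have := dvd_add h2 hy
    rwa [sub_add_sub_cancel] at this

/-- For a small prime `ℓ`, at most a proportion `1 / (M ℓ²)` of the lattice points has
`q₀ ≡ 1` modulo `M` and both `q₀` and `q i` divisible by `ℓ`: translate by short lattice vectors that
represent all residues of these coordinates. -/
lemma card_dvd_pair (h : Covers (lat β k) L) (hM : 1 ≤ M) {l : ℕ} (hl : l.Prime) (hlp : l ≠ p)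
    (hlM : M.Coprime l) (hX : M * l * (L + 1) ≤ X) (i : ι) :
    ((Fset (lat β k) X M).filter fun v => (l : ℤ) ∣ v none ∧ (l : ℤ) ∣ v (some i)).card *
      (M * l ^ 2) ≤ (latBox (lat β k) (ctr X) (2 * X)).card := by
  choose u hu1 hu2 hu3 hu4 using fun q : ℕ × ℕ => h.exists_residue hM hl hlp i q.1 q.2
  have hJ : M * l ^ 2 = (Finset.range (M * l) ×ˢ Finset.range l).card := by
    simp only [Finset.card_product, Finset.card_range]
    ring
  rw [hJ, two_mul]
  refine card_mul_le_of_disjoint_translates _ (ctr X) _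
    ((Finset.filter_subset _ _).trans Fset_subset) _ u (fun q _ => hu1 q)
    (fun q _ o => (hu4 q o).trans (by exact_mod_cast hX)) ?_
  rintro ⟨a, b⟩ hab ⟨a', b'⟩ hab' s hs s' hs' he
  simp only [Finset.mem_product, Finset.mem_range] at hab hab'
  simp only [Finset.mem_filter, mem_Fset] at hs hs'
  obtain ⟨⟨-, -, -, hs1⟩, hs2, hs3⟩ := hs
  obtain ⟨⟨-, -, -, hs1'⟩, hs2', hs3'⟩ := hs'
  have e1 := congrFun he none
  have e2 := congrFun he (some i)
  simp only [Pi.add_apply] at e1 e2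
  have h1 := hu2 (a, b)
  have h1' := hu2 (a', b')
  have h2 := hu3 (a, b)
  have h2' := hu3 (a', b')
  dsimp only at h1 h1' h2 h2'
  have hs : ((M * l : ℕ) : ℤ) ∣ s none - s' none := by
    push_cast
    refine IsCoprime.mul_dvd (Nat.isCoprime_iff_coprime.2 hlM) ?_ (dvd_sub hs2 hs2')
    have := dvd_sub hs1 hs1'
    rwa [sub_sub_sub_cancel_right] at this
  have h3 : ((M * l : ℕ) : ℤ) ∣ (a : ℤ) - a' := by
    have h4 := dvd_sub (dvd_sub h1' h1) hs
    have e : u (a', b') none - a' - (u (a, b) none - a) - (s none - s' none) = (a : ℤ) - a' := by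
      linear_combination -e1
    rwa [e] at h4
  have h4 : (l : ℤ) ∣ (b : ℤ) - b' := by
    have h4 := dvd_sub (dvd_sub h2' h2) (dvd_sub hs3 hs3')
    have e : u (a', b') (some i) - b' - (u (a, b) (some i) - b) - (s (some i) - s' (some i)) =
        (b : ℤ) - b' := by linear_combination -e2
    rwa [e] at h4
  have h5 := Int.eq_zero_of_abs_lt_dvd h3 (by
    have := hab.1
    have := hab'.1
    rw [abs_lt]; constructor <;> omega)
  have h6 := Int.eq_zero_of_abs_lt_dvd h4 (by
    have := hab.2
    have := hab'.2
    rw [abs_lt]; constructor <;> omega)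
  simp only [Prod.mk.injEq]
  omega

/-- The analogue of `card_dvd_pair` for the first coordinate only, with proportion `1 / (M ℓ)`. -/
lemma card_dvd_single (h : Covers (lat β k) L) (hM : 1 ≤ M) {l : ℕ} (hl : l.Prime)
    (hlM : M.Coprime l) (hX : M * l * (L + 1) ≤ X) :
    ((Fset (lat β k) X M).filter fun v => (l : ℤ) ∣ v none).card *
      (M * l) ≤ (latBox (lat β k) (ctr X) (2 * X)).card := by
  obtain ⟨e, he, he1⟩ := exists_lat_one β k
  choose u hu1 hu2 hu4 using fun a : ℕ =>
    h.exists_modEq (D := M * l) (Nat.mul_pos hM hl.pos) ((a : ℤ) • e)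
  rw [two_mul, ← Finset.card_range (M * l)]
  refine card_mul_le_of_disjoint_translates _ (ctr X) _
    ((Finset.filter_subset _ _).trans Fset_subset) _ u
    (fun a _ => by rw [hu1, map_zsmul, he, smul_zero])
    (fun q _ o => (hu4 q o).trans (by exact_mod_cast hX)) ?_
  rintro a ha a' ha' s hs s' hs' he
  simp only [Finset.mem_range] at ha ha'
  simp only [Finset.mem_filter, mem_Fset] at hs hs'
  obtain ⟨⟨-, -, -, hs1⟩, hs2⟩ := hs
  obtain ⟨⟨-, -, -, hs1'⟩, hs2'⟩ := hs'
  have e1 := congrFun he none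
  simp only [Pi.add_apply] at e1
  have h1 := hu2 a none
  have h1' := hu2 a' none
  simp only [Pi.smul_apply, he1, smul_eq_mul, mul_one] at h1 h1'
  have hs : ((M * l : ℕ) : ℤ) ∣ s none - s' none := by
    push_cast
    refine IsCoprime.mul_dvd (Nat.isCoprime_iff_coprime.2 hlM) ?_ (dvd_sub hs2 hs2')
    have := dvd_sub hs1 hs1'
    rwa [sub_sub_sub_cancel_right] at this
  have h3 : ((M * l : ℕ) : ℤ) ∣ (a : ℤ) - a' := by
    have h4 := dvd_sub (dvd_sub h1' h1) hs
    have e : u a' none - a' - (u a none - a) - (s none - s' none) = (a : ℤ) - a' := by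
      linear_combination -e1
    rwa [e] at h4
  have h5 := Int.eq_zero_of_abs_lt_dvd h3 (by rw [abs_lt]; constructor <;> omega)
  omega

lemma lt_of_prime_dvd {l : ℕ} (hl : l.Prime) {a : ℤ} (ha : ((Y.factorial : ℕ) : ℤ) ∣ a - 1)
    (h : (l : ℤ) ∣ a) : Y < l := by
  by_contra! hle
  have h1 : (l : ℤ) ∣ a - 1 :=
    (Int.natCast_dvd_natCast.2 ((Nat.Prime.dvd_factorial hl).2 hle)).trans ha
  have h2 := dvd_sub h h1
  rw [sub_sub_cancel] at h2
  exact hl.one_lt.ne' (Nat.dvd_one.1 (by exact_mod_cast h2))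

lemma coprime_factorial {l : ℕ} (hl : l.Prime) (h : Y < l) : (Y.factorial).Coprime l := by
  rw [Nat.coprime_comm, hl.coprime_iff_not_dvd, hl.dvd_factorial]
  omega

lemma not_dvd_card {l : ℕ} (hl : l.Prime) (hlp : l ≠ p) [Fintype (∀ i, ZMod (p ^ k i))] :
    ¬ l ∣ Fintype.card (∀ i, ZMod (p ^ k i)) := by
  rw [card_lat]
  intro h
  exact hlp ((Nat.prime_dvd_prime_iff_eq hl hp.out).1 (hl.dvd_of_dvd_pow h))

/-- The number of lattice points with `q₀` and `q i` not coprime. -/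
lemma card_bad_le (h : Covers (lat β k) L) (hL : 1 ≤ L) (hYp : p ≤ Y) (hYC : Y ≤ C)
    (hX1 : Y.factorial * C * (L + 1) ≤ X) (hX2 : C * (3 * L + 1) ≤ X) (i : ι) :
    (((Fset (lat β k) X Y.factorial).filter fun v =>
      ∃ l : ℕ, l.Prime ∧ (l : ℤ) ∣ v none ∧ (l : ℤ) ∣ v (some i)).card : ℝ) ≤
    (latBox (lat β k) (ctr X) (2 * X)).card *
      (1 / (Y.factorial * Y) + (1 + 2 * Nat.log 2 (9 * X ^ 2)) / C) := by
  have hp2 := hp.out.two_le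
  have hY : (0 : ℝ) < Y := by exact_mod_cast (by omega : 0 < Y)
  have hC : (0 : ℝ) < C := by exact_mod_cast (by omega : 0 < C)
  have hM : (0 : ℝ) < (Y.factorial : ℝ) := by exact_mod_cast Y.factorial_pos
  set N := (latBox (lat β k) (ctr X) (2 * X)).card with hN
  set W := Nat.log 2 (9 * X ^ 2)
  set F := Fset (lat β k) X Y.factorial
  set A : ℕ → Finset (Option ι → ℤ) := fun l =>
    F.filter fun v => l.Prime ∧ (l : ℤ) ∣ v none ∧ (l : ℤ) ∣ v (some i)
  have hA : ∀ l ∈ Finset.Ioc Y C, ((A l).card : ℝ) ≤ N / Y.factorial * ((l : ℝ) ^ 2)⁻¹ := by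
    intro l hl
    rw [Finset.mem_Ioc] at hl
    by_cases hlp : l.Prime
    · have h1 := card_dvd_pair h Y.factorial_pos hlp (by omega) (coprime_factorial hlp hl.1)
        (le_trans (by gcongr; exact hl.2) hX1) i
      have h2 : A l = F.filter fun v => (l : ℤ) ∣ v none ∧ (l : ℤ) ∣ v (some i) := by
        simp only [A, hlp, true_and]
      have h3 : (((A l).card * (Y.factorial * l ^ 2) : ℕ) : ℝ) ≤ N := by
        rw [h2]; exact_mod_cast h1
      have hl0 : (0 : ℝ) < l := by exact_mod_cast hlp.pos
      push_cast at h3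
      rw [← div_eq_mul_inv, div_div, le_div_iff₀ (by positivity)]
      exact h3
    · have h2 : A l = ∅ := by simp [A, hlp]
      rw [h2, Finset.card_empty, Nat.cast_zero]
      positivity
  have hlarge := card_bad_large (M := Y.factorial) h hL hX2
    (fun l hl hlC => not_dvd_card hl (by omega)) i
  set B := F.filter fun v => ∃ l : ℕ, l.Prime ∧ C < l ∧ (l : ℤ) ∣ v none ∧ (l : ℤ) ∣ v (some i)
  have hB : (B.card : ℝ) ≤ N * ((1 + 2 * W) / C) := by
    rw [← mul_div_assoc, le_div_iff₀ hC]
    have : ((B.card * C : ℕ) : ℝ) ≤ (((1 + 2 * W) * N : ℕ) : ℝ) := by exact_mod_cast hlarge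
    push_cast at this
    linarith
  have hsub : (F.filter fun v => ∃ l : ℕ, l.Prime ∧ (l : ℤ) ∣ v none ∧ (l : ℤ) ∣ v (some i)) ⊆
      ((Finset.Ioc Y C).biUnion A) ∪ B := by
    intro v hv
    rw [Finset.mem_filter] at hv
    obtain ⟨hvF, l, hl, hl0, hli⟩ := hv
    have hYl := lt_of_prime_dvd hl (mem_Fset.1 hvF).2.2.2 hl0
    rw [Finset.mem_union]
    by_cases hlC : C < l
    · exact Or.inr (Finset.mem_filter.2 ⟨hvF, l, hl, hlC, hl0, hli⟩)
    · exact Or.inl (Finset.mem_biUnion.2 ⟨l, Finset.mem_Ioc.2 ⟨hYl, by omega⟩,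
        Finset.mem_filter.2 ⟨hvF, hl, hl0, hli⟩⟩)
  have h1 := (Finset.card_le_card hsub).trans ((Finset.card_union_le _ _).trans
    (Nat.add_le_add_right Finset.card_biUnion_le _))
  have h2 : (∑ l ∈ Finset.Ioc Y C, ((A l).card : ℝ)) ≤ N * (1 / (Y.factorial * Y)) := by
    refine (Finset.sum_le_sum hA).trans ?_
    rw [← Finset.mul_sum]
    have h3 := sum_Ioc_inv_sq_le_sub (α := ℝ) (by omega : Y ≠ 0) hYC
    have h4 : ∑ l ∈ Finset.Ioc Y C, ((l : ℝ) ^ 2)⁻¹ ≤ (Y : ℝ)⁻¹ :=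
      h3.trans (sub_le_self _ (by positivity))
    calc (N : ℝ) / Y.factorial * ∑ l ∈ Finset.Ioc Y C, ((l : ℝ) ^ 2)⁻¹
        ≤ N / Y.factorial * (Y : ℝ)⁻¹ := by gcongr
      _ = N * (1 / (Y.factorial * Y)) := by field_simp
  have h3 : ((F.filter fun v => ∃ l : ℕ, l.Prime ∧ (l : ℤ) ∣ v none ∧
      (l : ℤ) ∣ v (some i)).card : ℝ) ≤ (∑ l ∈ Finset.Ioc Y C, ((A l).card : ℝ)) + B.card := by
    exact_mod_cast h1
  rw [mul_add]
  linarith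

/-- The number of pairs consisting of a lattice point and a further integer `q` in a class modulo
`p ^ l` which is not coprime to `q₀`. -/
lemma sum_card_bad_le (h : Covers (lat β k) L) (hYp : p ≤ Y) (hYC : Y ≤ C)
    (hX1 : Y.factorial * C * (L + 1) ≤ X) (b : ℤ) (l : ℕ) :
    ∑ v ∈ Fset (lat β k) X Y.factorial,
      (((Finset.Icc (-X : ℤ) X).filter fun q => (p : ℤ) ^ l ∣ q - v none * b ∧
        ∃ r : ℕ, r.Prime ∧ (r : ℤ) ∣ v none ∧ (r : ℤ) ∣ q).card : ℝ) ≤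
    (latBox (lat β k) (ctr X) (2 * X)).card *
      (2 * X / (Y.factorial * Y * p ^ l) + Nat.log 2 (5 * X) * (2 * X / C + 1)) := by
  have hp2 := hp.out.two_le
  have hY : (0 : ℝ) < Y := by exact_mod_cast (by omega : 0 < Y)
  have hC : (0 : ℝ) < C := by exact_mod_cast (by omega : 0 < C)
  have hM : (0 : ℝ) < (Y.factorial : ℝ) := by exact_mod_cast Y.factorial_pos
  have hpl : (0 : ℝ) < (p : ℝ) ^ l := by have := hp.out.pos; positivity
  set N := (latBox (lat β k) (ctr X) (2 * X)).card with hN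
  set W := Nat.log 2 (5 * X)
  set F := Fset (lat β k) X Y.factorial
  -- one denominator at a time
  have hone : ∀ v ∈ F, (((Finset.Icc (-X : ℤ) X).filter fun q => (p : ℤ) ^ l ∣ q - v none * b ∧
        ∃ r : ℕ, r.Prime ∧ (r : ℤ) ∣ v none ∧ (r : ℤ) ∣ q).card : ℝ) ≤
      (∑ r ∈ Finset.Ioc Y C, if r.Prime ∧ (r : ℤ) ∣ v none then 2 * (X : ℝ) / (r * p ^ l) else 0) +
        W * (2 * X / C + 1) := by
    intro v hv
    have hvF := mem_Fset.1 hv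
    have hmem : ∀ r ∈ (v none).natAbs.primeFactors, r.Prime ∧ (r : ℤ) ∣ v none ∧ Y < r := by
      intro r hr
      rw [Nat.mem_primeFactors] at hr
      have h1 := Int.natCast_dvd.2 hr.2.1
      exact ⟨hr.1, h1, lt_of_prime_dvd hr.1 hvF.2.2.2 h1⟩
    have hv0 : v none ≠ 0 := by
      intro h0
      have h1 := lt_of_prime_dvd hp.out hvF.2.2.2 (by rw [h0]; exact dvd_zero _)
      omega
    have hQ : ∀ r ∈ (v none).natAbs.primeFactors,
        (((Finset.Icc (-X : ℤ) X).filter fun q => (p : ℤ) ^ l ∣ q - v none * b ∧ (r : ℤ) ∣ q).card :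
          ℝ) ≤ (if r ≤ C then 2 * (X : ℝ) / (r * p ^ l) else 0) + (2 * X / C + 1) := by
      intro r hr
      obtain ⟨h1, h2, h3⟩ := hmem r hr
      have hr0 : (0 : ℝ) < r := by exact_mod_cast h1.pos
      have hcop : IsCoprime ((r : ℤ)) ((p : ℤ) ^ l) := by
        refine IsCoprime.pow_right ?_
        rw [Nat.isCoprime_iff_coprime]
        exact (Nat.coprime_primes h1 hp.out).2 (by omega)
      have hcard := card_le_of_dvd_sub (S := (Finset.Icc (-X : ℤ) X).filter fun q =>
        (p : ℤ) ^ l ∣ q - v none * b ∧ (r : ℤ) ∣ q) (n := r * p ^ l) (X := X)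
        (Nat.mul_pos h1.pos (Nat.pow_pos hp.out.pos)) (by
          intro q hq
          rw [Finset.mem_filter, Finset.mem_Icc] at hq
          exact abs_le.2 hq.1) (by
          intro q hq q' hq'
          rw [Finset.mem_filter] at hq hq'
          push_cast
          refine hcop.mul_dvd (dvd_sub hq.2.2 hq'.2.2) ?_
          have := dvd_sub hq.2.1 hq'.2.1
          rwa [sub_sub_sub_cancel_right] at this)
      have h4 : ((2 * X / (r * p ^ l) : ℕ) : ℝ) ≤ 2 * (X : ℝ) / (r * p ^ l) := by
        refine Nat.cast_div_le.trans (le_of_eq ?_)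
        push_cast
        rfl
      have h5 : ((((Finset.Icc (-X : ℤ) X).filter fun q =>
          (p : ℤ) ^ l ∣ q - v none * b ∧ (r : ℤ) ∣ q).card : ℕ) : ℝ) ≤
          ((2 * X / (r * p ^ l) : ℕ) : ℝ) + 1 := by exact_mod_cast hcard
      have h6 : (0 : ℝ) ≤ 2 * (X : ℝ) / C := by positivity
      split_ifs with hrC
      · linarith
      · have h7 : 2 * (X : ℝ) / (r * p ^ l) ≤ 2 * X / C := by
          have h8 : (C : ℝ) ≤ r := by exact_mod_cast (by omega : C ≤ r)
          have h9 : (1 : ℝ) ≤ (p : ℝ) ^ l := one_le_pow₀ (by exact_mod_cast (by omega : 1 ≤ p))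
          gcongr
          nlinarith
        linarith
    have hsub : ((Finset.Icc (-X : ℤ) X).filter fun q => (p : ℤ) ^ l ∣ q - v none * b ∧
        ∃ r : ℕ, r.Prime ∧ (r : ℤ) ∣ v none ∧ (r : ℤ) ∣ q) ⊆
        (v none).natAbs.primeFactors.biUnion fun r => (Finset.Icc (-X : ℤ) X).filter fun q =>
          (p : ℤ) ^ l ∣ q - v none * b ∧ (r : ℤ) ∣ q := by
      intro q hq
      rw [Finset.mem_filter] at hq
      obtain ⟨h1, h2, r, h3, h4, h5⟩ := hq
      exact Finset.mem_biUnion.2 ⟨r, Nat.mem_primeFactors.2 ⟨h3, Int.natCast_dvd.1 h4,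
        by rwa [Int.natAbs_ne_zero]⟩, Finset.mem_filter.2 ⟨h1, h2, h5⟩⟩
    have h1 := (Finset.card_le_card hsub).trans Finset.card_biUnion_le
    have h2 : (((Finset.Icc (-X : ℤ) X).filter fun q => (p : ℤ) ^ l ∣ q - v none * b ∧
        ∃ r : ℕ, r.Prime ∧ (r : ℤ) ∣ v none ∧ (r : ℤ) ∣ q).card : ℝ) ≤
        ∑ r ∈ (v none).natAbs.primeFactors, (((Finset.Icc (-X : ℤ) X).filter fun q =>
          (p : ℤ) ^ l ∣ q - v none * b ∧ (r : ℤ) ∣ q).card : ℝ) := by exact_mod_cast h1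
    refine h2.trans ((Finset.sum_le_sum hQ).trans ?_)
    rw [Finset.sum_add_distrib, Finset.sum_const, nsmul_eq_mul]
    refine add_le_add ?_ ?_
    · rw [← Finset.sum_filter, ← Finset.sum_filter]
      refine Finset.sum_le_sum_of_subset_of_nonneg ?_ fun r _ _ => by positivity
      intro r hr
      rw [Finset.mem_filter] at hr
      obtain ⟨h3, h4, h5⟩ := hmem r hr.1
      exact Finset.mem_filter.2 ⟨Finset.mem_Ioc.2 ⟨h5, hr.2⟩, h3, h4⟩
    · have h3 : (v none).natAbs.primeFactors.card ≤ W :=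
        (card_primeFactors_le_log _).trans (Nat.log_mono_right (by
          have := hvF.1
          omega))
      have h4 : ((v none).natAbs.primeFactors.card : ℝ) ≤ W := by exact_mod_cast h3
      exact mul_le_mul_of_nonneg_right h4 (by positivity)
  refine (Finset.sum_le_sum hone).trans ?_
  rw [Finset.sum_add_distrib, Finset.sum_comm, Finset.sum_const, nsmul_eq_mul, mul_add (N : ℝ)]
  have hFN : (F.card : ℝ) ≤ N := by exact_mod_cast card_Fset_le
  refine add_le_add ?_ (mul_le_mul_of_nonneg_right hFN (by positivity))
  have hr : ∀ r ∈ Finset.Ioc Y C, (∑ v ∈ F, if r.Prime ∧ (r : ℤ) ∣ v none then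
      2 * (X : ℝ) / (r * p ^ l) else 0) ≤ N * (2 * X) / (Y.factorial * p ^ l) * ((r : ℝ) ^ 2)⁻¹ := by
    intro r hr
    rw [Finset.mem_Ioc] at hr
    have hr0 : (0 : ℝ) < r := by exact_mod_cast (by omega : 0 < r)
    by_cases hrp : r.Prime
    · simp only [hrp, true_and]
      rw [← Finset.sum_filter, Finset.sum_const, nsmul_eq_mul]
      have h1 := card_dvd_single h Y.factorial_pos hrp (coprime_factorial hrp hr.1)
        (le_trans (by gcongr; exact hr.2) hX1)
      have h3 : (((F.filter fun v => (r : ℤ) ∣ v none).card * (Y.factorial * r) : ℕ) : ℝ) ≤ N := by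
        exact_mod_cast h1
      push_cast at h3
      have h4 : ((F.filter fun v => (r : ℤ) ∣ v none).card : ℝ) ≤ N / (Y.factorial * r) := by
        rwa [le_div_iff₀ (by positivity)]
      calc ((F.filter fun v => (r : ℤ) ∣ v none).card : ℝ) * (2 * (X : ℝ) / (r * p ^ l))
          ≤ N / (Y.factorial * r) * (2 * (X : ℝ) / (r * p ^ l)) := by gcongr
        _ = _ := by field_simp
    · simp only [hrp, false_and, if_false, Finset.sum_const_zero]
      positivity
  refine (Finset.sum_le_sum hr).trans ?_
  rw [← Finset.mul_sum]
  have h3 := sum_Ioc_inv_sq_le_sub (α := ℝ) (by omega : Y ≠ 0) hYC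
  have h4 : ∑ l ∈ Finset.Ioc Y C, ((l : ℝ) ^ 2)⁻¹ ≤ (Y : ℝ)⁻¹ :=
    h3.trans (sub_le_self _ (by positivity))
  calc (N : ℝ) * (2 * X) / (Y.factorial * p ^ l) * ∑ l ∈ Finset.Ioc Y C, ((l : ℝ) ^ 2)⁻¹
      ≤ N * (2 * X) / (Y.factorial * p ^ l) * (Y : ℝ)⁻¹ := by gcongr
    _ = N * (2 * X / (Y.factorial * Y * p ^ l)) := by field_simp

end Sieve2

/-! ### Choice of the parameters of the sieve -/

section Asymptotic

variable {p : ℕ} [hp : Fact p.Prime] {m : ℕ} {α : Fin m → ℤ_[p]}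

lemma log_le {c a g : ℕ} (hc : c ≤ p ^ a) : Nat.log 2 (c * p ^ g) ≤ p * (a + g) := by
  have h1 : c * p ^ g ≤ 2 ^ (p * (a + g)) := by
    calc c * p ^ g ≤ p ^ a * p ^ g := Nat.mul_le_mul_right _ hc
      _ = p ^ (a + g) := (pow_add _ _ _).symm
      _ ≤ (2 ^ p) ^ (a + g) := Nat.pow_le_pow_left Nat.lt_two_pow_self.le _
      _ = 2 ^ (p * (a + g)) := (pow_mul _ _ _).symm
  exact (Nat.log_mono_right h1).trans (Nat.log_pow one_lt_two _).le

/-- Exponential growth beats linear growth, in the form needed for the sieve. -/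
lemma eventually_mul_le_pow {δ : ℝ} (hδ : 0 < δ) (A B : ℕ) :
    ∀ᶠ g : ℕ in Filter.atTop, A * (B + g) ≤ p ^ ⌊δ * g⌋₊ := by
  have hp1 : (1 : ℝ) < p := by exact_mod_cast hp.out.one_lt
  have h1 : Filter.Tendsto (fun g : ℕ => ⌊δ * (g : ℝ)⌋₊) Filter.atTop Filter.atTop :=
    tendsto_nat_floor_atTop.comp (tendsto_natCast_atTop_atTop.const_mul_atTop hδ)
  have h2 : Filter.Tendsto (fun n : ℕ => (n : ℝ) ^ 1 / (p : ℝ) ^ n) Filter.atTop (nhds 0) :=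
    tendsto_pow_const_div_const_pow_of_one_lt 1 hp1
  -- `g ≤ (⌊δ g⌋ + 1) / δ`
  have hη : (0 : ℝ) < δ / (2 * (A + 1)) := by positivity
  have h3 := (h2.comp h1).eventually_lt_const hη
  have h4 : Filter.Tendsto (fun n : ℕ => (p : ℝ) ^ n) Filter.atTop Filter.atTop :=
    tendsto_pow_atTop_atTop_of_one_lt hp1
  have h5 := (h4.comp h1).eventually_ge_atTop (2 * (A * (B + 1 / δ)))
  filter_upwards [h3, h5] with g h3 h5
  simp only [Function.comp, pow_one] at h3 h5
  set h := ⌊δ * (g : ℝ)⌋₊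
  have hP : (0 : ℝ) < (p : ℝ) ^ h := by positivity
  rw [div_lt_iff₀ hP] at h3
  have h6 : δ * g < h + 1 := Nat.lt_floor_add_one _
  have h7 : (g : ℝ) ≤ h / δ + 1 / δ := by
    rw [← add_div, le_div_iff₀ hδ]
    linarith
  have h8 : (h : ℝ) / δ * A ≤ (p : ℝ) ^ h / 2 := by
    have e : δ / (2 * (A + 1)) * (p : ℝ) ^ h / δ * A = (p : ℝ) ^ h / 2 * (A / (A + 1)) := by
      field_simp
    calc (h : ℝ) / δ * A ≤ δ / (2 * (A + 1)) * (p : ℝ) ^ h / δ * A := by gcongr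
      _ = (p : ℝ) ^ h / 2 * (A / (A + 1)) := e
      _ ≤ (p : ℝ) ^ h / 2 * 1 := by
          gcongr
          rw [div_le_one (by positivity)]
          linarith
      _ = _ := mul_one _
  have : (A : ℝ) * (B + g) ≤ (p : ℝ) ^ h := by
    have hA : (0 : ℝ) ≤ A := Nat.cast_nonneg A
    calc (A : ℝ) * (B + g) ≤ A * (B + (h / δ + 1 / δ)) := by gcongr
      _ = h / δ * A + A * (B + 1 / δ) := by ring
      _ ≤ _ := by linarith
  exact_mod_cast this

set_option maxHeartbeats 1600000 in
/-- The result of the sieve, with all parameters chosen: among the lattice points belonging to `α`,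
those with non-coprime coordinates make up at most a proportion `O(1 / Y)`. -/
lemma eventually_sieve (hm : 1 ≤ m) (h : dioExp α = (m : ℝ) + 1) {τ : Fin m → ℝ}
    (hτ1 : ∀ i, 1 < τ i) (hτ : ∑ i, τ i < (m : ℝ) + 1) (c : ℝ) {Y : ℕ} (hYp : p ≤ Y) (l : ℕ) :
    ∀ᶠ g : ℕ in Filter.atTop, ∀ k : Fin m → ℕ, (∀ i, |(k i : ℝ) - g * τ i| ≤ c) →
      (∀ i, (((Fset (lat α k) (p ^ g) Y.factorial).filter fun v =>
          ∃ r : ℕ, r.Prime ∧ (r : ℤ) ∣ v none ∧ (r : ℤ) ∣ v (some i)).card : ℝ) *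
            (Y.factorial * Y * p ^ ∑ i, k i) ≤ 2 * (7 * p ^ g) ^ (m + 1)) ∧
      ∀ b : ℤ, (∑ v ∈ Fset (lat α k) (p ^ g) Y.factorial,
        (((Finset.Icc (-(p ^ g : ℕ) : ℤ) (p ^ g : ℕ)).filter fun q => (p : ℤ) ^ l ∣ q - v none * b ∧
          ∃ r : ℕ, r.Prime ∧ (r : ℤ) ∣ v none ∧ (r : ℤ) ∣ q).card : ℝ)) *
            (Y.factorial * Y * p ^ l * p ^ ∑ i, k i) ≤ 4 * p ^ g * (7 * p ^ g) ^ (m + 1) := by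
  obtain ⟨δ, hδ, hcov⟩ := exists_covers hm h hτ1 hτ c
  have hp1 := hp.out.one_lt
  have hp0 : (0 : ℝ) < p := by exact_mod_cast hp.out.pos
  set M := Y.factorial with hM
  have hM1 : 1 ≤ M := Y.factorial_pos
  have hM0 : (0 : ℝ) < M := by exact_mod_cast hM1
  have hY0 : (0 : ℝ) < Y := by exact_mod_cast (by omega : 0 < Y)
  obtain ⟨h0, hh0⟩ : ∃ h0, 4 * M ≤ p ^ h0 := ⟨4 * M, (Nat.lt_pow_self hp1).le⟩
  -- a single growth condition that implies all the others
  filter_upwards [hcov, eventually_mul_le_pow (p := p) hδ (p ^ h0 * (M * Y * p ^ l * (6 * p))) 10]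
    with g hcov hbig k hk
  obtain ⟨L, hL1, hL2, hL⟩ := hcov k hk
  set hh := ⌊δ * (g : ℝ)⌋₊
  set X := p ^ g with hX
  set P := p ^ ∑ i, k i with hP
  have hX1 : 1 ≤ X := Nat.one_le_pow _ _ hp.out.pos
  have hle : h0 ≤ hh := by
    by_contra! hlt
    have h1 : p ^ hh < p ^ h0 := Nat.pow_lt_pow_right hp1 hlt
    have h2 : p ^ h0 * 1 ≤ p ^ h0 * (M * Y * p ^ l * (6 * p)) * (10 + g) := by
      rw [mul_assoc]
      refine Nat.mul_le_mul_left _ (Nat.one_le_iff_ne_zero.2 ?_)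
      have : Y ≠ 0 := by omega
      have : p ≠ 0 := by omega
      positivity
    omega
  set C := p ^ (hh - h0) with hC
  have hCp : p ^ hh = C * p ^ h0 := by rw [hC, ← pow_add, Nat.sub_add_cancel hle]
  have hC1 : M * Y * p ^ l * (6 * p * (10 + g)) ≤ C := by
    refine Nat.le_of_mul_le_mul_left ?_ (Nat.pow_pos (n := h0) hp.out.pos)
    calc p ^ h0 * (M * Y * p ^ l * (6 * p * (10 + g)))
        = p ^ h0 * (M * Y * p ^ l * (6 * p)) * (10 + g) := by ring
      _ ≤ p ^ hh := hbig
      _ = p ^ h0 * C := by rw [hCp, mul_comm]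
  have hYC : Y ≤ C := by
    refine le_trans ?_ hC1
    have h1 : 1 ≤ p ^ l * (6 * p * (10 + g)) := Nat.one_le_iff_ne_zero.2 (by positivity)
    calc Y = 1 * Y * 1 := by ring
      _ ≤ M * Y * (p ^ l * (6 * p * (10 + g))) := by gcongr
      _ = _ := by ring
  have hLC : L * C * (4 * M) ≤ X := by
    calc L * C * (4 * M) ≤ L * C * p ^ h0 := Nat.mul_le_mul_left _ hh0
      _ = L * p ^ hh := by rw [hCp]; ring
      _ ≤ X := hL2
  have hXa : M * C * (L + 1) ≤ X := by
    refine le_trans ?_ hLC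
    calc M * C * (L + 1) ≤ M * C * (4 * L) := by gcongr; omega
      _ = L * C * (4 * M) := by ring
  have hXb : C * (3 * L + 1) ≤ X := by
    refine le_trans ?_ hLC
    calc C * (3 * L + 1) ≤ C * (4 * L * M) := by gcongr; nlinarith
      _ = L * C * (4 * M) := by ring
  have hC0 : (0 : ℝ) < C := by exact_mod_cast (by omega : 0 < C)
  have hLX : L ≤ X := by
    refine le_trans ?_ hLC
    have hC' : 1 ≤ C := by omega
    calc L = L * 1 * 1 := by ring
      _ ≤ L * C * (4 * M) := by gcongr; omega
  have hN : ((latBox (lat α k) (ctr X) (2 * X)).card : ℝ) * P ≤ (7 * X) ^ (m + 1) := by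
    have h1 := card_latBox_mul_le hL (ctr X) (2 * X)
    rw [card_lat, Fintype.card_option, Fintype.card_fin] at h1
    have h2 : (2 * (2 * X + L) + 1) ^ (m + 1) ≤ (7 * X) ^ (m + 1) :=
      Nat.pow_le_pow_left (by omega) _
    exact_mod_cast h1.trans h2
  set N := (latBox (lat α k) (ctr X) (2 * X)).card with hNdef
  have hP0 : (0 : ℝ) < P := by exact_mod_cast Nat.pow_pos (n := ∑ i, k i) hp.out.pos
  have hX0 : (0 : ℝ) < X := by exact_mod_cast hX1
  have hpl : 1 ≤ p ^ l := Nat.one_le_pow _ _ hp.out.pos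
  have hplR : (0 : ℝ) < (p : ℝ) ^ l := by positivity
  have hW1 : 1 + 2 * Nat.log 2 (9 * X ^ 2) ≤ 6 * p * (10 + g) := by
    have : Nat.log 2 (9 * X ^ 2) ≤ p * (4 + 2 * g) := by
      rw [hX, ← pow_mul, mul_comm g 2]
      refine log_le ((by norm_num : 9 ≤ 2 ^ 4).trans (Nat.pow_le_pow_left hp.out.two_le 4))
    calc _ ≤ p + 2 * (p * (4 + 2 * g)) := by omega
      _ = p * (9 + 4 * g) := by ring
      _ ≤ p * (6 * (10 + g)) := by gcongr; omega
      _ = _ := by ring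
  have hW2 : Nat.log 2 (5 * X) * 3 ≤ 6 * p * (10 + g) := by
    have : Nat.log 2 (5 * X) ≤ p * (3 + g) :=
      log_le ((by norm_num : 5 ≤ 2 ^ 3).trans (Nat.pow_le_pow_left hp.out.two_le 3))
    calc _ ≤ p * (3 + g) * 3 := by omega
      _ = p * (9 + 3 * g) := by ring
      _ ≤ p * (6 * (10 + g)) := by gcongr; omega
      _ = _ := by ring
  have hXC : C ≤ X := by
    refine le_trans ?_ hLC
    calc C = 1 * C * 1 := by ring
      _ ≤ L * C * (4 * M) := by gcongr; omega
  refine ⟨fun i => ?_, fun b => ?_⟩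
  · have h1 := card_bad_le hL hL1 hYp hYC hXa hXb i
    have h2 : (1 + 2 * (Nat.log 2 (9 * X ^ 2) : ℝ)) / C ≤ 1 / (M * Y) := by
      rw [div_le_div_iff₀ hC0 (by positivity)]
      have h3 : (1 + 2 * Nat.log 2 (9 * X ^ 2)) * (M * Y) ≤ 1 * C := by
        rw [one_mul]
        refine le_trans ?_ hC1
        calc (1 + 2 * Nat.log 2 (9 * X ^ 2)) * (M * Y) ≤ 6 * p * (10 + g) * (M * Y) := by gcongr
          _ = M * Y * 1 * (6 * p * (10 + g)) := by ring
          _ ≤ M * Y * p ^ l * (6 * p * (10 + g)) := by gcongr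
      exact_mod_cast h3
    calc _ ≤ N * (1 / (M * Y) + (1 + 2 * (Nat.log 2 (9 * X ^ 2) : ℝ)) / C) * (M * Y * p ^ ∑ i, k i) := by
          gcongr
      _ ≤ N * (1 / (M * Y) + 1 / (M * Y)) * (M * Y * P) := by
          rw [hP]
          push_cast
          gcongr
      _ = 2 * (N * P) := by field_simp; ring
      _ ≤ 2 * (7 * p ^ g) ^ (m + 1) := by
          rw [hX] at hN
          push_cast at hN
          linarith
  · have h1 := sum_card_bad_le hL hYp hYC hXa b l
    have h2 : (Nat.log 2 (5 * X) : ℝ) * (2 * X / C + 1) ≤ 2 * X / (M * Y * p ^ l) := by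
      have h3 : (2 * (X : ℝ) / C + 1) ≤ 3 * X / C := by
        rw [div_add_one hC0.ne']
        gcongr
        have : (C : ℝ) ≤ X := by exact_mod_cast hXC
        linarith
      have h4 : Nat.log 2 (5 * X) * 3 * (M * Y * p ^ l) ≤ C :=
        le_trans (by rw [mul_comm]; gcongr) hC1
      have h5 : (Nat.log 2 (5 * X) : ℝ) * 3 * (M * Y * p ^ l) ≤ C := by exact_mod_cast h4
      calc (Nat.log 2 (5 * X) : ℝ) * (2 * X / C + 1) ≤ Nat.log 2 (5 * X) * (3 * X / C) := by gcongr
        _ ≤ X / (M * Y * p ^ l) := by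
            rw [mul_div_assoc', div_le_div_iff₀ hC0 (by positivity)]
            nlinarith
        _ ≤ 2 * X / (M * Y * p ^ l) := by gcongr; linarith
    calc _ ≤ N * (2 * X / (M * Y * p ^ l) + (Nat.log 2 (5 * X) : ℝ) * (2 * X / C + 1)) *
            (M * Y * p ^ l * p ^ ∑ i, k i) := by
          gcongr
      _ ≤ N * (2 * X / (M * Y * p ^ l) + 2 * X / (M * Y * p ^ l)) *
            (M * Y * p ^ l * P) := by
          rw [hP]
          push_cast
          gcongr
      _ = 4 * X * (N * P) := by field_simp; ring
      _ ≤ 4 * p ^ g * (7 * p ^ g) ^ (m + 1) := by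
          rw [hX] at hN ⊢
          push_cast at hN ⊢
          gcongr

end Asymptotic

/-! ### Counting points of a ball with short lattice vectors -/

section Count

variable {p : ℕ} [hp : Fact p.Prime]

lemma dvd_intCast_of_dvd {a : ℤ} {N : ℕ} (h : (p : ℤ_[p]) ^ N ∣ (a : ℤ_[p])) : (p : ℤ) ^ N ∣ a := by
  have := natCast_pow_dvd_intCast.1 h
  push_cast at this
  exact this

lemma cast_dvd_of_dvd {a : ℤ} {N : ℕ} (h : (p : ℤ) ^ N ∣ a) : (p : ℤ_[p]) ^ N ∣ (a : ℤ_[p]) := by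
  refine natCast_pow_dvd_intCast.2 ?_
  push_cast
  exact h

lemma card_modEq_le {N t : ℕ} {S : Finset ℕ} (hS : S ⊆ Finset.range (N * t))
    (hd : ∀ x ∈ S, ∀ y ∈ S, (N : ℤ) ∣ (x : ℤ) - y) : S.card ≤ t := by
  rcases Nat.eq_zero_or_pos N with rfl | hN
  · simp at hS
    simp [hS]
  rw [← Finset.card_range t]
  refine Finset.card_le_card_of_injOn (fun x => x / N) ?_ ?_
  · intro x hx
    have := Finset.mem_range.1 (hS hx)
    simpa using Nat.div_lt_of_lt_mul this
  · intro x hx y hy hxy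
    have h1 : x % N = y % N := by
      have := (Nat.modEq_iff_dvd.2 (hd x hx y hy)).symm
      exact this
    have hxy' : x / N = y / N := hxy
    rw [← Nat.div_add_mod x N, ← Nat.div_add_mod y N, hxy', h1]

/-- For fixed `q₀`, few points `b + p ^ l y` of the ball of radius `p ^ (-l)` about `b` have `q₀`
times themselves close to a small integer. -/
lemma card_close_le {b : ℤ_[p]} {q₀ : ℤ} {e l r lam : ℕ} {q' : ℤ} (hq : q₀ = (p : ℤ) ^ e * q')
    (hq' : ¬ (p : ℤ) ∣ q') (hel : p ^ (e + l) ≤ lam) (hr : lam < p ^ r) :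
    ((Finset.range (p ^ (r - l))).filter fun y : ℕ => ∃ q : ℤ, |q| ≤ (lam : ℤ) ∧
      (p : ℤ_[p]) ^ r ∣ (q₀ : ℤ_[p]) * (b + (p : ℤ_[p]) ^ l * (y : ℤ_[p])) - (q : ℤ_[p])).card *
      p ^ l ≤ 3 * lam := by
  set T := (Finset.range (p ^ (r - l))).filter fun y : ℕ => ∃ q : ℤ, |q| ≤ (lam : ℤ) ∧
      (p : ℤ_[p]) ^ r ∣ (q₀ : ℤ_[p]) * (b + (p : ℤ_[p]) ^ l * (y : ℤ_[p])) - (q : ℤ_[p]) with hT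
  have helr : e + l < r := (Nat.pow_lt_pow_iff_right hp.out.one_lt).1 (hel.trans_lt hr)
  have hex : ∀ y, ∃ q : ℤ, y ∈ T → |q| ≤ (lam : ℤ) ∧
      (p : ℤ_[p]) ^ r ∣ (q₀ : ℤ_[p]) * (b + (p : ℤ_[p]) ^ l * (y : ℤ_[p])) - (q : ℤ_[p]) := by
    intro y
    by_cases hy : y ∈ T
    · obtain ⟨q, h⟩ := (Finset.mem_filter.1 hy).2
      exact ⟨q, fun _ => h⟩
    · exact ⟨0, fun h => absurd h hy⟩
  choose f hf using hex
  -- the key congruence relating two such points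
  have key : ∀ y ∈ T, ∀ y' ∈ T, (p : ℤ) ^ r ∣ (p : ℤ) ^ (e + l) * (q' * ((y : ℤ) - y')) - (f y - f y') := by
    intro y hy y' hy'
    refine dvd_intCast_of_dvd ?_
    have := dvd_sub (hf y hy).2 (hf y' hy').2
    convert this using 1
    rw [hq]
    push_cast
    ring
  have h1 : T.card ≤ p ^ e * (T.image f).card := by
    refine Finset.card_le_mul_card_image_of_maps_to (fun y hy => Finset.mem_image_of_mem f hy) _ ?_
    intro q _
    refine card_modEq_le (N := p ^ (r - l - e)) ?_ ?_
    · intro y hy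
      have := (Finset.mem_filter.1 (Finset.mem_filter.1 hy).1).1
      rwa [← pow_add, Nat.sub_add_cancel (by omega)]
    · intro y hy y' hy'
      rw [Finset.mem_filter] at hy hy'
      have := key y hy.1 y' hy'.1
      rw [hy.2, hy'.2, sub_self, sub_zero, show r = (e + l) + (r - l - e) by omega, pow_add] at this
      have h2 := Int.dvd_of_mul_dvd_mul_left (pow_ne_zero _ (by exact_mod_cast hp.out.ne_zero)) this
      have h3 : IsCoprime ((p : ℤ) ^ (r - l - e)) q' := by
        refine IsCoprime.pow_left ?_
        exact (Nat.prime_iff_prime_int.1 hp.out).coprime_iff_not_dvd.2 hq'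
      push_cast
      exact h3.dvd_of_dvd_mul_left h2
  have h2 : (T.image f).card ≤ 2 * lam / p ^ (e + l) + 1 := by
    refine card_le_of_dvd_sub (Nat.one_le_pow _ _ hp.out.pos) ?_ ?_
    · intro q hq
      obtain ⟨y, hy, rfl⟩ := Finset.mem_image.1 hq
      exact (hf y hy).1
    · intro q hq q' hq'
      obtain ⟨y, hy, rfl⟩ := Finset.mem_image.1 hq
      obtain ⟨y', hy', rfl⟩ := Finset.mem_image.1 hq'
      have h3 := (pow_dvd_pow (p : ℤ) helr.le).trans (key y hy y' hy')
      push_cast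
      exact (dvd_sub_right (Dvd.intro _ rfl)).1 h3
  calc T.card * p ^ l ≤ p ^ e * (2 * lam / p ^ (e + l) + 1) * p ^ l := by
        gcongr
        exact h1.trans (Nat.mul_le_mul_left _ h2)
    _ = (2 * lam / p ^ (e + l)) * p ^ (e + l) + p ^ (e + l) := by rw [pow_add]; ring
    _ ≤ 2 * lam + lam := add_le_add (Nat.div_mul_le_self _ _) hel
    _ = 3 * lam := by ring

end Count

section Local

variable {p : ℕ} [hp : Fact p.Prime] {d m : ℕ}

/-- The points `b + p ^ l y`, `y` integral, in the ball of radius `p ^ (-l)` about `b`, together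
with the coordinates `α`. -/
noncomputable def pt (b : Fin d → ℤ_[p]) (l : ℕ) (α : Fin m → ℤ_[p]) (y : Fin d → ℕ) :
    Fin d ⊕ Fin m → ℤ_[p] :=
  Sum.elim (fun j => b j + (p : ℤ_[p]) ^ l * (y j : ℤ_[p])) α

lemma lat_pt_eq_zero {b : Fin d → ℤ_[p]} {l : ℕ} {α : Fin m → ℤ_[p]} {y : Fin d → ℕ}
    {ρ : Fin d → ℕ} {k : Fin m → ℕ} {z : Option (Fin d ⊕ Fin m) → ℤ} :
    lat (pt b l α y) (Sum.elim ρ k) z = 0 ↔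
      (∀ j, (p : ℤ_[p]) ^ ρ j ∣ (z none : ℤ_[p]) * (b j + (p : ℤ_[p]) ^ l * (y j : ℤ_[p])) -
        (z (some (Sum.inl j)) : ℤ_[p])) ∧
      ∀ i, (p : ℤ_[p]) ^ k i ∣ (z none : ℤ_[p]) * α i - (z (some (Sum.inr i)) : ℤ_[p]) := by
  rw [lat_eq_zero, Sum.forall]
  rfl

/-- The indices of the points of the ball, up to the precision `ρ`. -/
noncomputable def cells (p : ℕ) (ρ : Fin d → ℕ) (l : ℕ) : Finset (Fin d → ℕ) :=
  Fintype.piFinset fun j => Finset.range (p ^ (ρ j - l))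

omit hp in
lemma mem_cells {ρ : Fin d → ℕ} {l : ℕ} {y : Fin d → ℕ} :
    y ∈ cells p ρ l ↔ ∀ j, y j < p ^ (ρ j - l) := by
  simp [cells]

omit hp in
lemma card_cells_mul {ρ : Fin d → ℕ} {l : ℕ} (hl : ∀ j, l ≤ ρ j) :
    (cells p ρ l).card * p ^ (d * l) = p ^ ∑ j, ρ j := by
  simp only [cells, Fintype.card_piFinset, Finset.card_range]
  rw [Finset.prod_pow_eq_pow_sum, ← pow_add]
  congr 1
  have h1 : ∑ j : Fin d, l = d * l := by simp
  rw [← h1, ← Finset.sum_add_distrib]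
  exact Finset.sum_congr rfl fun j _ => Nat.sub_add_cancel (hl j)

/-- The restriction of a vector to the coordinates belonging to `α`. -/
def rst (z : Option (Fin d ⊕ Fin m) → ℤ) : Option (Fin m) → ℤ :=
  fun o => o.elim (z none) fun i => z (some (Sum.inr i))

/-- Few points of the ball have a short nonzero vector in their lattice. -/
lemma card_short_le {b : Fin d → ℤ_[p]} {l : ℕ} {α : Fin m → ℤ_[p]} {ρ : Fin d → ℕ} {k : Fin m → ℕ}
    {lam L : ℕ} (hcov : Covers (lat α k) L) (hlam : 1 ≤ lam) (hL : L ≤ lam)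
    (hρ : ∀ j, lam < p ^ ρ j) (hk : ∀ i, lam < p ^ k i)
    (hirr : ∀ z, lat α k z = 0 → (∀ o, |z o| ≤ (lam : ℤ)) → z none ≠ 0 →
      ∀ e, (p : ℤ) ^ e ∣ z none → p ^ (e + l) ≤ lam) :
    ((cells p ρ l).filter fun y => ∃ z, z ≠ 0 ∧ lat (pt b l α y) (Sum.elim ρ k) z = 0 ∧
      ∀ o, |z o| ≤ (lam : ℤ)).card * p ^ (d * l) * p ^ ∑ i, k i ≤
      (3 * lam) ^ d * (5 * lam) ^ (m + 1) := by
  set S := (cells p ρ l).filter fun y => ∃ z, z ≠ 0 ∧ lat (pt b l α y) (Sum.elim ρ k) z = 0 ∧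
      ∀ o, |z o| ≤ (lam : ℤ)
  let A := (latBox (lat α k) 0 lam).filter fun w => w none ≠ 0
  let T : (Option (Fin m) → ℤ) → Fin d → Finset ℕ := fun w j =>
    (Finset.range (p ^ (ρ j - l))).filter fun y : ℕ => ∃ q : ℤ, |q| ≤ (lam : ℤ) ∧
      (p : ℤ_[p]) ^ ρ j ∣ (w none : ℤ_[p]) * (b j + (p : ℤ_[p]) ^ l * (y : ℤ_[p])) - (q : ℤ_[p])
  have hsub : S ⊆ A.biUnion fun w => Fintype.piFinset (T w) := by
    intro y hy
    obtain ⟨hy1, z, hz0, hz1, hz2⟩ := Finset.mem_filter.1 hy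
    rw [lat_pt_eq_zero] at hz1
    rw [mem_cells] at hy1
    have hzn : z none ≠ 0 := by
      intro h0
      refine hz0 (funext fun o => ?_)
      have haux : ∀ {a : ℤ} {r : ℕ}, lam < p ^ r → |a| ≤ (lam : ℤ) →
          (p : ℤ_[p]) ^ r ∣ 0 - (a : ℤ_[p]) → a = 0 := by
        intro a r h1 h2 h3
        rw [zero_sub, dvd_neg] at h3
        exact eq_zero_of_pow_dvd h3 (h2.trans_lt (by exact_mod_cast h1))
      simp only [h0, Int.cast_zero, zero_mul] at hz1
      rcases o with _ | (j | i)
      · exact h0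
      · exact haux (hρ j) (hz2 _) (hz1.1 j)
      · exact haux (hk i) (hz2 _) (hz1.2 i)
    rw [Finset.mem_biUnion]
    refine ⟨rst z, ?_, ?_⟩
    · simp only [A, Finset.mem_filter, mem_latBox, lat_eq_zero]
      refine ⟨⟨?_, ?_⟩, hzn⟩
      · rintro (_ | i)
        · simpa [rst] using hz2 none
        · simpa [rst] using hz2 (some (Sum.inr i))
      · intro i
        exact hz1.2 i
    · rw [Fintype.mem_piFinset]
      intro j
      exact Finset.mem_filter.2 ⟨Finset.mem_range.2 (hy1 j), _, hz2 _, hz1.1 j⟩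
  have hT : ∀ w ∈ A, ∀ j, (T w j).card * p ^ l ≤ 3 * lam := by
    intro w hw j
    simp only [A, Finset.mem_filter, mem_latBox, Pi.zero_apply, sub_zero] at hw
    have hfin : FiniteMultiplicity (p : ℤ) (w none) :=
      Int.finiteMultiplicity_iff.2 ⟨by simpa using hp.out.ne_one, hw.2⟩
    obtain ⟨q', he, hq'⟩ := hfin.exists_eq_pow_mul_and_not_dvd
    exact card_close_le he hq' (hirr w hw.1.2 hw.1.1 hw.2 _ ⟨q', he⟩) (hρ j)
  have hA : A.card * p ^ ∑ i, k i ≤ (5 * lam) ^ (m + 1) := by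
    have h1 := card_latBox_mul_le hcov 0 lam
    rw [card_lat, Fintype.card_option, Fintype.card_fin] at h1
    calc A.card * p ^ ∑ i, k i ≤ (latBox (lat α k) 0 lam).card * p ^ ∑ i, k i := by
          gcongr
          exact Finset.filter_subset _ _
      _ ≤ _ := h1
      _ ≤ _ := Nat.pow_le_pow_left (by omega) _
  have hS : S.card * p ^ (d * l) ≤ A.card * (3 * lam) ^ d := by
    calc S.card * p ^ (d * l) ≤ (∑ w ∈ A, ∏ j, (T w j).card) * p ^ (d * l) := by
          gcongr
          refine (Finset.card_le_card hsub).trans (Finset.card_biUnion_le.trans ?_)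
          simp [Fintype.card_piFinset]
      _ = ∑ w ∈ A, ∏ j, ((T w j).card * p ^ l) := by
          rw [Finset.sum_mul]
          refine Finset.sum_congr rfl fun w _ => ?_
          rw [Finset.prod_mul_distrib, Finset.prod_const, Finset.card_univ, Fintype.card_fin,
            ← pow_mul, mul_comm d]
      _ ≤ ∑ w ∈ A, (3 * lam) ^ d := by
          refine Finset.sum_le_sum fun w hw => ?_
          calc ∏ j, ((T w j).card * p ^ l) ≤ ∏ j : Fin d, 3 * lam :=
                Finset.prod_le_prod' fun j _ => hT w hw j
            _ = _ := by simp
      _ = _ := by simp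
  calc S.card * p ^ (d * l) * p ^ ∑ i, k i ≤ A.card * (3 * lam) ^ d * p ^ ∑ i, k i := by gcongr
    _ = (3 * lam) ^ d * (A.card * p ^ ∑ i, k i) := by ring
    _ ≤ _ := by gcongr

/-- As the coordinates of `α` are irrational, the denominators of its good approximations are not
divisible by large powers of `p`, compared with their size. -/
lemma eventually_pow_le {α : Fin m → ℤ_[p]} (hm : 1 ≤ m) (h : dioExp α = (m : ℝ) + 1)
    {τ : Fin m → ℝ} (hτ1 : ∀ i, 1 < τ i) (c : ℝ) (l : ℕ) :
    ∀ᶠ g : ℕ in Filter.atTop, ∀ k : Fin m → ℕ, (∀ i, |(k i : ℝ) - g * τ i| ≤ c) →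
      ∀ lam : ℕ, lam ≤ p ^ g → ∀ z, lat α k z = 0 → (∀ o, |z o| ≤ (lam : ℤ)) → z none ≠ 0 →
      ∀ e, (p : ℤ) ^ e ∣ z none → p ^ (e + l) ≤ lam := by
  let i : Fin m := ⟨0, hm⟩
  have hK : ∀ w a : ℤ, ∃ K, w ≠ 0 → ¬ (p : ℤ_[p]) ^ K ∣ (w : ℤ_[p]) * α i - (a : ℤ_[p]) := by
    intro w a
    by_cases hw : w = 0
    · exact ⟨0, fun h => absurd hw h⟩
    · have hf : FiniteMultiplicity (p : ℤ_[p]) ((w : ℤ_[p]) * α i - (a : ℤ_[p])) := by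
        refine FiniteMultiplicity.of_not_isUnit PadicInt.prime_p.not_unit ?_
        exact sub_ne_zero.2 (mul_ne_intCast h i w a hw)
      obtain ⟨K, hK⟩ := hf
      exact ⟨K + 1, fun _ => hK⟩
  choose K hK using hK
  set I := Finset.Icc (-(p ^ l : ℕ) : ℤ) (p ^ l : ℕ)
  set K₀ := (I ×ˢ I).sup fun x => K x.1 x.2
  have hη : 0 < τ i - 1 := sub_pos.2 (hτ1 i)
  filter_upwards [eventually_le_mul hη (K₀ + c)] with g hg k hk lam hlam z hz hz1 hz0 e he
  by_contra! hlt
  have hp0 : (0 : ℤ) < (p : ℤ) ^ e := by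
    have := hp.out.pos
    positivity
  obtain ⟨w, hw⟩ := he
  have hw0 : w ≠ 0 := by
    rintro rfl
    exact hz0 (by rw [hw, mul_zero])
  -- `p ^ e` is at most `lam`, hence at most `p ^ k i`
  have hbd : ∀ u : ℤ, |(p : ℤ) ^ e * u| ≤ (lam : ℤ) → |u| < (p : ℤ) ^ l := by
    intro u hu
    rw [abs_mul, abs_of_pos hp0] at hu
    have h1 : (p : ℤ) ^ e * |u| < (p : ℤ) ^ e * (p : ℤ) ^ l := by
      rw [← pow_add]
      exact hu.trans_lt (by exact_mod_cast hlt)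
    exact lt_of_mul_lt_mul_left h1 hp0.le
  have heg : e ≤ g := by
    have h1 : (p : ℤ) ^ e ≤ (p : ℤ) ^ g := by
      calc (p : ℤ) ^ e ≤ |z none| := by
            rw [hw, abs_mul, abs_of_pos hp0]
            exact le_mul_of_one_le_right hp0.le (Int.one_le_abs hw0)
        _ ≤ lam := hz1 none
        _ ≤ _ := by exact_mod_cast hlam
    exact (Nat.pow_le_pow_iff_right hp.out.one_lt).1 (by exact_mod_cast h1)
  have hki : K₀ + g ≤ k i := by
    have h1 := abs_le.1 (hk i)
    have : (K₀ : ℝ) + g ≤ k i := by linarith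
    exact_mod_cast this
  have h1 := lat_eq_zero.1 hz i
  obtain ⟨a, ha⟩ : (p : ℤ) ^ e ∣ z (some i) := by
    refine dvd_intCast_of_dvd ?_
    have h2 := (pow_dvd_pow (p : ℤ_[p]) (by omega : e ≤ k i)).trans h1
    refine (dvd_sub_right ?_).1 h2
    rw [hw]
    push_cast
    exact Dvd.intro _ (mul_assoc _ _ _).symm
  have hmem : (w, a) ∈ I ×ˢ I := by
    have h2 := hbd w (hw ▸ hz1 none)
    have h3 := hbd a (ha ▸ hz1 (some i))
    simp only [Finset.mem_product, I, Finset.mem_Icc, ← abs_le]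
    push_cast
    exact ⟨h2.le, h3.le⟩
  refine hK w a hw0 ((pow_dvd_pow _ ((Finset.le_sup (f := fun x : ℤ × ℤ => K x.1 x.2) hmem).trans
    (by omega : K₀ ≤ k i - e))).trans ?_)
  rw [hw, ha, show k i = e + (k i - e) by omega, pow_add] at h1
  push_cast at h1
  rw [mul_assoc, ← mul_sub] at h1
  have hne : (p : ℤ_[p]) ^ e ≠ 0 := pow_ne_zero _ PadicInt.prime_p.ne_zero
  exact (mul_dvd_mul_iff_left hne).1 h1

end Local

/-! ### The sieve over the points of a ball -/

section Sieve

variable {p : ℕ} [hp : Fact p.Prime] {d m : ℕ} {b : Fin d → ℤ_[p]} {l : ℕ} {α : Fin m → ℤ_[p]}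
  {ρ : Fin d → ℕ} {k : Fin m → ℕ} {X M : ℕ}

lemma not_dvd_of_dvd_sub_one {p : ℕ} (hp : p.Prime) {M : ℕ} (hpM : p ∣ M) {a : ℤ}
    (ha : (M : ℤ) ∣ a - 1) : ¬ (p : ℤ) ∣ a := by
  intro h
  have h2 := dvd_sub h ((Int.natCast_dvd_natCast.2 hpM).trans ha)
  rw [sub_sub_cancel] at h2
  exact hp.one_lt.ne' (Nat.dvd_one.1 (by exact_mod_cast h2))

/-- A lattice vector with denominator prime to `p` determines the point of the ball, up to the
precision `ρ`. -/
lemma cell_unique (hpM : p ∣ M) (hl : ∀ j, l ≤ ρ j) {y y' : Fin d → ℕ} (hy : y ∈ cells p ρ l)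
    (hy' : y' ∈ cells p ρ l) {v : Option (Fin d ⊕ Fin m) → ℤ}
    (hv : v ∈ Fset (lat (pt b l α y) (Sum.elim ρ k)) X M)
    (hv' : v ∈ Fset (lat (pt b l α y') (Sum.elim ρ k)) X M) : y = y' := by
  rw [mem_Fset] at hv hv'
  have hp0 : ¬ (p : ℤ) ∣ v none := not_dvd_of_dvd_sub_one hp.out hpM hv.2.2.2
  funext j
  have h1 := dvd_sub ((lat_pt_eq_zero.1 hv.2.2.1).1 j) ((lat_pt_eq_zero.1 hv'.2.2.1).1 j)
  have h2 : (p : ℤ) ^ ρ j ∣ (p : ℤ) ^ l * (v none * ((y j : ℤ) - y' j)) := by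
    refine dvd_intCast_of_dvd ?_
    convert h1 using 1
    push_cast
    ring
  rw [← Nat.add_sub_cancel' (hl j), pow_add] at h2
  have h3 := Int.dvd_of_mul_dvd_mul_left (pow_ne_zero _ (by exact_mod_cast hp.out.ne_zero)) h2
  have h4 : IsCoprime ((p : ℤ) ^ (ρ j - l)) (v none) :=
    IsCoprime.pow_left ((Nat.prime_iff_prime_int.1 hp.out).coprime_iff_not_dvd.2 hp0)
  have h5 := h4.dvd_of_dvd_mul_left h3
  have h6 : (y' j) ≡ y j [MOD p ^ (ρ j - l)] := Nat.modEq_iff_dvd.2 (by exact_mod_cast h5)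
  rw [mem_cells] at hy hy'
  exact (h6.eq_of_lt_of_lt (hy' j) (hy j)).symm

lemma rst_mem_Fset {y : Fin d → ℕ} {v : Option (Fin d ⊕ Fin m) → ℤ}
    (hv : v ∈ Fset (lat (pt b l α y) (Sum.elim ρ k)) X M) : rst v ∈ Fset (lat α k) X M := by
  rw [mem_Fset] at hv ⊢
  exact ⟨hv.1, fun i => hv.2.1 (Sum.inr i), lat_eq_zero.2 (lat_pt_eq_zero.1 hv.2.2.1).2, hv.2.2.2⟩

lemma pow_dvd_of_mem_Fset {y : Fin d → ℕ} {v : Option (Fin d ⊕ Fin m) → ℤ}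
    (hv : v ∈ Fset (lat (pt b l α y) (Sum.elim ρ k)) X M) (hl : ∀ j, l ≤ ρ j) {b' : Fin d → ℤ}
    (hb : ∀ j, (p : ℤ_[p]) ^ l ∣ b j - b' j) (j : Fin d) :
    (p : ℤ) ^ l ∣ v (some (Sum.inl j)) - rst v none * b' j := by
  rw [mem_Fset] at hv
  refine dvd_intCast_of_dvd ?_
  have h1 := (pow_dvd_pow (p : ℤ_[p]) (hl j)).trans ((lat_pt_eq_zero.1 hv.2.2.1).1 j)
  have h2 := ((hb j).mul_left (v none : ℤ_[p])).add
    ((Dvd.intro (v none * (y j : ℤ_[p])) rfl : (p : ℤ_[p]) ^ l ∣ _))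
  have := dvd_sub h2 h1
  convert this using 1
  simp only [rst, Option.elim]
  push_cast
  ring

/-- Double counting: a sum over the points of the ball of numbers of lattice vectors is at most the
number of those integer vectors that can occur, since each of them belongs to one point only. -/
lemma sum_card_filter_le (hpM : p ∣ M) (hl : ∀ j, l ≤ ρ j)
    (P : (Option (Fin d ⊕ Fin m) → ℤ) → Prop) (A : Finset (Option (Fin m) → ℤ))
    (S : (Option (Fin m) → ℤ) → Fin d → Finset ℤ)
    (H : ∀ y, ∀ v ∈ Fset (lat (pt b l α y) (Sum.elim ρ k)) X M, P v →
      rst v ∈ A ∧ ∀ j, v (some (Sum.inl j)) ∈ S (rst v) j) :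
    ∑ y ∈ cells p ρ l, ((Fset (lat (pt b l α y) (Sum.elim ρ k)) X M).filter P).card ≤
      ∑ w ∈ A, ∏ j, (S w j).card := by
  simp only [← Fintype.card_piFinset]
  rw [← Finset.card_sigma, ← Finset.card_sigma]
  refine Finset.card_le_card_of_injOn
    (fun x => ⟨rst x.2, fun j => x.2 (some (Sum.inl j))⟩) ?_ ?_
  · rintro ⟨y, v⟩ hv
    simp only [Finset.coe_sigma, Set.mem_sigma_iff, Finset.mem_coe, Finset.mem_filter,
      Fintype.mem_piFinset] at hv ⊢
    exact H y v hv.2.1 hv.2.2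
  · rintro ⟨y, v⟩ hv ⟨y', v'⟩ hv' he
    simp only [Finset.coe_sigma, Set.mem_sigma_iff, Finset.mem_coe, Finset.mem_filter] at hv hv'
    simp only [Sigma.mk.injEq, heq_eq_eq] at he
    have hvv : v = v' := by
      funext o
      rcases o with _ | (j | i)
      · exact congrFun he.1 none
      · exact congrFun he.2 j
      · exact congrFun he.1 (some i)
    subst hvv
    rw [cell_unique hpM hl hv.1 hv'.1 hv.2.1 hv'.2.1]

/-- The vector `v` has a common prime factor in its coordinates `none` and `o`. -/
def Bad {κ : Type*} (o : κ) (v : Option κ → ℤ) : Prop :=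
  ∃ r : ℕ, r.Prime ∧ (r : ℤ) ∣ v none ∧ (r : ℤ) ∣ v (some o)

lemma card_Icc_dvd_le (hX : p ^ l ≤ X) (a : ℤ) :
    ((Finset.Icc (-(X : ℕ) : ℤ) (X : ℕ)).filter fun q => (p : ℤ) ^ l ∣ q - a).card * p ^ l ≤
      3 * X := by
  have h1 := card_le_of_dvd_sub (n := p ^ l) (X := X)
    (S := (Finset.Icc (-(X : ℕ) : ℤ) (X : ℕ)).filter fun q => (p : ℤ) ^ l ∣ q - a)
    (Nat.one_le_pow _ _ hp.out.pos) (fun q hq => by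
      have := Finset.mem_Icc.1 (Finset.mem_filter.1 hq).1
      exact abs_le.2 this) (fun q hq q' hq' => by
      have h2 := dvd_sub (Finset.mem_filter.1 hq).2 (Finset.mem_filter.1 hq').2
      push_cast
      rwa [sub_sub_sub_cancel_right] at h2)
  calc _ ≤ (2 * X / p ^ l + 1) * p ^ l := Nat.mul_le_mul_right _ h1
    _ = 2 * X / p ^ l * p ^ l + p ^ l := by ring
    _ ≤ 2 * X + X := add_le_add (Nat.div_mul_le_self _ _) hX
    _ = 3 * X := by ring

variable {Y : ℕ}

/-- The bound for the vectors with a common factor in a coordinate belonging to `α`. -/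
lemma sum_bad_inr_le (hpM : p ∣ M) (hl : ∀ j, l ≤ ρ j) (hX : p ^ l ≤ X) (i : Fin m)
    (h : (((Fset (lat α k) X M).filter (Bad i)).card : ℝ) *
      (M * Y * p ^ ∑ i, k i) ≤ 2 * (7 * X) ^ (m + 1)) :
    ((∑ y ∈ cells p ρ l,
      ((Fset (lat (pt b l α y) (Sum.elim ρ k)) X M).filter (Bad (Sum.inr i))).card : ℕ) : ℝ) *
      p ^ (d * l) * (M * Y * p ^ ∑ i, k i) ≤ 4 * (7 * X) ^ (m + 1) * (3 * X) ^ d := by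
  choose b' hb' using fun j => exists_int_dvd_sub (b j) l
  have h1 := sum_card_filter_le (b := b) (X := X) (k := k) (α := α) hpM hl (Bad (Sum.inr i))
    ((Fset (lat α k) X M).filter (Bad i))
    (fun w j => (Finset.Icc (-(X : ℕ) : ℤ) (X : ℕ)).filter fun q => (p : ℤ) ^ l ∣ q - w none * b' j)
    (fun y v hv hP => ⟨Finset.mem_filter.2 ⟨rst_mem_Fset hv, hP⟩, fun j => Finset.mem_filter.2
      ⟨Finset.mem_Icc.2 (abs_le.1 ((mem_Fset.1 hv).2.1 _)), pow_dvd_of_mem_Fset hv hl hb' j⟩⟩)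
  set N := ((Fset (lat α k) X M).filter (Bad i)).card
  have h2 : (∑ y ∈ cells p ρ l,
      ((Fset (lat (pt b l α y) (Sum.elim ρ k)) X M).filter (Bad (Sum.inr i))).card) * p ^ (d * l) ≤
      N * (3 * X) ^ d := by
    refine (Nat.mul_le_mul_right _ h1).trans ?_
    rw [Finset.sum_mul, show N * (3 * X) ^ d =
      ∑ _w ∈ (Fset (lat α k) X M).filter (Bad i), (3 * X) ^ d by simp [N]]
    refine Finset.sum_le_sum fun w _ => ?_
    have e : p ^ (d * l) = ∏ _j : Fin d, p ^ l := by
      rw [Finset.prod_const, Finset.card_univ, Fintype.card_fin, ← pow_mul, mul_comm]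
    have e' : (3 * X) ^ d = ∏ _j : Fin d, (3 * X) := by simp
    rw [e, e', ← Finset.prod_mul_distrib]
    exact Finset.prod_le_prod' fun j _ => card_Icc_dvd_le hX _
  have h3 : ((∑ y ∈ cells p ρ l,
      ((Fset (lat (pt b l α y) (Sum.elim ρ k)) X M).filter (Bad (Sum.inr i))).card : ℕ) : ℝ) *
      p ^ (d * l) ≤ N * (3 * X) ^ d := by exact_mod_cast h2
  calc _ ≤ N * (3 * (X : ℝ)) ^ d * (M * Y * p ^ ∑ i, k i) := by gcongr
    _ = N * (M * Y * p ^ ∑ i, k i) * (3 * (X : ℝ)) ^ d := by ring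
    _ ≤ 2 * (7 * X) ^ (m + 1) * (3 * X) ^ d := by gcongr
    _ ≤ _ := by gcongr; norm_num

/-- The bound for the vectors with a common factor in another coordinate. -/
lemma sum_bad_inl_le (hpM : p ∣ M) (hl : ∀ j, l ≤ ρ j) (hX : p ^ l ≤ X) (i : Fin d)
    (h : ∀ a : ℤ, (∑ v ∈ Fset (lat α k) X M,
        (((Finset.Icc (-(X : ℕ) : ℤ) (X : ℕ)).filter fun q => (p : ℤ) ^ l ∣ q - v none * a ∧
          ∃ r : ℕ, r.Prime ∧ (r : ℤ) ∣ v none ∧ (r : ℤ) ∣ q).card : ℝ)) *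
            (M * Y * p ^ l * p ^ ∑ i, k i) ≤ 4 * X * (7 * X) ^ (m + 1)) :
    ((∑ y ∈ cells p ρ l,
      ((Fset (lat (pt b l α y) (Sum.elim ρ k)) X M).filter (Bad (Sum.inl i))).card : ℕ) : ℝ) *
      p ^ (d * l) * (M * Y * p ^ ∑ i, k i) ≤ 4 * (7 * X) ^ (m + 1) * (3 * X) ^ d := by
  choose b' hb' using fun j => exists_int_dvd_sub (b j) l
  have hX0 : (0 : ℝ) < X := by
    exact_mod_cast lt_of_lt_of_le (Nat.pow_pos (n := l) hp.out.pos) hX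
  let Q : (Option (Fin m) → ℤ) → Fin d → Finset ℤ := fun w j =>
    (Finset.Icc (-(X : ℕ) : ℤ) (X : ℕ)).filter fun q => (p : ℤ) ^ l ∣ q - w none * b' j
  let R : (Option (Fin m) → ℤ) → Finset ℤ := fun w =>
    (Finset.Icc (-(X : ℕ) : ℤ) (X : ℕ)).filter fun q => (p : ℤ) ^ l ∣ q - w none * b' i ∧
          ∃ r : ℕ, r.Prime ∧ (r : ℤ) ∣ w none ∧ (r : ℤ) ∣ q
  have h1 := sum_card_filter_le (b := b) (X := X) (k := k) (α := α) hpM hl (Bad (Sum.inl i))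
    (Fset (lat α k) X M) (fun w j => if j = i then R w else Q w j)
    (fun y v hv hP => ⟨rst_mem_Fset hv, fun j => by
      have h2 : v (some (Sum.inl j)) ∈ Finset.Icc (-(X : ℕ) : ℤ) (X : ℕ) :=
        Finset.mem_Icc.2 (abs_le.1 ((mem_Fset.1 hv).2.1 _))
      have h3 := pow_dvd_of_mem_Fset hv hl hb' j
      split_ifs with hj
      · subst hj
        exact Finset.mem_filter.2 ⟨h2, h3, hP⟩
      · exact Finset.mem_filter.2 ⟨h2, h3⟩⟩)
  have h2 : (∑ y ∈ cells p ρ l,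
      ((Fset (lat (pt b l α y) (Sum.elim ρ k)) X M).filter (Bad (Sum.inl i))).card) *
      (p ^ (d * l) * (3 * X)) ≤ (∑ w ∈ Fset (lat α k) X M, (R w).card) * (p ^ l * (3 * X) ^ d) := by
    refine (Nat.mul_le_mul_right _ h1).trans ?_
    rw [Finset.sum_mul, Finset.sum_mul]
    refine Finset.sum_le_sum fun w _ => ?_
    have e : p ^ (d * l) = ∏ _j : Fin d, p ^ l := by
      rw [Finset.prod_const, Finset.card_univ, Fintype.card_fin, ← pow_mul, mul_comm]
    have e' : (3 * X) ^ d = ∏ _j : Fin d, (3 * X) := by simp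
    rw [e, e', ← mul_assoc, ← Finset.prod_mul_distrib,
      ← Finset.mul_prod_erase _ _ (Finset.mem_univ i),
      ← Finset.mul_prod_erase _ (fun _ => 3 * X) (Finset.mem_univ i), if_pos rfl]
    have h3 : ∏ j ∈ Finset.univ.erase i, ((if j = i then R w else Q w j).card * p ^ l) ≤
        ∏ _j ∈ Finset.univ.erase i, (3 * X) := by
      refine Finset.prod_le_prod' fun j hj => ?_
      rw [if_neg (Finset.ne_of_mem_erase hj)]
      exact card_Icc_dvd_le hX _
    calc _ ≤ (R w).card * p ^ l * (∏ _j ∈ Finset.univ.erase i, (3 * X)) * (3 * X) := by gcongr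
      _ = _ := by ring
  have h3 : ((∑ y ∈ cells p ρ l,
      ((Fset (lat (pt b l α y) (Sum.elim ρ k)) X M).filter (Bad (Sum.inl i))).card : ℕ) : ℝ) *
      (p ^ (d * l) * (3 * X)) ≤ (∑ w ∈ Fset (lat α k) X M, ((R w).card : ℝ)) *
        (p ^ l * (3 * X) ^ d) := by exact_mod_cast h2
  refine le_of_mul_le_mul_right ?_ (by positivity : (0 : ℝ) < 3 * X)
  set B := ((∑ y ∈ cells p ρ l,
      ((Fset (lat (pt b l α y) (Sum.elim ρ k)) X M).filter (Bad (Sum.inl i))).card : ℕ) : ℝ)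
  set R' := ∑ w ∈ Fset (lat α k) X M, ((R w).card : ℝ) with hR'
  have h4 : R' * (M * Y * p ^ l * p ^ ∑ i, k i) ≤ 4 * X * (7 * X) ^ (m + 1) := h (b' i)
  calc B * p ^ (d * l) * (M * Y * p ^ ∑ i, k i) * (3 * X)
      = B * (p ^ (d * l) * (3 * X)) * (M * Y * p ^ ∑ i, k i) := by ring
    _ ≤ R' * (p ^ l * (3 * X) ^ d) * (M * Y * p ^ ∑ i, k i) := by gcongr
    _ = R' * (M * Y * p ^ l * p ^ ∑ i, k i) * (3 * X) ^ d := by ring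
    _ ≤ 4 * X * (7 * X) ^ (m + 1) * (3 * X) ^ d := by gcongr
    _ = 4 * (7 * X) ^ (m + 1) * (3 * X) ^ d * (1 * X) := by ring
    _ ≤ _ := by gcongr; norm_num

end Sieve

/-! ### Good approximations for half of the points of a ball -/

section Ubiquity

variable {p : ℕ} [hp : Fact p.Prime] {d m : ℕ} {b : Fin d → ℤ_[p]} {l : ℕ} {α : Fin m → ℤ_[p]}
  {ρ : Fin d → ℕ} {k : Fin m → ℕ} {X M Y : ℕ}

/-- Only a small proportion of the points of a ball can have many lattice vectors none of which has
coprime coordinates. -/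
lemma card_allBad_le (hpM : p ∣ M) (hM : 1 ≤ M) (hX1 : 1 ≤ X) (hl : ∀ j, l ≤ ρ j) (hX : p ^ l ≤ X)
    (hY : 4 * ((d + m) * (4 * 7 ^ (m + 1) * 3 ^ d)) ≤ Y)
    (h1 : ∀ i, (((Fset (lat α k) X M).filter (Bad i)).card : ℝ) *
      (M * Y * p ^ ∑ i, k i) ≤ 2 * (7 * X) ^ (m + 1))
    (h2 : ∀ a : ℤ, (∑ v ∈ Fset (lat α k) X M,
        (((Finset.Icc (-(X : ℕ) : ℤ) (X : ℕ)).filter fun q => (p : ℤ) ^ l ∣ q - v none * a ∧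
          ∃ r : ℕ, r.Prime ∧ (r : ℤ) ∣ v none ∧ (r : ℤ) ∣ q).card : ℝ)) *
            (M * Y * p ^ l * p ^ ∑ i, k i) ≤ 4 * X * (7 * X) ^ (m + 1))
    (Z : Finset (Fin d → ℕ)) (hZ : Z ⊆ cells p ρ l)
    (hZ1 : ∀ y ∈ Z, X ^ (d + m + 1) ≤ (Fset (lat (pt b l α y) (Sum.elim ρ k)) X M).card *
      (p ^ (∑ j, ρ j + ∑ i, k i) * M))
    (hZ2 : ∀ y ∈ Z, ∀ v ∈ Fset (lat (pt b l α y) (Sum.elim ρ k)) X M, ∃ o, Bad o v)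
    (hY0 : 1 ≤ Y) :
    4 * Z.card ≤ (cells p ρ l).card := by
  set P := p ^ ∑ i, k i with hP
  set R := p ^ ∑ j, ρ j with hR
  have hp0 := hp.out.pos
  let F := fun y => Fset (lat (pt b l α y) (Sum.elim ρ k)) X M
  set C := 4 * 7 ^ (m + 1) * 3 ^ d with hC
  -- all the bad vectors, for all the points together
  have h3 : (∑ y ∈ Z, (F y).card) * p ^ (d * l) * (M * Y * P) ≤ (d + m) * C * X ^ (d + m + 1) := by
    have e1 : ∑ y ∈ Z, (F y).card ≤ ∑ o, ∑ y ∈ cells p ρ l, ((F y).filter (Bad o)).card := by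
      rw [Finset.sum_comm]
      calc ∑ y ∈ Z, (F y).card ≤ ∑ y ∈ Z, ∑ o, ((F y).filter (Bad o)).card := by
            refine Finset.sum_le_sum fun y hy => ?_
            refine le_trans (Finset.card_le_card fun v hv => ?_) Finset.card_biUnion_le
            obtain ⟨o, ho⟩ := hZ2 y hy v hv
            exact Finset.mem_biUnion.2 ⟨o, Finset.mem_univ _, Finset.mem_filter.2 ⟨hv, ho⟩⟩
        _ ≤ _ := Finset.sum_le_sum_of_subset hZ
    have e2 : ∀ o : Fin d ⊕ Fin m, (∑ y ∈ cells p ρ l, ((F y).filter (Bad o)).card) *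
        p ^ (d * l) * (M * Y * P) ≤ C * X ^ (d + m + 1) := by
      have e3 : ((C * X ^ (d + m + 1) : ℕ) : ℝ) = 4 * (7 * X) ^ (m + 1) * (3 * X) ^ d := by
        rw [hC]
        push_cast
        ring
      intro o
      have e4 : (((∑ y ∈ cells p ρ l, ((F y).filter (Bad o)).card : ℕ) : ℝ) *
        p ^ (d * l) * (M * Y * p ^ ∑ i, k i)) ≤ ((C * X ^ (d + m + 1) : ℕ) : ℝ) := by
        rw [e3]
        rcases o with i | i
        · exact sum_bad_inl_le hpM hl hX i h2
        · exact sum_bad_inr_le hpM hl hX i (h1 i)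
      exact_mod_cast e4
    calc _ ≤ (∑ o, ∑ y ∈ cells p ρ l, ((F y).filter (Bad o)).card) * p ^ (d * l) * (M * Y * P) := by
          gcongr
      _ = ∑ o, (∑ y ∈ cells p ρ l, ((F y).filter (Bad o)).card) * p ^ (d * l) * (M * Y * P) := by
          rw [Finset.sum_mul, Finset.sum_mul]
      _ ≤ ∑ _o : Fin d ⊕ Fin m, C * X ^ (d + m + 1) := Finset.sum_le_sum fun o _ => e2 o
      _ = _ := by simp; ring
  have h4 : Z.card * X ^ (d + m + 1) ≤ (∑ y ∈ Z, (F y).card) * (R * P * M) := by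
    rw [Finset.sum_mul, show Z.card * X ^ (d + m + 1) = ∑ _y ∈ Z, X ^ (d + m + 1) by simp]
    refine Finset.sum_le_sum fun y hy => ?_
    have := hZ1 y hy
    rwa [pow_add p] at this
  have h5 := card_cells_mul (p := p) hl
  rw [← hR] at h5
  have hP0 : 0 < P := Nat.pow_pos hp0
  have hR0 : 0 < R := Nat.pow_pos hp0
  have hl0 : 0 < p ^ (d * l) := Nat.pow_pos hp0
  have hX0 : 0 < X ^ (d + m + 1) := Nat.pow_pos hX1
  have h6 : Z.card * Y ≤ (cells p ρ l).card * ((d + m) * C) := by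
    refine Nat.le_of_mul_le_mul_right (c := X ^ (d + m + 1) * p ^ (d * l) * (P * M)) ?_ (by positivity)
    calc Z.card * Y * (X ^ (d + m + 1) * p ^ (d * l) * (P * M))
        = Z.card * X ^ (d + m + 1) * (p ^ (d * l) * (M * Y * P)) := by ring
      _ ≤ (∑ y ∈ Z, (F y).card) * (R * P * M) * (p ^ (d * l) * (M * Y * P)) := by gcongr
      _ = (∑ y ∈ Z, (F y).card) * p ^ (d * l) * (M * Y * P) * (R * P * M) := by ring
      _ ≤ (d + m) * C * X ^ (d + m + 1) * (R * P * M) := by gcongr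
      _ = _ := by rw [← h5]; ring
  refine Nat.le_of_mul_le_mul_right (c := Y) ?_ (by omega)
  calc 4 * Z.card * Y = 4 * (Z.card * Y) := by ring
    _ ≤ 4 * ((cells p ρ l).card * ((d + m) * C)) := by gcongr
    _ = (cells p ρ l).card * (4 * ((d + m) * C)) := by ring
    _ ≤ _ := by gcongr

set_option maxHeartbeats 1600000 in
/-- For at least half of the points `x` in any given ball, and for every sufficiently large `g`,
there is a rational point with denominator comparable to `p ^ g` and numerators coprime to the
denominator, which approximates `α` to the precision `k` and `x` to the precision `ρ`; here `k i` is
about `g τ i`, and the sum of all the precisions is within `O(1)` of the pigeonhole bound. -/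
lemma exists_half_good (hm : 1 ≤ m) (h : dioExp α = (m : ℝ) + 1) {τ : Fin m → ℝ}
    (hτ1 : ∀ i, 1 < τ i) (hτ : ∑ i, τ i < (m : ℝ) + 1) (c : ℝ) (d : ℕ) :
    ∃ E : ℕ, ∀ (b : Fin d → ℤ_[p]) (l : ℕ), ∀ᶠ g : ℕ in Filter.atTop,
      ∀ k : Fin m → ℕ, (∀ i, |(k i : ℝ) - g * τ i| ≤ c) → ∀ ρ : Fin d → ℕ, (∀ j, g ≤ ρ j) →
      ∑ j, ρ j + ∑ i, k i + (d + m + 1) * E ≤ (d + m + 1) * g →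
      (d + m + 1) * g ≤ ∑ j, ρ j + ∑ i, k i + (d + m + 1) * E + d →
      (∀ j, l ≤ ρ j) ∧ ∃ T ⊆ cells p ρ l, (cells p ρ l).card ≤ 2 * T.card ∧ ∀ y ∈ T,
        ∃ v : Option (Fin d ⊕ Fin m) → ℤ, lat (pt b l α y) (Sum.elim ρ k) v = 0 ∧
          (p : ℤ) ^ g ≤ v none ∧ v none ≤ (p : ℤ) ^ (g + 3) ∧ ¬ (p : ℤ) ∣ v none ∧
          ∀ o, |v (some o)| ≤ v none ∧ Int.gcd (v (some o)) (v none) = 1 := by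
  have hp1 := hp.out.one_lt
  set Y := 4 * ((d + m) * (4 * 7 ^ (m + 1) * 3 ^ d)) + p with hY
  have hY4 : 4 * ((d + m) * (4 * 7 ^ (m + 1) * 3 ^ d)) ≤ Y := Nat.le_add_right _ _
  set M := Y.factorial with hM
  have hM1 : 1 ≤ M := Y.factorial_pos
  have hpM : p ∣ M := Nat.dvd_factorial hp.out.pos (by omega)
  set H := p ^ (6 * (d + m + 1)) with hH
  set E := 8 * H * M with hE
  have hEp : 8 * H * M ≤ p ^ (E + 6) :=
    (Nat.lt_pow_self hp1).le.trans (Nat.pow_le_pow_right hp.out.pos (by omega))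
  obtain ⟨δ, hδ, hcov⟩ := exists_covers hm h hτ1 hτ c
  refine ⟨E, fun b l => ?_⟩
  have hη : 0 < τ ⟨0, hm⟩ - 1 := sub_pos.2 (hτ1 _)
  have hkg : ∀ᶠ g : ℕ in Filter.atTop, ∀ i, c ≤ (τ i - 1) * g :=
    Filter.eventually_all.2 fun i => eventually_le_mul (sub_pos.2 (hτ1 i)) c
  filter_upwards [hcov, eventually_sieve hm h hτ1 hτ c (by omega : p ≤ Y) l,
    eventually_pow_le hm h hτ1 c l, hkg, eventually_le_mul hδ ((E : ℝ) + 6),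
    Filter.eventually_ge_atTop (E + 6 + l)] with g hcov hsieve hirr hkg hδg hg k hk ρ hρ hS1 hS2
  have hlρ : ∀ j, l ≤ ρ j := fun j => by have := hρ j; omega
  refine ⟨hlρ, ?_⟩
  obtain ⟨L, hL1, hL2, hL⟩ := hcov k hk
  set X := p ^ g with hX
  have hX1 : 1 ≤ X := Nat.one_le_pow _ _ hp.out.pos
  set lam := p ^ (g - E - 6) with hlam
  have hlam1 : 1 ≤ lam := Nat.one_le_pow _ _ hp.out.pos
  have hXlam : X = lam * p ^ (E + 6) := by
    rw [hX, hlam, ← pow_add]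
    congr 1
    omega
  have hLlam : L ≤ lam := by
    refine Nat.le_of_mul_le_mul_right (c := p ^ (E + 6)) ?_ (Nat.pow_pos hp.out.pos)
    rw [← hXlam]
    refine le_trans (Nat.mul_le_mul_left _ (Nat.pow_le_pow_right hp.out.pos ?_)) hL2
    exact Nat.le_floor (by push_cast; exact hδg)
  have hlamX : lam < X := by
    rw [hlam, hX]
    exact Nat.pow_lt_pow_right hp1 (by omega)
  have hkg' : ∀ i, g ≤ k i := by
    intro i
    have h1 := abs_le.1 (hk i)
    have h2 := hkg i
    have : (g : ℝ) ≤ k i := by linarith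
    exact_mod_cast this
  have hlk : ∀ i, lam < p ^ k i := fun i =>
    hlamX.trans_le (Nat.pow_le_pow_right hp.out.pos (hkg' i))
  have hlr : ∀ i, lam < p ^ ρ i := fun i =>
    hlamX.trans_le (Nat.pow_le_pow_right hp.out.pos (hρ i))
  have hlX : p ^ l ≤ X := Nat.pow_le_pow_right hp.out.pos (by omega)
  -- the points with short lattice vectors
  set S := (cells p ρ l).filter fun y => ∃ z, z ≠ 0 ∧ lat (pt b l α y) (Sum.elim ρ k) z = 0 ∧
      ∀ o, |z o| ≤ (lam : ℤ) with hS
  have hVeq : p ^ (∑ j, ρ j + ∑ i, k i) = p ^ (∑ j, ρ j) * p ^ (∑ i, k i) := pow_add _ _ _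
  have hScard : 4 * S.card ≤ (cells p ρ l).card := by
    have h1 := card_short_le (b := b) hL hlam1 hLlam hlr hlk (hirr k hk lam hlamX.le)
    rw [← hS] at h1
    have h2 := card_cells_mul (p := p) hlρ
    refine Nat.le_of_mul_le_mul_right (c := p ^ (d * l) * p ^ ∑ i, k i) ?_
      (Nat.mul_pos (Nat.pow_pos hp.out.pos) (Nat.pow_pos hp.out.pos))
    calc 4 * S.card * (p ^ (d * l) * p ^ ∑ i, k i)
        = 4 * (S.card * p ^ (d * l) * p ^ ∑ i, k i) := by ring
      _ ≤ 4 * ((3 * lam) ^ d * (5 * lam) ^ (m + 1)) := by gcongr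
      _ = 4 * (3 ^ d * 5 ^ (m + 1)) * lam ^ (d + m + 1) := by ring
      _ ≤ p ^ (2 + 2 * d + 3 * (m + 1)) * lam ^ (d + m + 1) := by
          gcongr
          have e0 : p ^ (2 + 2 * d + 3 * (m + 1)) = p ^ 2 * ((p ^ 2) ^ d * (p ^ 3) ^ (m + 1)) := by
            rw [← pow_mul, ← pow_mul, ← pow_add, ← pow_add, add_assoc]
          rw [e0]
          have h2p := hp.out.two_le
          have e1 : 4 ≤ p ^ 2 := (by norm_num : 4 ≤ 2 ^ 2).trans (Nat.pow_le_pow_left h2p 2)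
          have e2 : 3 ≤ p ^ 2 := (by norm_num : 3 ≤ 2 ^ 2).trans (Nat.pow_le_pow_left h2p 2)
          have e3 : 5 ≤ p ^ 3 := (by norm_num : 5 ≤ 2 ^ 3).trans (Nat.pow_le_pow_left h2p 3)
          gcongr
      _ = p ^ (2 + 2 * d + 3 * (m + 1) + (g - E - 6) * (d + m + 1)) := by
          rw [hlam, ← pow_mul, ← pow_add]
      _ ≤ p ^ (∑ j, ρ j + ∑ i, k i) := by
          refine Nat.pow_le_pow_right hp.out.pos ?_
          obtain ⟨t, rfl⟩ : ∃ t, g = t + E + 6 := ⟨g - E - 6, by omega⟩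
          have e : t + E + 6 - E - 6 = t := by omega
          rw [e]
          nlinarith
      _ = (cells p ρ l).card * (p ^ (d * l) * p ^ ∑ i, k i) := by rw [hVeq, ← h2]; ring
  -- at the other points there are many lattice vectors
  have hmany : ∀ y ∈ cells p ρ l, y ∉ S → X ^ (d + m + 1) ≤
      (Fset (lat (pt b l α y) (Sum.elim ρ k)) X M).card * (p ^ (∑ j, ρ j + ∑ i, k i) * M) := by
    intro y hy hyS
    have hcard : ∑ o, (Sum.elim ρ k) o = ∑ j, ρ j + ∑ i, k i := by simp
    have hκ : Fintype.card (Option (Fin d ⊕ Fin m)) = d + m + 1 := by simp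
    have hno : ∀ z, lat (pt b l α y) (Sum.elim ρ k) z = 0 → (∀ i, |z i| ≤ (lam : ℤ)) → z = 0 := by
      intro z hz1 hz2
      by_contra hz0
      exact hyS (Finset.mem_filter.2 ⟨hy, z, hz0, hz1, hz2⟩)
    have hcov2 := covers_of_no_short (H := H) _ (lat_surjective (pt b l α y) (Sum.elim ρ k)) hlam1 hno (by
      rw [card_lat, hcard, hκ]
      calc p ^ (∑ j, ρ j + ∑ i, k i) ≤ p ^ (6 * (d + m + 1) + (g - E - 6) * (d + m + 1)) := by
            refine Nat.pow_le_pow_right hp.out.pos ?_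
            obtain ⟨t, rfl⟩ : ∃ t, g = t + E + 6 := ⟨g - E - 6, by omega⟩
            have e : t + E + 6 - E - 6 = t := by omega
            rw [e]
            nlinarith
        _ = H * lam ^ (d + m + 1) := by rw [hH, hlam, ← pow_mul, ← pow_add]
        _ < H * (lam + 1) ^ (d + m + 1) := by
            refine Nat.mul_lt_mul_of_pos_left ?_ (Nat.pow_pos hp.out.pos)
            exact Nat.pow_lt_pow_left (Nat.lt_succ_self _) (by omega))
    obtain ⟨e, he, he1⟩ := exists_lat_one (pt b l α y) (Sum.elim ρ k)
    have h1 := le_card_latBox_modEq hcov2 hM1 none e he he1 (ctr X) (X / 2)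
    rw [card_lat, hcard, hκ] at h1
    have h2 : X / 2 + M * (3 * H * lam + 1) ≤ X := by
      have hH1 : 1 ≤ H := Nat.one_le_pow _ _ hp.out.pos
      have h3 : M * (3 * H * lam + 1) ≤ 4 * H * M * lam := by
        calc M * (3 * H * lam + 1) ≤ M * (3 * H * lam + H * lam) := by
              gcongr
              exact Nat.one_le_iff_ne_zero.2 (by positivity)
          _ = _ := by ring
      have h4 : 2 * (4 * H * M * lam) ≤ X := by
        calc 2 * (4 * H * M * lam) = lam * (8 * H * M) := by ring
          _ ≤ _ := by rw [hXlam]; gcongr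
      omega
    calc X ^ (d + m + 1) ≤ (2 * (X / 2) + 1) ^ (d + m + 1) := Nat.pow_le_pow_left (by omega) _
      _ ≤ _ := h1
      _ ≤ _ := by
          gcongr
          refine Finset.filter_subset_filter _ fun z hz => ?_
          rw [mem_latBox] at hz ⊢
          exact ⟨fun i => (hz.1 i).trans (by exact_mod_cast h2), hz.2⟩
  obtain ⟨hs1, hs2⟩ := hsieve k hk
  set Z := (cells p ρ l).filter fun y => y ∉ S ∧
    ∀ v ∈ Fset (lat (pt b l α y) (Sum.elim ρ k)) X M, ∃ o, Bad o v with hZ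
  have hZcard : 4 * Z.card ≤ (cells p ρ l).card := by
    refine card_allBad_le (b := b) (α := α) (k := k) (Y := Y) hpM hM1 hX1 hlρ hlX hY4 ?_ ?_ Z (Finset.filter_subset _ _) ?_ ?_ (by omega)
    · intro i
      have := hs1 i
      rw [hX]
      push_cast
      exact this
    · intro a
      have := hs2 a
      rw [hX]
      push_cast at this ⊢
      exact this
    · intro y hy
      have := Finset.mem_filter.1 hy
      exact hmany y this.1 this.2.1
    · intro y hy
      exact (Finset.mem_filter.1 hy).2.2
  refine ⟨cells p ρ l \ (S ∪ Z), Finset.sdiff_subset, ?_, ?_⟩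
  · have h1 := Finset.le_card_sdiff (S ∪ Z) (cells p ρ l)
    have h2 := Finset.card_union_le S Z
    omega
  · intro y hy
    simp only [Finset.mem_sdiff, Finset.mem_union, not_or] at hy
    have h1 : ∃ v ∈ Fset (lat (pt b l α y) (Sum.elim ρ k)) X M, ∀ o, ¬ Bad o v := by
      by_contra! hcon
      exact hy.2.2 (Finset.mem_filter.2 ⟨hy.1, hy.2.1, hcon⟩)
    obtain ⟨v, hv, hbad⟩ := h1
    rw [mem_Fset] at hv
    have hX0 : (0 : ℤ) < X := by exact_mod_cast hX1
    have hXZ : (X : ℤ) = (p : ℤ) ^ g := by rw [hX]; push_cast; rfl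
    refine ⟨v, hv.2.2.1, by linarith [hv.1.1], ?_, not_dvd_of_dvd_sub_one hp.out hpM hv.2.2.2,
      fun o => ⟨(hv.2.1 o).trans (by linarith [hv.1.1]), ?_⟩⟩
    · rw [pow_add, ← hXZ]
      have : (8 : ℤ) ≤ (p : ℤ) ^ 3 := by
        exact_mod_cast (by norm_num : 8 ≤ 2 ^ 3).trans (Nat.pow_le_pow_left hp.out.two_le 3)
      nlinarith [hv.1.2]
    · by_contra hg1
      obtain ⟨r, hr, hrd⟩ := Nat.exists_prime_and_dvd hg1
      exact hbad o ⟨r, hr, (Int.natCast_dvd_natCast.2 hrd).trans (Int.gcd_dvd_right _ _),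
        (Int.natCast_dvd_natCast.2 hrd).trans (Int.gcd_dvd_left _ _)⟩

end Ubiquity

/-! ### Local ubiquity and mass distribution -/

section Mass

variable {p : ℕ} [hp : Fact p.Prime] {d : ℕ}

/-- The ball of radius `p ^ (-l)` about `b`. -/
def pball (b : Fin d → ℤ_[p]) (l : ℕ) : Set (Fin d → ℤ_[p]) := {x | ∀ j, (p : ℤ_[p]) ^ l ∣ x j - b j}

lemma mem_pball {b x : Fin d → ℤ_[p]} {l : ℕ} : x ∈ pball b l ↔ ∀ j, (p : ℤ_[p]) ^ l ∣ x j - b j :=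
  Iff.rfl

lemma mem_pball_self (b : Fin d → ℤ_[p]) (l : ℕ) : b ∈ pball b l := fun j => by simp

lemma pball_comm {b x : Fin d → ℤ_[p]} {l : ℕ} (h : x ∈ pball b l) : b ∈ pball x l := fun j => by
  rw [← neg_sub]
  exact (dvd_neg.2 (h j))

lemma pball_trans {b x y : Fin d → ℤ_[p]} {l l' : ℕ} (hl : l' ≤ l) (h : x ∈ pball b l)
    (h' : y ∈ pball x l') : y ∈ pball b l' := fun j => by
  have := dvd_add (h' j) ((pow_dvd_pow _ hl).trans (h j))
  rwa [sub_add_sub_cancel] at this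

lemma pball_mono {b : Fin d → ℤ_[p]} {l l' : ℕ} (hl : l' ≤ l) : pball b l ⊆ pball b l' :=
  fun _ h j => (pow_dvd_pow _ hl).trans (h j)

lemma pball_eq_closedBall (b : Fin d → ℤ_[p]) (l : ℕ) :
    pball b l = Metric.closedBall b ((p : ℝ) ^ (-(l : ℝ))) := by
  ext x
  have : (0 : ℝ) ≤ (p : ℝ) ^ (-(l : ℝ)) := by positivity
  rw [Metric.mem_closedBall, dist_pi_le_iff this]
  refine forall_congr' fun j => ?_
  rw [dist_eq_norm, norm_le_iff_dvd]

lemma isClosed_pball (b : Fin d → ℤ_[p]) (l : ℕ) : IsClosed (pball b l) := by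
  rw [pball_eq_closedBall]
  exact Metric.isClosed_closedBall

/-- The number of those among the balls of radius `p ^ (-N)` that fill the rectangles with sides
`p ^ (-t j)` and centres `z y`, `y ∈ T`, which lie in a given ball of radius `p ^ (-u)`. -/
lemma card_cand_le {b x : Fin d → ℤ_[p]} {l u N : ℕ} {ρ t : Fin d → ℕ} (hlu : l ≤ u) (huN : u ≤ N)
    (hlρ : ∀ j, l ≤ ρ j) (hρt : ∀ j, ρ j ≤ t j) (htN : ∀ j, t j ≤ N) {T : Finset (Fin d → ℕ)}
    (hT : T ⊆ cells p ρ l) {z : (Fin d → ℕ) → Fin d → ℤ_[p]}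
    (hz : ∀ y ∈ T, ∀ j, (p : ℤ_[p]) ^ ρ j ∣ b j + (p : ℤ_[p]) ^ l * (y j : ℤ_[p]) - z y j) :
    ((T ×ˢ Fintype.piFinset fun j => Finset.range (p ^ (N - t j))).filter fun c =>
      x ∈ pball (fun j => z c.1 j + (p : ℤ_[p]) ^ t j * (c.2 j : ℤ_[p])) u).card ≤
      p ^ ∑ j, ((ρ j - u) + (N - max (t j) u)) := by
  set S := ((T ×ˢ Fintype.piFinset fun j => Finset.range (p ^ (N - t j))).filter fun c =>
      x ∈ pball (fun j => z c.1 j + (p : ℤ_[p]) ^ t j * (c.2 j : ℤ_[p])) u) with hS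
  have hp0 := hp.out.pos
  have hpne : (p : ℤ) ≠ 0 := by exact_mod_cast hp.out.ne_zero
  let A : Fin d → Finset ℕ := fun j => (Finset.range (p ^ (ρ j - l))).filter fun y : ℕ =>
    (p : ℤ_[p]) ^ min (ρ j) u ∣ x j - (b j + (p : ℤ_[p]) ^ l * (y : ℤ_[p]))
  have hA : ∀ j, (A j).card ≤ p ^ (ρ j - u) := by
    intro j
    have h1 := hlρ j
    refine card_modEq_le (N := p ^ (min (ρ j) u - l)) ?_ ?_
    · rw [← pow_add, show min (ρ j) u - l + (ρ j - u) = ρ j - l by omega]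
      exact Finset.filter_subset _ _
    · intro y hy y' hy'
      have h2 := dvd_sub (Finset.mem_filter.1 hy').2 (Finset.mem_filter.1 hy).2
      have h3 : (p : ℤ) ^ min (ρ j) u ∣ (p : ℤ) ^ l * ((y : ℤ) - y') := by
        refine dvd_intCast_of_dvd ?_
        convert h2 using 1
        push_cast
        ring
      rw [show min (ρ j) u = l + (min (ρ j) u - l) by omega, pow_add] at h3
      push_cast
      exact Int.dvd_of_mul_dvd_mul_left (pow_ne_zero _ hpne) h3
  let B : (Fin d → ℕ) → Fin d → Finset ℕ := fun y j =>
    (Finset.range (p ^ (N - t j))).filter fun w : ℕ =>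
      (p : ℤ_[p]) ^ u ∣ x j - (z y j + (p : ℤ_[p]) ^ t j * (w : ℤ_[p]))
  have hB : ∀ y j, (B y j).card ≤ p ^ (N - max (t j) u) := by
    intro y j
    have h1 := htN j
    refine card_modEq_le (N := p ^ (u - t j)) ?_ ?_
    · rw [← pow_add, show u - t j + (N - max (t j) u) = N - t j by omega]
      exact Finset.filter_subset _ _
    · intro w hw w' hw'
      rcases le_total u (t j) with hut | hut
      · simp [Nat.sub_eq_zero_of_le hut]
      have h2 := dvd_sub (Finset.mem_filter.1 hw').2 (Finset.mem_filter.1 hw).2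
      have h3 : (p : ℤ) ^ u ∣ (p : ℤ) ^ t j * ((w : ℤ) - w') := by
        refine dvd_intCast_of_dvd ?_
        convert h2 using 1
        push_cast
        ring
      rw [show u = t j + (u - t j) by omega, pow_add] at h3
      push_cast
      exact Int.dvd_of_mul_dvd_mul_left (pow_ne_zero _ hpne) h3
  have hsub : S ⊆ (Fintype.piFinset A).biUnion fun y => (Fintype.piFinset (B y)).image fun w => (y, w) := by
    rintro ⟨y, w⟩ hc
    obtain ⟨h1, h2⟩ := Finset.mem_filter.1 hc
    obtain ⟨hy, hw⟩ := Finset.mem_product.1 h1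
    have hyc := mem_cells.1 (hT hy)
    simp only [Fintype.mem_piFinset, Finset.mem_range] at hw
    simp only [Finset.mem_biUnion, Finset.mem_image, Fintype.mem_piFinset]
    refine ⟨y, fun j => Finset.mem_filter.2 ⟨Finset.mem_range.2 (hyc j), ?_⟩, w, fun j =>
      Finset.mem_filter.2 ⟨Finset.mem_range.2 (hw j), h2 j⟩, rfl⟩
    have h3 : (p : ℤ_[p]) ^ min (ρ j) u ∣ x j - (z y j + (p : ℤ_[p]) ^ t j * (w j : ℤ_[p])) :=
      (pow_dvd_pow _ (min_le_right _ _)).trans (h2 j)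
    have h4 : (p : ℤ_[p]) ^ min (ρ j) u ∣ (p : ℤ_[p]) ^ t j * (w j : ℤ_[p]) :=
      (pow_dvd_pow _ ((min_le_left _ _).trans (hρt j))).mul_right _
    have h5 := (pow_dvd_pow (p : ℤ_[p]) (min_le_left (ρ j) u)).trans (hz y hy j)
    have h6 := dvd_sub (dvd_add h3 h4) h5
    convert h6 using 1
    ring
  calc S.card ≤ ∑ y ∈ Fintype.piFinset A, ((Fintype.piFinset (B y)).image fun w => (y, w)).card :=
        (Finset.card_le_card hsub).trans Finset.card_biUnion_le
    _ ≤ ∑ _y ∈ Fintype.piFinset A, p ^ ∑ j, (N - max (t j) u) := by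
        refine Finset.sum_le_sum fun y _ => Finset.card_image_le.trans ?_
        rw [Fintype.card_piFinset, ← Finset.prod_pow_eq_pow_sum]
        exact Finset.prod_le_prod' fun j _ => hB y j
    _ ≤ p ^ (∑ j, (ρ j - u)) * p ^ ∑ j, (N - max (t j) u) := by
        rw [Finset.sum_const, smul_eq_mul]
        gcongr
        rw [Fintype.card_piFinset, ← Finset.prod_pow_eq_pow_sum]
        exact Finset.prod_le_prod' fun j _ => hA j
    _ = _ := by rw [← pow_add, ← Finset.sum_add_distrib]

/-- The sets `F g` locally contain many well-distributed rectangles: inside any ball, and for all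
large `g`, at least half of the cells of precision `ρ` contain (at their scale) a rectangle with
sides `p ^ (-t j)` that lies in `F g`. The precision satisfies `ρ j = min κ (t j)`, and the
rectangles are spread out enough for a mass distribution of dimension `s`. -/
def LocUbiq (F : ℕ → Set (Fin d → ℤ_[p])) (s : ℝ) (A : ℕ) : Prop :=
  ∀ (b : Fin d → ℤ_[p]) (l : ℕ), ∀ᶠ g : ℕ in Filter.atTop, ∃ (κ N : ℕ) (ρ t : Fin d → ℕ),
    g ≤ κ ∧ κ ≤ N ∧ (∀ j, l ≤ ρ j) ∧ (∀ j, ρ j = min κ (t j)) ∧ (∀ j, t j ≤ N) ∧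
    (∀ u : ℕ, κ ≤ u → s * u ≤ ((∑ j, ρ j + ∑ j, (u - t j) + A : ℕ) : ℝ)) ∧
    ∃ T ⊆ cells p ρ l, (cells p ρ l).card ≤ 2 * T.card ∧ ∀ y ∈ T, ∃ z : Fin d → ℤ_[p],
      (∀ j, (p : ℤ_[p]) ^ ρ j ∣ b j + (p : ℤ_[p]) ^ l * (y j : ℤ_[p]) - z j) ∧
      ∀ x, (∀ j, (p : ℤ_[p]) ^ t j ∣ x j - z j) → x ∈ F g

/-- The weight of those balls of a family (with centres `x i` and radii `p ^ (-u i)`) whose centres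
lie in a given ball, in terms of volume. -/
noncomputable def wt (x : ℕ → Fin d → ℤ_[p]) (u : ℕ → ℕ) (b : Fin d → ℤ_[p]) (l : ℕ) : ℝ≥0∞ :=
  ∑' i, if x i ∈ pball b l then ENNReal.ofReal ((p : ℝ) ^ (-((d : ℝ) * u i))) else 0

/-- The ball of radius `p ^ (-l)` about `b` is not contained in a ball of the family, and the balls
of the family contained in it have total volume less than a quarter of its volume. -/
def Free (x : ℕ → Fin d → ℤ_[p]) (u : ℕ → ℕ) (b : Fin d → ℤ_[p]) (l : ℕ) : Prop :=
  (∀ i, u i ≤ l → x i ∉ pball b (u i)) ∧ wt x u b l < ENNReal.ofReal ((p : ℝ) ^ (-((d : ℝ) * l)) / 4)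

set_option maxHeartbeats 1600000 in
/-- A ball that is free with respect to a family of finite total `s`-dimensional size contains a
smaller one which is free too and which lies in one of the sets `F g`: averaging over the candidates
for this smaller ball, the balls of the family of radius at least `p ^ (-κ)` meet few of them because
of their small volume, and the remaining ones because of their small `s`-dimensional size. -/
lemma Free.exists_next {F : ℕ → Set (Fin d → ℤ_[p])} {s : ℝ} {A : ℕ} (hF : LocUbiq F s A)
    (hsd : s ≤ d) {x : ℕ → Fin d → ℤ_[p]} {u : ℕ → ℕ}
    (hsum : Summable fun i => (p : ℝ) ^ (-(s * u i))) {b : Fin d → ℤ_[p]} {l : ℕ}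
    (h : Free x u b l) (g₀ : ℕ) :
    ∃ c l', Free x u c l' ∧ l < l' ∧ pball c l' ⊆ pball b l ∧ ∃ g ≥ g₀, pball c l' ⊆ F g := by
  have hp0 : (0 : ℝ) < p := by exact_mod_cast hp.out.pos
  have hp1 : (1 : ℝ) ≤ p := by exact_mod_cast hp.out.one_le
  -- the tail of the `s`-dimensional size tends to zero
  have htail : ∀ᶠ g : ℕ in Filter.atTop, ∑' i, (if g ≤ u i then (p : ℝ) ^ (-(s * u i)) else 0) <
      (p : ℝ) ^ (-((d : ℝ) * l)) / (20 * (p : ℝ) ^ A) := by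
    have h1 : Filter.Tendsto (fun g : ℕ => ∑' i, (if g ≤ u i then (p : ℝ) ^ (-(s * u i)) else 0))
        Filter.atTop (nhds (∑' _i : ℕ, (0 : ℝ))) := by
      refine tendsto_tsum_of_dominated_convergence hsum ?_ ?_
      · intro i
        refine tendsto_const_nhds.congr' ?_
        filter_upwards [Filter.eventually_gt_atTop (u i)] with g hg
        rw [if_neg (by omega)]
      · refine Filter.Eventually.of_forall fun g i => ?_
        split_ifs
        · rw [Real.norm_of_nonneg (by positivity)]
        · rw [norm_zero]
          positivity
    rw [tsum_zero] at h1
    exact h1.eventually_lt_const (by positivity)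
  obtain ⟨G, hG⟩ := Filter.eventually_atTop.1 htail
  obtain ⟨g, hg, hgU⟩ := ((Filter.eventually_ge_atTop (max (max g₀ G) (l + 1))).and (hF b l)).exists
  obtain ⟨κ, N, ρ, t, hgκ, hκN, hlρ, hρ, htN, hkey, T, hT, hTcard, hTz⟩ := hgU
  have hz : ∀ y, ∃ z : Fin d → ℤ_[p], y ∈ T →
      (∀ j, (p : ℤ_[p]) ^ ρ j ∣ b j + (p : ℤ_[p]) ^ l * (y j : ℤ_[p]) - z j) ∧
      ∀ x, (∀ j, (p : ℤ_[p]) ^ t j ∣ x j - z j) → x ∈ F g := by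
    intro y
    by_cases hy : y ∈ T
    · obtain ⟨z, hz⟩ := hTz y hy
      exact ⟨z, fun _ => hz⟩
    · exact ⟨0, fun h => absurd h hy⟩
  choose z hz using hz
  have hρt : ∀ j, ρ j ≤ t j := fun j => by rw [hρ j]; exact min_le_right _ _
  let Cs := T ×ˢ Fintype.piFinset fun j => Finset.range (p ^ (N - t j))
  let ctr : (Fin d → ℕ) × (Fin d → ℕ) → Fin d → ℤ_[p] := fun c j =>
    z c.1 j + (p : ℤ_[p]) ^ t j * (c.2 j : ℤ_[p])
  have hctr : ∀ c ∈ Cs, ctr c ∈ pball b l := by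
    intro c hc j
    have hy := (Finset.mem_product.1 hc).1
    have h1 := (pow_dvd_pow (p : ℤ_[p]) (hlρ j)).trans ((hz _ hy).1 j)
    have h2 : (p : ℤ_[p]) ^ l ∣ (p : ℤ_[p]) ^ t j * (c.2 j : ℤ_[p]) :=
      (pow_dvd_pow _ ((hlρ j).trans (hρt j))).mul_right _
    have h3 := dvd_sub (dvd_add h2 (Dvd.intro (c.1 j : ℤ_[p]) rfl : (p : ℤ_[p]) ^ l ∣ _)) h1
    convert h3 using 1
    simp only [ctr]
    ring
  have hlN : l < N := by omega
  -- the balls of the family that would spoil a candidate, with their cost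
  let val : (Fin d → ℕ) × (Fin d → ℕ) → ℕ → ℝ := fun c i =>
    if u i ≤ N then (if x i ∈ pball (ctr c) (u i) then 1 else 0)
    else (if x i ∈ pball (ctr c) N then 4 * (p : ℝ) ^ ((d : ℝ) * (N - u i)) else 0)
  have hval0 : ∀ c i, 0 ≤ val c i := by
    intro c i
    simp only [val]
    split_ifs <;> positivity
  set Q : ℝ := (p : ℝ) ^ (∑ j, ρ j + ∑ j, (N - t j)) with hQ
  have hQ0 : 0 < Q := by positivity
  have hcount : ∀ (w : ℕ) (y : Fin d → ℤ_[p]), κ ≤ w → w ≤ N →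
      ((Cs.filter fun c => y ∈ pball (ctr c) w).card : ℝ) ≤ Q * (p : ℝ) ^ A * (p : ℝ) ^ (-(s * w)) := by
    intro w y hw hwN
    have h1 := card_cand_le (x := y) (by omega : l ≤ w) hwN hlρ hρt htN hT (fun y hy => (hz y hy).1)
    have h2 : ∑ j, ((ρ j - w) + (N - max (t j) w)) + ∑ j, (w - t j) = ∑ j, (N - t j) := by
      rw [← Finset.sum_add_distrib]
      refine Finset.sum_congr rfl fun j _ => ?_
      have := hρ j
      have := htN j
      omega
    have h3 := hkey w hw
    calc ((Cs.filter fun c => y ∈ pball (ctr c) w).card : ℝ)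
        ≤ ((p ^ ∑ j, ((ρ j - w) + (N - max (t j) w)) : ℕ) : ℝ) := Nat.cast_le.2 h1
      _ = (p : ℝ) ^ (∑ j, ((ρ j - w) + (N - max (t j) w))) := Nat.cast_pow _ _
      _ = (p : ℝ) ^ ((∑ j, ((ρ j - w) + (N - max (t j) w)) : ℕ) : ℝ) := (Real.rpow_natCast _ _).symm
      _ ≤ (p : ℝ) ^ (((∑ j, ρ j + ∑ j, (N - t j) : ℕ) : ℝ) + (A : ℝ) + -(s * w)) := by
          refine Real.rpow_le_rpow_of_exponent_le hp1 ?_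
          rw [← h2]
          push_cast at h3 ⊢
          linarith
      _ = _ := by rw [Real.rpow_add hp0, Real.rpow_add hp0, Real.rpow_natCast, Real.rpow_natCast]
  -- the cost of a single ball of the family
  have hterm : ∀ i, ∑ c ∈ Cs, val c i ≤
      Q * ((if x i ∈ pball b l then (p : ℝ) ^ (-((d : ℝ) * u i)) else 0) +
        5 * (p : ℝ) ^ A * (if κ ≤ u i then (p : ℝ) ^ (-(s * u i)) else 0)) := by
    intro i
    have hnn1 : (0 : ℝ) ≤ if x i ∈ pball b l then (p : ℝ) ^ (-((d : ℝ) * u i)) else 0 := by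
      split_ifs <;> positivity
    have hnn2 : (0 : ℝ) ≤ if κ ≤ u i then (p : ℝ) ^ (-(s * u i)) else 0 := by
      split_ifs <;> positivity
    by_cases hu : u i ≤ N
    · have e : ∑ c ∈ Cs, val c i = ((Cs.filter fun c => x i ∈ pball (ctr c) (u i)).card : ℝ) := by
        simp only [val, if_pos hu, Finset.sum_boole]
      rw [e]
      rcases Finset.eq_empty_or_nonempty (Cs.filter fun c => x i ∈ pball (ctr c) (u i)) with he | ⟨c, hc⟩
      · rw [he, Finset.card_empty, Nat.cast_zero]
        positivity
      obtain ⟨hc, hxc⟩ := Finset.mem_filter.1 hc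
      have hlu : l < u i := by
        by_contra! hle
        exact h.1 i hle (pball_trans hle (hctr c hc) hxc)
      have hxb : x i ∈ pball b l := pball_trans le_rfl (hctr c hc) (pball_mono hlu.le hxc)
      rcases lt_or_ge (u i) κ with hκ | hκ
      · rw [if_pos hxb, if_neg (by omega), mul_zero, add_zero]
        have h1 := card_cand_le (x := x i) hlu.le hu hlρ hρt htN hT (fun y hy => (hz y hy).1)
        have h2 : ∑ j, ((ρ j - u i) + (N - max (t j) (u i))) + d * u i =
            ∑ j, ρ j + ∑ j, (N - t j) := by
          have e1 : d * u i = ∑ _j : Fin d, u i := by simp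
          rw [e1, ← Finset.sum_add_distrib, ← Finset.sum_add_distrib]
          refine Finset.sum_congr rfl fun j _ => ?_
          have := hρ j
          have := htN j
          omega
        calc ((Cs.filter fun c => x i ∈ pball (ctr c) (u i)).card : ℝ)
            ≤ ((p ^ ∑ j, ((ρ j - u i) + (N - max (t j) (u i))) : ℕ) : ℝ) := Nat.cast_le.2 h1
          _ = (p : ℝ) ^ (∑ j, ((ρ j - u i) + (N - max (t j) (u i)))) := Nat.cast_pow _ _
          _ = _ := by
            rw [hQ, ← h2, pow_add, mul_assoc, Real.rpow_neg hp0.le, ← Nat.cast_mul,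
              Real.rpow_natCast, mul_inv_cancel₀ (by positivity), mul_one]
      · rw [if_pos hκ]
        refine (hcount _ _ hκ hu).trans ?_
        have hpos : 0 ≤ (p : ℝ) ^ A * (p : ℝ) ^ (-(s * u i)) := by positivity
        rw [mul_assoc Q]
        gcongr
        linarith
    · have e : ∑ c ∈ Cs, val c i = ((Cs.filter fun c => x i ∈ pball (ctr c) N).card : ℝ) *
          (4 * (p : ℝ) ^ ((d : ℝ) * (N - u i))) := by
        simp only [val, if_neg hu]
        rw [← Finset.sum_filter, Finset.sum_const, nsmul_eq_mul]
      have hNu : (N : ℝ) ≤ u i := by exact_mod_cast (not_le.1 hu).le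
      rw [e, if_pos (by omega : κ ≤ u i)]
      calc _ ≤ Q * (p : ℝ) ^ A * (p : ℝ) ^ (-(s * N)) * (4 * (p : ℝ) ^ ((d : ℝ) * (N - u i))) := by
            gcongr
            exact hcount N _ hκN le_rfl
        _ = Q * (4 * (p : ℝ) ^ A * (p : ℝ) ^ (-(s * N) + (d : ℝ) * (N - u i))) := by
            rw [Real.rpow_add hp0]
            ring
        _ ≤ Q * (0 + 5 * (p : ℝ) ^ A * (p : ℝ) ^ (-(s * u i))) := by
            rw [zero_add]
            gcongr
            · norm_num
            · nlinarith
        _ ≤ _ := by gcongr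
  -- the total cost is less than the number of candidates
  have htot : ∑ c ∈ Cs, ∑' i, ENNReal.ofReal (val c i) < ∑ _c ∈ Cs, (1 : ℝ≥0∞) := by
    set V : ℝ := (p : ℝ) ^ (-((d : ℝ) * l)) with hV
    have hV0 : 0 < V := by positivity
    have hsumκ : Summable fun i => if κ ≤ u i then (p : ℝ) ^ (-(s * u i)) else 0 := by
      refine Summable.of_nonneg_of_le (fun i => ?_) (fun i => ?_) hsum
      · split_ifs <;> positivity
      · split_ifs
        · exact le_rfl
        · positivity
    have h1 : ∑ c ∈ Cs, ∑' i, ENNReal.ofReal (val c i) ≤ ENNReal.ofReal Q *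
        (wt x u b l + ENNReal.ofReal (5 * (p : ℝ) ^ A) *
          ENNReal.ofReal (∑' i, if κ ≤ u i then (p : ℝ) ^ (-(s * u i)) else 0)) := by
      rw [← Summable.tsum_finsetSum fun _ _ => ENNReal.summable, ENNReal.ofReal_tsum_of_nonneg
        (fun i => by split_ifs <;> positivity) hsumκ, wt, ← ENNReal.tsum_mul_left,
        ← ENNReal.tsum_add, ← ENNReal.tsum_mul_left]
      refine ENNReal.tsum_le_tsum fun i => ?_
      rw [← ENNReal.ofReal_sum_of_nonneg fun c _ => hval0 c i]
      refine (ENNReal.ofReal_le_ofReal (hterm i)).trans ?_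
      rw [ENNReal.ofReal_mul hQ0.le, ENNReal.ofReal_add (by split_ifs <;> positivity)
        (by split_ifs <;> positivity), ENNReal.ofReal_mul (by positivity)]
      have e : ENNReal.ofReal (if x i ∈ pball b l then (p : ℝ) ^ (-((d : ℝ) * u i)) else 0) =
          if x i ∈ pball b l then ENNReal.ofReal ((p : ℝ) ^ (-((d : ℝ) * u i))) else 0 := by
        split_ifs
        · rfl
        · exact ENNReal.ofReal_zero
      rw [e]
    have h2 : wt x u b l + ENNReal.ofReal (5 * (p : ℝ) ^ A) *
        ENNReal.ofReal (∑' i, if κ ≤ u i then (p : ℝ) ^ (-(s * u i)) else 0) <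
        ENNReal.ofReal (V / 4) + ENNReal.ofReal (V / 4) := by
      refine ENNReal.add_lt_add_of_lt_of_le
        (ENNReal.mul_ne_top ENNReal.ofReal_ne_top ENNReal.ofReal_ne_top) h.2 ?_
      rw [← ENNReal.ofReal_mul (by positivity)]
      refine ENNReal.ofReal_le_ofReal ?_
      have h3 := (hG κ (by omega)).le
      calc _ ≤ 5 * (p : ℝ) ^ A * (V / (20 * (p : ℝ) ^ A)) := by gcongr
        _ = V / 4 := by
          field_simp
          norm_num
    have h3 : Q * (V / 4 + V / 4) ≤ (Cs.card : ℝ) := by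
      have e1 : Cs.card = T.card * p ^ ∑ j, (N - t j) := by
        rw [Finset.card_product, Fintype.card_piFinset]
        simp only [Finset.card_range]
        rw [Finset.prod_pow_eq_pow_sum]
      have e2 : ((cells p ρ l).card : ℝ) * (p : ℝ) ^ (d * l) = (p : ℝ) ^ ∑ j, ρ j := by
        exact_mod_cast card_cells_mul hlρ
      have e3 : V = ((p : ℝ) ^ (d * l))⁻¹ := by
        rw [hV, Real.rpow_neg hp0.le, ← Nat.cast_mul, Real.rpow_natCast]
      have e4 : ((cells p ρ l).card : ℝ) ≤ 2 * T.card := by exact_mod_cast hTcard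
      rw [e1, hQ, pow_add, ← e2, e3]
      push_cast
      have e5 : (0 : ℝ) < (p : ℝ) ^ (d * l) := by positivity
      have e6 : (0 : ℝ) < (p : ℝ) ^ (∑ j, (N - t j)) := by positivity
      calc _ = ((cells p ρ l).card : ℝ) / 2 * (p : ℝ) ^ (∑ j, (N - t j)) := by
            field_simp
            ring
        _ ≤ _ := by
          gcongr
          linarith
    refine h1.trans_lt ?_
    calc _ < ENNReal.ofReal Q * (ENNReal.ofReal (V / 4) + ENNReal.ofReal (V / 4)) :=
          ENNReal.mul_lt_mul_right (ENNReal.ofReal_pos.2 hQ0).ne' ENNReal.ofReal_ne_top h2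
      _ = ENNReal.ofReal (Q * (V / 4 + V / 4)) := by
          rw [ENNReal.ofReal_mul hQ0.le, ENNReal.ofReal_add (by positivity) (by positivity)]
      _ ≤ ENNReal.ofReal (Cs.card : ℝ) := ENNReal.ofReal_le_ofReal h3
      _ = _ := by rw [ENNReal.ofReal_natCast, Finset.sum_const, nsmul_eq_mul, mul_one]
  obtain ⟨c, hc, hc1⟩ := Finset.exists_lt_of_sum_lt htot
  have hno : ∀ i, u i ≤ N → x i ∉ pball (ctr c) (u i) := by
    intro i hi hx
    have h1 := (ENNReal.le_tsum i).trans_lt hc1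
    simp only [val, if_pos hi, if_pos hx, ENNReal.ofReal_one, lt_irrefl] at h1
  refine ⟨ctr c, N, ⟨hno, ?_⟩, hlN, fun y hy => pball_trans le_rfl (hctr c hc) (pball_mono hlN.le hy),
    g, by omega, fun y hy => ?_⟩
  · have hW : 0 < (p : ℝ) ^ (-((d : ℝ) * N)) / 4 := by positivity
    calc wt x u (ctr c) N
        ≤ ∑' i, ENNReal.ofReal ((p : ℝ) ^ (-((d : ℝ) * N)) / 4) * ENNReal.ofReal (val c i) := by
          refine ENNReal.tsum_le_tsum fun i => ?_
          split_ifs with hx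
          · have hi : ¬ u i ≤ N := fun hi => hno i hi (pball_mono hi hx)
            simp only [val, if_neg hi, if_pos hx]
            rw [← ENNReal.ofReal_mul hW.le]
            refine ENNReal.ofReal_le_ofReal (le_of_eq ?_)
            have e : -((d : ℝ) * u i) = -((d : ℝ) * N) + (d : ℝ) * (N - u i) := by ring
            rw [e, Real.rpow_add hp0]
            ring
          · exact zero_le
      _ = ENNReal.ofReal ((p : ℝ) ^ (-((d : ℝ) * N)) / 4) * ∑' i, ENNReal.ofReal (val c i) :=
          ENNReal.tsum_mul_left
      _ < ENNReal.ofReal ((p : ℝ) ^ (-((d : ℝ) * N)) / 4) * 1 :=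
          ENNReal.mul_lt_mul_right (ENNReal.ofReal_pos.2 hW).ne' ENNReal.ofReal_ne_top hc1
      _ = _ := mul_one _
  · refine (hz _ (Finset.mem_product.1 hc).1).2 y fun j => ?_
    have h1 := (pow_dvd_pow (p : ℤ_[p]) (htN j)).trans (hy j)
    have h2 := dvd_add h1 (Dvd.intro (c.2 j : ℤ_[p]) rfl : (p : ℤ_[p]) ^ t j ∣ _)
    convert h2 using 1
    simp only [ctr]
    ring

end Mass

/-! ### Infinite Hausdorff measure of limsup sets -/

section Limit

variable {p : ℕ} [hp : Fact p.Prime] {d : ℕ}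

/-- A sequence of balls of finite total `s`-dimensional size and small total volume does not cover the
points that lie in infinitely many of the `F g`: iterate `Free.exists_next`. -/
lemma LocUbiq.exists_frequently {F : ℕ → Set (Fin d → ℤ_[p])} {s : ℝ} {A : ℕ} (hF : LocUbiq F s A)
    (hsd : s ≤ d) {x : ℕ → Fin d → ℤ_[p]} {u : ℕ → ℕ}
    (hsum : Summable fun i => (p : ℝ) ^ (-(s * u i)))
    (hvol : ∑' i, ENNReal.ofReal ((p : ℝ) ^ (-((d : ℝ) * u i))) < ENNReal.ofReal (1 / 4)) :
    ∃ e, (∃ᶠ g in Filter.atTop, e ∈ F g) ∧ ∀ i, e ∉ pball (x i) (u i) := by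
  have h0 : Free x u 0 0 := by
    refine ⟨fun i hi _ => ?_, ?_⟩
    · have h1 := (ENNReal.le_tsum i).trans_lt hvol
      rw [Nat.le_zero.1 hi, ENNReal.ofReal_lt_ofReal_iff (by norm_num)] at h1
      norm_num at h1
    · refine lt_of_le_of_lt (ENNReal.tsum_le_tsum fun i => ?_) (hvol.trans_eq (by norm_num))
      split_ifs
      · exact le_rfl
      · exact zero_le
  have step : ∀ (B : {c : (Fin d → ℤ_[p]) × ℕ // Free x u c.1 c.2}) (g₀ : ℕ),
      ∃ B' : {c : (Fin d → ℤ_[p]) × ℕ // Free x u c.1 c.2}, B.1.2 < B'.1.2 ∧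
        pball B'.1.1 B'.1.2 ⊆ pball B.1.1 B.1.2 ∧ ∃ g ≥ g₀, pball B'.1.1 B'.1.2 ⊆ F g := by
    rintro ⟨⟨c, l⟩, hc⟩ g₀
    obtain ⟨c', l', h1, h2, h3, h4⟩ := Free.exists_next hF hsd hsum hc g₀
    exact ⟨⟨⟨c', l'⟩, h1⟩, h2, h3, h4⟩
  choose nxt hn1 hn2 hn3 using step
  let B : ℕ → {c : (Fin d → ℤ_[p]) × ℕ // Free x u c.1 c.2} :=
    fun n => Nat.rec ⟨⟨0, 0⟩, h0⟩ (fun n B => nxt B n) n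
  have hB : ∀ n, B (n + 1) = nxt (B n) n := fun n => rfl
  have hl : ∀ n, n ≤ (B n).1.2 := by
    intro n
    induction n with
    | zero => exact Nat.zero_le _
    | succ n ih =>
      have := hn1 (B n) n
      rw [hB]
      omega
  obtain ⟨e, he⟩ := IsCompact.nonempty_iInter_of_sequence_nonempty_isCompact_isClosed
    (fun n => pball (B n).1.1 (B n).1.2) (fun n => hn2 (B n) n)
    (fun n => ⟨_, mem_pball_self _ _⟩) (isClosed_pball _ _).isCompact (fun n => isClosed_pball _ _)
  rw [Set.mem_iInter] at he
  refine ⟨e, ?_, ?_⟩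
  · rw [Filter.frequently_atTop]
    intro n
    obtain ⟨g, hg, hsub⟩ := hn3 (B n) n
    exact ⟨g, hg, hsub (he (n + 1))⟩
  · intro i hi
    refine (B (u i)).2.1 i (hl _) ?_
    exact pball_trans (le_refl (u i)) (pball_mono (hl _) (he (u i))) (pball_comm hi)

/-- A locally ubiquitous sequence has a limsup set of infinite `s`-dimensional measure: otherwise it
would be covered by countably many balls of bounded `s`-dimensional size and arbitrarily small total
volume. -/
lemma LocUbiq.measure_eq_top {F : ℕ → Set (Fin d → ℤ_[p])} {s : ℝ} {A : ℕ} (hF : LocUbiq F s A)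
    (hs0 : 0 < s) (hsd : s < d) : μH[s] {e | ∃ᶠ g in Filter.atTop, e ∈ F g} = ∞ := by
  have hp0 : (0 : ℝ) < p := by exact_mod_cast hp.out.pos
  have hp1 : (1 : ℝ) < p := by exact_mod_cast hp.out.one_lt
  by_contra hfin
  set S := {e | ∃ᶠ g in Filter.atTop, e ∈ F g} with hS
  have hsum2 : Summable fun n : ℕ => ((2 : ℝ) ^ (-s)) ^ n := by
    refine summable_geometric_of_lt_one (by positivity) ?_
    exact Real.rpow_lt_one_of_one_lt_of_neg (by norm_num) (by linarith)
  set C : ℝ≥0∞ := ENNReal.ofReal ((p : ℝ) ^ s) *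
    ((μH[s] S + 1) + ∑' n : ℕ, ENNReal.ofReal (((2 : ℝ) ^ (-s)) ^ n)) with hC
  have hCfin : C ≠ ∞ := by
    refine ENNReal.mul_ne_top ENNReal.ofReal_ne_top (ENNReal.add_ne_top.2
      ⟨ENNReal.add_ne_top.2 ⟨hfin, ENNReal.one_ne_top⟩, ?_⟩)
    rw [← ENNReal.ofReal_tsum_of_nonneg (fun n => by positivity) hsum2]
    exact ENNReal.ofReal_ne_top
  obtain ⟨r, hr0, hr1, hr⟩ : ∃ r : ℝ, 0 < r ∧ r ≤ 1 ∧ ((p : ℝ) * r) ^ (d - s) * C.toReal < 1 / 4 := by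
    have h1 : Filter.Tendsto (fun r : ℝ => ((p : ℝ) * r) ^ ((d : ℝ) - s) * C.toReal) (nhds 0)
        (nhds (((p : ℝ) * 0) ^ ((d : ℝ) - s) * C.toReal)) := by
      refine Filter.Tendsto.mul_const _ ?_
      exact ((continuous_const.mul continuous_id).tendsto 0).rpow_const (Or.inr (by linarith))
    rw [mul_zero, Real.zero_rpow (by linarith), zero_mul] at h1
    have h2 := (h1.mono_left nhdsWithin_le_nhds).eventually_lt_const
      (show (0 : ℝ) < 1 / 4 by norm_num) (l := nhdsWithin (0 : ℝ) (Set.Ioi 0))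
    have h3 : ∀ᶠ r : ℝ in nhdsWithin 0 (Set.Ioi 0), r ≤ 1 :=
      nhdsWithin_le_nhds (eventually_le_nhds zero_lt_one)
    obtain ⟨r, h4, h5, h6⟩ := (h2.and (h3.and self_mem_nhdsWithin)).exists
    exact ⟨r, h6, h5, h4⟩
  have hcov : ∃ t : ℕ → Set (Fin d → ℤ_[p]), S ⊆ ⋃ n, t n ∧
      (∀ n, Metric.ediam (t n) ≤ ENNReal.ofReal r) ∧
      ∑' n, ⨆ _ : (t n).Nonempty, Metric.ediam (t n) ^ s < μH[s] S + 1 := by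
    have h1 : (⨅ (t : ℕ → Set (Fin d → ℤ_[p])) (_ : S ⊆ ⋃ n, t n)
        (_ : ∀ n, Metric.ediam (t n) ≤ ENNReal.ofReal r),
        ∑' n, ⨆ _ : (t n).Nonempty, Metric.ediam (t n) ^ s) < μH[s] S + 1 := by
      refine lt_of_le_of_lt ?_ (ENNReal.lt_add_right hfin one_ne_zero)
      rw [Measure.hausdorffMeasure_apply s S]
      exact le_iSup₂_of_le (ENNReal.ofReal r) (ENNReal.ofReal_pos.2 hr0) le_rfl
    simp only [iInf_lt_iff] at h1
    obtain ⟨t, h2, h3, h4⟩ := h1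
    exact ⟨t, h2, h3, h4⟩
  obtain ⟨t, ht1, ht2, ht3⟩ := hcov
  -- enclose the `n`-th set in a ball of radius comparable to `max (diam, r / 2 ^ n)`
  have hballs : ∀ n, ∃ (x : Fin d → ℤ_[p]) (u : ℕ), t n ⊆ pball x u ∧ (p : ℝ) ^ (-(u : ℝ)) ≤ p * r ∧
      ENNReal.ofReal ((p : ℝ) ^ (-(s * u))) ≤ ENNReal.ofReal ((p : ℝ) ^ s) *
        ((⨆ _ : (t n).Nonempty, Metric.ediam (t n) ^ s) + ENNReal.ofReal (((2 : ℝ) ^ (-s)) ^ n)) := by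
    intro n
    have hδfin : Metric.ediam (t n) ≠ ∞ := ((ht2 n).trans_lt ENNReal.ofReal_lt_top).ne
    obtain ⟨δ, hδ⟩ : ∃ δ, δ = (Metric.ediam (t n)).toReal := ⟨_, rfl⟩
    have hδ' : Metric.ediam (t n) = ENNReal.ofReal δ := by rw [hδ, ENNReal.ofReal_toReal hδfin]
    have hδ0 : 0 ≤ δ := by rw [hδ]; exact ENNReal.toReal_nonneg
    have hδr : δ ≤ r := by
      have := ht2 n
      rwa [hδ', ENNReal.ofReal_le_ofReal_iff hr0.le] at this
    have h2n : (1 / 2 : ℝ) ^ n ≤ 1 := pow_le_one₀ (by norm_num) (by norm_num)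
    have h2n0 : (0 : ℝ) < (1 / 2 : ℝ) ^ n := by positivity
    have hε0 : 0 < max δ (r * (1 / 2) ^ n) := lt_max_of_lt_right (by positivity)
    have hεr : max δ (r * (1 / 2) ^ n) ≤ r := max_le hδr (by nlinarith)
    obtain ⟨u, hu1, hu2⟩ := exists_nat_pow_near_of_lt_one hε0 (hεr.trans hr1)
      (inv_pos.2 hp0) (inv_lt_one_of_one_lt₀ hp1)
    have hpu : (p : ℝ) ^ (-(u : ℝ)) = (p : ℝ)⁻¹ ^ u := by
      rw [Real.rpow_neg hp0.le, Real.rpow_natCast, inv_pow]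
    have hu3 : (p : ℝ) ^ (-(u : ℝ)) ≤ p * max δ (r * (1 / 2) ^ n) := by
      rw [hpu]
      rw [pow_succ, ← div_eq_mul_inv, div_lt_iff₀ hp0] at hu1
      linarith
    rw [← hpu] at hu2
    have hx : ∃ x, t n ⊆ pball x u := by
      rcases (t n).eq_empty_or_nonempty with he | ⟨x, hx⟩
      · exact ⟨0, by rw [he]; exact Set.empty_subset _⟩
      · refine ⟨x, fun y hy => ?_⟩
        rw [pball_eq_closedBall, Metric.mem_closedBall]
        refine le_trans ?_ ((le_max_left _ _).trans hu2)
        have := Metric.edist_le_ediam_of_mem hy hx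
        rwa [hδ', edist_dist, ENNReal.ofReal_le_ofReal_iff hδ0] at this
    obtain ⟨x, hx⟩ := hx
    refine ⟨x, u, hx, hu3.trans (by gcongr), ?_⟩
    have e1 : (⨆ _ : (t n).Nonempty, Metric.ediam (t n) ^ s) = ENNReal.ofReal (δ ^ s) := by
      rcases (t n).eq_empty_or_nonempty with he | hne
      · have : δ = 0 := by rw [hδ, he]; simp
        rw [this, Real.zero_rpow hs0.ne', he]
        simp
      · simp only [hne, iSup_pos]
        rw [hδ', ENNReal.ofReal_rpow_of_nonneg hδ0 hs0.le]
    have e2 : ((2 : ℝ) ^ (-s)) ^ n = ((1 / 2) ^ n) ^ s := by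
      rw [← Real.rpow_natCast, ← Real.rpow_mul (by norm_num), ← Real.rpow_natCast, ← Real.rpow_mul
        (by norm_num), one_div, Real.inv_rpow (by norm_num), ← Real.rpow_neg (by norm_num)]
      congr 1
      ring
    rw [e1, e2, ← ENNReal.ofReal_add (by positivity) (by positivity), ← ENNReal.ofReal_mul
      (by positivity)]
    refine ENNReal.ofReal_le_ofReal ?_
    calc (p : ℝ) ^ (-(s * u)) = ((p : ℝ) ^ (-(u : ℝ))) ^ s := by
          rw [← Real.rpow_mul hp0.le]
          congr 1
          ring
      _ ≤ (p * max δ (r * (1 / 2) ^ n)) ^ s := by gcongr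
      _ ≤ (p * max δ ((1 / 2) ^ n)) ^ s := by
          gcongr
          nlinarith
      _ = (p : ℝ) ^ s * (max δ ((1 / 2) ^ n)) ^ s := by
          rw [Real.mul_rpow hp0.le (by positivity)]
      _ ≤ (p : ℝ) ^ s * (δ ^ s + ((1 / 2) ^ n) ^ s) := by
          gcongr
          have h3 : 0 ≤ δ ^ s := by positivity
          have h4 : 0 ≤ ((1 / 2 : ℝ) ^ n) ^ s := by positivity
          rcases max_choice δ ((1 / 2 : ℝ) ^ n) with h | h <;> rw [h] <;> linarith
  choose x u hxu hur hus using hballs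
  have hsumC : ∑' n, ENNReal.ofReal ((p : ℝ) ^ (-(s * u n))) ≤ C := by
    refine (ENNReal.tsum_le_tsum hus).trans ?_
    rw [ENNReal.tsum_mul_left, ENNReal.tsum_add, hC]
    gcongr
  have hsum : Summable fun n => (p : ℝ) ^ (-(s * u n)) := by
    have h1 := ENNReal.summable_toReal (hsumC.trans_lt hCfin.lt_top).ne
    refine h1.congr fun n => ENNReal.toReal_ofReal (by positivity)
  have hvol : ∑' n, ENNReal.ofReal ((p : ℝ) ^ (-((d : ℝ) * u n))) < ENNReal.ofReal (1 / 4) := by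
    calc _ ≤ ∑' n, ENNReal.ofReal (((p : ℝ) * r) ^ ((d : ℝ) - s)) *
          ENNReal.ofReal ((p : ℝ) ^ (-(s * u n))) := by
          refine ENNReal.tsum_le_tsum fun n => ?_
          rw [← ENNReal.ofReal_mul (by positivity)]
          refine ENNReal.ofReal_le_ofReal ?_
          calc (p : ℝ) ^ (-((d : ℝ) * u n)) =
                ((p : ℝ) ^ (-(u n : ℝ))) ^ ((d : ℝ) - s) * (p : ℝ) ^ (-(s * u n)) := by
                rw [← Real.rpow_mul hp0.le, ← Real.rpow_add hp0]
                congr 1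
                ring
            _ ≤ _ := by
              gcongr
              exact hur n
      _ = ENNReal.ofReal (((p : ℝ) * r) ^ ((d : ℝ) - s)) *
          ∑' n, ENNReal.ofReal ((p : ℝ) ^ (-(s * u n))) := ENNReal.tsum_mul_left
      _ ≤ ENNReal.ofReal (((p : ℝ) * r) ^ ((d : ℝ) - s)) * ENNReal.ofReal C.toReal := by
          rw [ENNReal.ofReal_toReal hCfin]
          gcongr
      _ < _ := by
          rw [← ENNReal.ofReal_mul (by positivity)]
          exact (ENNReal.ofReal_lt_ofReal_iff (by norm_num)).2 hr
  obtain ⟨e, he, hex⟩ := hF.exists_frequently hsd.le hsum hvol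
  obtain ⟨n, hn⟩ := Set.mem_iUnion.1 (ht1 (show e ∈ S from he))
  exact hex n (hxu n hn)

end Limit

/-! ### Local ubiquity of the approximable points -/

section Apply

/-- Points at which the dimension formula is sampled suffice: if the inequality
`s * v ≤ K + ∑ j, max (v - τ j) 0` holds at `v = τ i` for every `i`, then it holds everywhere, since
both sides are piecewise linear, with the kinks of the difference at the `τ i`. -/
lemma mul_le_of_le_at_kinks {d : ℕ} {τ : Fin d → ℝ} {s K : ℝ} (hs0 : 0 < s) (hsd : s < d)
    (h : ∀ i, s * τ i ≤ K + ∑ j, max (τ i - τ j) 0) (v : ℝ) :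
    s * v ≤ K + ∑ j, max (v - τ j) 0 := by
  set J := Finset.univ.filter fun j => τ j ≤ v with hJ
  have hcard : ∀ w : ℝ, ∑ j, (if τ j ≤ v then w else 0) = J.card * w := fun w => by
    rw [← Finset.sum_filter, Finset.sum_const, nsmul_eq_mul]
  rcases le_or_gt s (J.card : ℝ) with hc | hc
  · have hne : J.Nonempty := by
      rw [← Finset.card_pos]
      exact_mod_cast hs0.trans_le hc
    obtain ⟨i, hi, hmax⟩ := J.exists_max_image τ hne
    have hiv : τ i ≤ v := (Finset.mem_filter.1 hi).2
    have h1 : ∑ j, max (τ i - τ j) 0 + ∑ j, (if τ j ≤ v then v - τ i else 0) ≤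
        ∑ j, max (v - τ j) 0 := by
      rw [← Finset.sum_add_distrib]
      refine Finset.sum_le_sum fun j _ => ?_
      split_ifs with hj
      · have h2 := hmax j (Finset.mem_filter.2 ⟨Finset.mem_univ _, hj⟩)
        rw [max_eq_left (by linarith), max_eq_left (by linarith)]
        linarith
      · rw [max_eq_right (by linarith)]
        simp
    rw [hcard] at h1
    have := h i
    nlinarith
  · have hne : (Finset.univ.filter fun j => v < τ j).Nonempty := by
      by_contra hne
      rw [Finset.not_nonempty_iff_eq_empty, Finset.filter_eq_empty_iff] at hne
      have : J = Finset.univ := by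
        refine Finset.filter_true_of_mem fun j hj => not_lt.1 (hne hj)
      rw [this] at hc
      simp at hc
      linarith
    obtain ⟨i, hi, hmin⟩ := Finset.exists_min_image _ τ hne
    have hiv : v < τ i := (Finset.mem_filter.1 hi).2
    have h1 : ∑ j, max (τ i - τ j) 0 ≤
        ∑ j, max (v - τ j) 0 + ∑ j, (if τ j ≤ v then τ i - v else 0) := by
      rw [← Finset.sum_add_distrib]
      refine Finset.sum_le_sum fun j _ => ?_
      split_ifs with hj
      · rw [max_eq_left (by linarith), max_eq_left (by linarith)]
        linarith
      · have h2 := hmin j (Finset.mem_filter.2 ⟨Finset.mem_univ _, not_le.1 hj⟩)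
        rw [max_eq_right (by linarith)]
        simp
    rw [hcard] at h1
    have := h i
    nlinarith

variable {p : ℕ} [hp : Fact p.Prime] {d m : ℕ}

lemma norm_natCast_eq_one {q : ℕ} (hq : ¬ p ∣ q) : ‖(q : ℤ_[p])‖ = 1 := by
  refine le_antisymm (PadicInt.norm_le_one _) (not_lt.1 fun h => hq ?_)
  have := (PadicInt.norm_int_lt_one_iff_dvd (p := p) (q : ℤ)).1 (by exact_mod_cast h)
  exact_mod_cast this

lemma norm_sub_div {q : ℕ} (hq : ¬ p ∣ q) (x : ℤ_[p]) (a : ℤ) :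
    ‖(x : ℚ_[p]) - (a : ℚ_[p]) / (q : ℚ_[p])‖ = ‖(q : ℤ_[p]) * x - (a : ℤ_[p])‖ := by
  have h1 := norm_natCast_eq_one hq
  rw [PadicInt.norm_def] at h1
  have h0 : (q : ℚ_[p]) ≠ 0 := by
    intro h
    simp [h] at h1
  have e : (x : ℚ_[p]) - (a : ℚ_[p]) / (q : ℚ_[p]) =
      (((q : ℤ_[p]) * x - (a : ℤ_[p]) : ℤ_[p]) : ℚ_[p]) / (((q : ℤ_[p]) : ℚ_[p])) := by
    push_cast
    field_simp
  rw [e, norm_div, h1, div_one, PadicInt.norm_def]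

lemma norm_sub_div_lt {q g t : ℕ} (hq : ¬ p ∣ q) (hqg : q ≤ p ^ (g + 3)) {τ : ℝ} (hτ : 0 < τ)
    (ht : ((g : ℝ) + 3) * τ < t) {x : ℤ_[p]} {a : ℤ}
    (h : (p : ℤ_[p]) ^ t ∣ (q : ℤ_[p]) * x - (a : ℤ_[p])) :
    ‖(x : ℚ_[p]) - (a : ℚ_[p]) / (q : ℚ_[p])‖ < (q : ℝ) ^ (-τ) := by
  have hp0 : (0 : ℝ) < p := by exact_mod_cast hp.out.pos
  have hp1 : (1 : ℝ) < p := by exact_mod_cast hp.out.one_lt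
  have hq0 : (0 : ℝ) < q := by
    rcases Nat.eq_zero_or_pos q with h0 | h0
    · exact absurd (h0 ▸ dvd_zero p) hq
    · exact_mod_cast h0
  rw [norm_sub_div hq]
  calc _ ≤ (p : ℝ) ^ (-(t : ℝ)) := norm_le_iff_dvd.2 h
    _ < (p : ℝ) ^ (((g + 3 : ℕ) : ℝ) * -τ) := by
        refine Real.rpow_lt_rpow_of_exponent_lt hp1 ?_
        push_cast
        linarith
    _ = ((p : ℝ) ^ (g + 3)) ^ (-τ) := by rw [Real.rpow_mul hp0.le, Real.rpow_natCast]
    _ ≤ _ := Real.rpow_le_rpow_of_nonpos hq0 (by exact_mod_cast hqg) (by linarith)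

/-- The points of the hyperplane (identified with `ℤ_p^d`) that are approximable with some
denominator of size at least `p ^ g`. -/
def approxSet (α : Fin m → ℤ_[p]) (τ : Fin (d + m) → ℝ) (g : ℕ) : Set (Fin d → ℤ_[p]) :=
  {x | ∃ q₀ : ℕ, p ^ g ≤ q₀ ∧ Fin.append x α ∈ Aset τ q₀}

lemma frequently_approxSet {α : Fin m → ℤ_[p]} {τ : Fin (d + m) → ℝ} {x : Fin d → ℤ_[p]}
    (h : ∃ᶠ g in Filter.atTop, x ∈ approxSet α τ g) : Fin.append x α ∈ Wset τ := by
  rw [Wset, Set.mem_iInter]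
  intro Q
  obtain ⟨g, hg, q₀, hq₀, hx⟩ := (Filter.frequently_atTop.1 h) Q
  refine Set.mem_iUnion₂.2 ⟨q₀, ?_, hx⟩
  exact ((hg.trans (Nat.lt_pow_self hp.out.one_lt).le)).trans hq₀

/-- The point of `approxSet` obtained from an integer vector of the lattice. -/
lemma mem_approxSet {α : Fin m → ℤ_[p]} {τ : Fin (d + m) → ℝ} (hτ : ∀ i, 0 < τ i) {g : ℕ}
    {t : Fin d → ℕ} {k : Fin m → ℕ} (ht : ∀ j, ((g : ℝ) + 3) * τ (Fin.castAdd m j) < t j)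
    (hk : ∀ i, ((g : ℝ) + 3) * τ (Fin.natAdd d i) < k i) {q : ℕ} {v : Fin d ⊕ Fin m → ℤ}
    (hq1 : p ^ g ≤ q) (hq2 : q ≤ p ^ (g + 3)) (hpq : ¬ p ∣ q)
    (hv : ∀ o, |v o| ≤ (q : ℤ) ∧ Int.gcd (v o) q = 1) {x : Fin d → ℤ_[p]}
    (hx : ∀ j, (p : ℤ_[p]) ^ t j ∣ (q : ℤ_[p]) * x j - (v (Sum.inl j) : ℤ_[p]))
    (hα : ∀ i, (p : ℤ_[p]) ^ k i ∣ (q : ℤ_[p]) * α i - (v (Sum.inr i) : ℤ_[p])) :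
    x ∈ approxSet α τ g := by
  refine ⟨q, hq1, Set.mem_iUnion₂.2
    ⟨Fin.append (fun j => v (Sum.inl j)) fun i => v (Sum.inr i), fun i => ?_, fun i => ?_⟩⟩
  · refine Fin.addCases (fun j => ?_) (fun i => ?_) i
    · rw [Fin.append_left]; exact hv _
    · rw [Fin.append_right]; exact hv _
  · refine Fin.addCases (fun j => ?_) (fun i => ?_) i
    · rw [Fin.append_left, Fin.append_left]
      exact norm_sub_div_lt hpq hq2 (hτ _) (ht j) (hx j)
    · rw [Fin.append_right, Fin.append_right]
      exact norm_sub_div_lt hpq hq2 (hτ _) (hk i) (hα i)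

set_option maxHeartbeats 1000000 in
/-- Local ubiquity of the approximable points of the hyperplane. The precision `κ` is chosen such
that the boxes in `exists_half_good` have about the critical volume `p ^ (-(d + m + 1) g)`. -/
lemma locUbiq_approxSet (hm : 1 ≤ m) {α : Fin m → ℤ_[p]} (hα : dioExp α = (m : ℝ) + 1)
    {τ : Fin (d + m) → ℝ} (h₁ : ∑ i : Fin m, τ (Fin.natAdd d i) < (m : ℝ) + 1)
    (h₂ : ((d : ℝ) + m) + 1 < ∑ i, τ i) (h₃ : ∀ i, 1 < τ i) {s : ℝ}
    (hs : ∀ v : ℝ, s * v ≤ ((d : ℝ) + m + 1 - ∑ i : Fin m, τ (Fin.natAdd d i)) +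
      ∑ j : Fin d, max (v - τ (Fin.castAdd m j)) 0) :
    ∃ A : ℕ, LocUbiq (approxSet α τ) s A := by
  set σ : Fin m → ℝ := fun i => τ (Fin.natAdd d i) with hσ
  set θ : Fin d → ℝ := fun j => τ (Fin.castAdd m j) with hθ
  have hσ1 : ∀ i, 1 < σ i := fun i => h₃ _
  have hθ1 : ∀ j, 1 < θ j := fun j => h₃ _
  have h₂' : ((d : ℝ) + m) + 1 < ∑ j, θ j + ∑ i, σ i := by rwa [Fin.sum_univ_add] at h₂
  have hσsum : ∀ i, σ i ≤ ∑ i, σ i :=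
    fun i => Finset.single_le_sum (fun i _ => (zero_lt_one.trans (hσ1 i)).le) (Finset.mem_univ i)
  set c : ℝ := 3 * ((m : ℝ) + 1) + 1 with hc
  obtain ⟨E, hE⟩ := exists_half_good hm hα hσ1 h₁ c d
  refine ⟨⌈(m * c + (d + m + 1) * E + d) + ∑ j, (3 * θ j + 1)⌉₊, fun b l => ?_⟩
  filter_upwards [hE b l, Filter.eventually_ge_atTop 1,
    eventually_le_mul (sub_pos.2 h₁) (m * c + (d + m + 1) * E)] with g hEg hg1 hg2
  have hg0 : (0 : ℝ) < g := by exact_mod_cast hg1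
  set k : Fin m → ℕ := fun i => ⌊((g : ℝ) + 3) * σ i⌋₊ + 1 with hk
  set t : Fin d → ℕ := fun j => ⌊((g : ℝ) + 3) * θ j⌋₊ + 1 with ht
  have hk1 : ∀ i, ((g : ℝ) + 3) * σ i < k i := fun i => by
    simp only [hk]; push_cast; exact Nat.lt_floor_add_one _
  have hk2 : ∀ i, (k i : ℝ) ≤ ((g : ℝ) + 3) * σ i + 1 := fun i => by
    simp only [hk]; push_cast
    have := Nat.floor_le (show 0 ≤ ((g : ℝ) + 3) * σ i by have := hσ1 i; positivity)
    linarith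
  have ht1 : ∀ j, ((g : ℝ) + 3) * θ j < t j := fun i => by
    simp only [ht]; push_cast; exact Nat.lt_floor_add_one _
  have ht2 : ∀ j, (t j : ℝ) ≤ ((g : ℝ) + 3) * θ j + 1 := fun i => by
    simp only [ht]; push_cast
    have := Nat.floor_le (show 0 ≤ ((g : ℝ) + 3) * θ i by have := hθ1 i; positivity)
    linarith
  have hkc : ∀ i, |(k i : ℝ) - g * σ i| ≤ c := by
    intro i
    have h1 := hk1 i
    have h2 := hk2 i
    have h3 := hσ1 i
    have h4 := hσsum i
    rw [abs_le]
    constructor <;> linarith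
  have hgt : ∀ j, g ≤ t j := fun j => by
    have h1 := ht1 j
    have h2 := hθ1 j
    have : (g : ℝ) ≤ t j := by nlinarith
    exact_mod_cast this
  have hksum : ∑ i, (k i : ℝ) ≤ g * ∑ i, σ i + m * c := by
    calc ∑ i, (k i : ℝ) ≤ ∑ i, (g * σ i + c) :=
          Finset.sum_le_sum fun i _ => by linarith [(abs_le.1 (hkc i)).2]
      _ = _ := by rw [Finset.sum_add_distrib, ← Finset.mul_sum]; simp
  -- choice of the precision
  let f : ℕ → ℕ := fun κ => ∑ j, min κ (t j) + ∑ i, k i + (d + m + 1) * E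
  have hf1 : ∀ κ, f (κ + 1) ≤ f κ + d := by
    intro κ
    have : ∑ j, min (κ + 1) (t j) ≤ ∑ j, (min κ (t j) + 1) := Finset.sum_le_sum fun j _ => by omega
    rw [Finset.sum_add_distrib] at this
    simp at this
    simp only [f]
    omega
  have hfg : f g ≤ (d + m + 1) * g := by
    have h1 : ∑ j, min g (t j) = d * g := by
      rw [Finset.sum_congr rfl fun j _ => min_eq_left (hgt j)]
      simp
    have : (f g : ℝ) ≤ ((d : ℝ) + m + 1) * g := by
      simp only [f]
      rw [h1]
      push_cast
      nlinarith
    exact_mod_cast this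
  have hftop : ∀ κ, (∀ j, t j ≤ κ) → (d + m + 1) * g < f κ := by
    intro κ hκ
    have h1 : ∑ j, min κ (t j) = ∑ j, t j := Finset.sum_congr rfl fun j _ => min_eq_right (hκ j)
    have h2 : ∑ j, ((g : ℝ) * θ j) ≤ ∑ j, (t j : ℝ) :=
      Finset.sum_le_sum fun j _ => by linarith [ht1 j, hθ1 j]
    have h3 : ∑ i, ((g : ℝ) * σ i) ≤ ∑ i, (k i : ℝ) :=
      Finset.sum_le_sum fun j _ => by linarith [hk1 j, hσ1 j]
    rw [← Finset.mul_sum] at h2 h3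
    have : ((d : ℝ) + m + 1) * g < f κ := by
      simp only [f]
      rw [h1]
      push_cast
      have h4 : 0 ≤ ((d : ℝ) + m + 1) * E := by positivity
      nlinarith
    exact_mod_cast this
  have hex : ∃ κ, (d + m + 1) * g < f κ :=
    ⟨∑ j, t j, hftop _ fun j => Finset.single_le_sum (fun _ _ => Nat.zero_le _) (Finset.mem_univ j)⟩
  have hfmono : Monotone f := fun a b hab => by
    simp only [f]
    gcongr
  obtain ⟨κ, hκ⟩ : ∃ κ, Nat.find hex = κ + 1 := by
    refine Nat.exists_eq_succ_of_ne_zero fun h0 => ?_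
    have h1 := Nat.find_spec hex
    rw [h0] at h1
    exact absurd (hfmono (Nat.zero_le g)) (by omega)
  have hκ1 : f κ ≤ (d + m + 1) * g := not_lt.1 (Nat.find_min hex (by omega))
  have hκ2 : (d + m + 1) * g < f (κ + 1) := hκ ▸ Nat.find_spec hex
  have hgκ : g ≤ κ := by
    by_contra! h
    have := hfmono (show κ + 1 ≤ g by omega)
    omega
  have hκN : κ ≤ ∑ j, t j := by
    by_contra! h
    have := hftop κ fun j => (Finset.single_le_sum (fun _ _ => Nat.zero_le _)
      (Finset.mem_univ j)).trans h.le
    omega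
  have hκ3 := hf1 κ
  obtain ⟨hlρ, T, hT, hTc, hTv⟩ := hEg k hkc (fun j => min κ (t j)) (fun j => le_min hgκ (hgt j))
    hκ1 (by simp only [f] at hκ2 hκ3; omega)
  refine ⟨κ, ∑ j, t j, fun j => min κ (t j), t, hgκ, hκN, hlρ, fun _ => rfl, fun j =>
    Finset.single_le_sum (fun _ _ => Nat.zero_le _) (Finset.mem_univ j), fun u _ => ?_,
    T, hT, hTc, fun y hy => ?_⟩
  · have h1 := hs ((u : ℝ) / g)
    have h2 : s * u ≤ g * ((d : ℝ) + m + 1 - ∑ i, σ i) + ∑ j, max ((u : ℝ) - g * θ j) 0 := by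
      calc s * u = g * (s * ((u : ℝ) / g)) := by field_simp
        _ ≤ g * (((d : ℝ) + m + 1 - ∑ i, σ i) + ∑ j, max ((u : ℝ) / g - θ j) 0) := by gcongr
        _ = _ := by
          rw [mul_add, Finset.mul_sum]
          congr 1
          refine Finset.sum_congr rfl fun j _ => ?_
          rw [mul_max_of_nonneg _ _ hg0.le, mul_zero, mul_sub, mul_div_cancel₀ _ hg0.ne']
    have h3 : ∑ j, max ((u : ℝ) - g * θ j) 0 ≤ ∑ j, ((u - t j : ℕ) : ℝ) + ∑ j, (3 * θ j + 1) := by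
      rw [← Finset.sum_add_distrib]
      refine Finset.sum_le_sum fun j _ => ?_
      have h4 := ht2 j
      have h5 := hθ1 j
      have h6 : (u : ℝ) ≤ ((u - t j : ℕ) : ℝ) + t j := by exact_mod_cast (by omega : u ≤ u - t j + t j)
      have h7 : (0 : ℝ) ≤ ((u - t j : ℕ) : ℝ) := Nat.cast_nonneg _
      refine max_le ?_ ?_ <;> linarith
    have h4 := Nat.le_ceil ((m * c + (d + m + 1) * E + d) + ∑ j, (3 * θ j + 1))
    have h5 : ((d : ℝ) + m + 1) * g ≤ ∑ j, ((min κ (t j) : ℕ) : ℝ) + ∑ i, (k i : ℝ) +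
        ((d : ℝ) + m + 1) * E + d := by
      have : (d + m + 1) * g ≤ f κ + d := by omega
      simp only [f] at this
      exact_mod_cast this
    rw [Nat.cast_add, Nat.cast_add, Nat.cast_sum, Nat.cast_sum]
    linarith
  · obtain ⟨v, hv0, hv1, hv2, hv3, hv4⟩ := hTv y hy
    have hp0 := hp.out.pos
    obtain ⟨q, hq⟩ := Int.eq_ofNat_of_zero_le ((by positivity : (0 : ℤ) ≤ (p : ℤ) ^ g).trans hv1)
    rw [lat_pt_eq_zero, hq] at hv0
    simp only [Int.ofNat_eq_natCast, Int.cast_natCast] at hv0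
    simp only [hq, Int.ofNat_eq_natCast] at hv1 hv2 hv3 hv4
    have hpq : ¬ p ∣ q := fun h => hv3 (Int.natCast_dvd_natCast.2 h)
    obtain ⟨w, hw⟩ := (PadicInt.isUnit_iff.2 (norm_natCast_eq_one hpq)).exists_right_inv
    refine ⟨fun j => w * (v (some (Sum.inl j)) : ℤ_[p]), fun j => ?_, fun x hx => ?_⟩
    · have h1 := (hv0.1 j).mul_left w
      rwa [mul_sub, ← mul_assoc, mul_comm w, hw, one_mul] at h1
    · refine mem_approxSet (v := fun o => v (some o)) (q := q) (fun i => zero_lt_one.trans (h₃ i))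
        ht1 hk1 (by exact_mod_cast hv1) (by exact_mod_cast hv2) hpq hv4 (fun j => ?_) hv0.2
      have h1 := (hx j).mul_left (q : ℤ_[p])
      rwa [mul_sub, ← mul_assoc, hw, one_mul] at h1

end Apply

/-! ### The upper bound for the dimension -/

section Upper

/-- The natural covers of a limsup set bound its Hausdorff dimension. -/
lemma dimH_le_of_frequently_mem {X ι : Type*} [MetricSpace X] [MeasurableSpace X] [BorelSpace X]
    {E : Set X} {s : ℝ} (hs : 0 ≤ s) (I : ℕ → Finset ι) (t : ℕ → ι → Set X)
    (hE : ∀ x ∈ E, ∃ᶠ g in Filter.atTop, ∃ i ∈ I g, x ∈ t g i) {D : ℕ → ℝ≥0∞} (hDa : Antitone D)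
    (hD0 : Filter.Tendsto D Filter.atTop (nhds 0)) (hD : ∀ g, ∀ i ∈ I g, Metric.ediam (t g i) ≤ D g)
    {C r : ℝ≥0∞} (hC : C ≠ ∞) (hr : r < 1)
    (hI : ∀ᶠ g in Filter.atTop, ((I g).card : ℝ≥0∞) * D g ^ s ≤ C * r ^ g) :
    dimH E ≤ ENNReal.ofReal s := by
  refine dimH_le_of_hausdorffMeasure_ne_top (d := s.toNNReal) ?_
  rw [Real.coe_toNNReal _ hs]
  have h1 := Measure.hausdorffMeasure_le_liminf_tsum (ι := fun n : ℕ => Σ g : ℕ, I (n + g)) s E D hD0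
    (fun n i => t (n + i.1) i.2) (Filter.Eventually.of_forall fun n i =>
      (hD _ _ i.2.2).trans (hDa (Nat.le_add_right _ _))) (Filter.Eventually.of_forall fun n x hx => by
      obtain ⟨g, hg, i, hi, hxi⟩ := (Filter.frequently_atTop.1 (hE x hx)) n
      obtain ⟨g, rfl⟩ := Nat.exists_eq_add_of_le hg
      exact Set.mem_iUnion.2 ⟨⟨g, i, hi⟩, hxi⟩)
  obtain ⟨G, hG⟩ := Filter.eventually_atTop.1 hI
  have h2 : ∀ n ≥ G, ∑' i : (Σ g : ℕ, I (n + g)), Metric.ediam (t (n + i.1) i.2) ^ s ≤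
      C * ∑' g : ℕ, r ^ g := by
    intro n hn
    rw [ENNReal.tsum_sigma', ← ENNReal.tsum_mul_left]
    refine ENNReal.tsum_le_tsum fun g => ?_
    calc ∑' i : I (n + g), Metric.ediam (t (n + g) i) ^ s ≤ ∑' _i : I (n + g), D (n + g) ^ s :=
          ENNReal.tsum_le_tsum fun i => ENNReal.rpow_le_rpow (hD _ _ i.2) hs
      _ = (I (n + g)).card * D (n + g) ^ s := by
          rw [tsum_fintype]
          simp
      _ ≤ C * r ^ (n + g) := hG _ (by omega)
      _ ≤ C * r ^ g := by
          refine mul_le_mul_right ?_ _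
          exact pow_le_pow_right_of_le_one' hr.le (by omega)
  refine (h1.trans_lt ?_).ne
  refine lt_of_le_of_lt (Filter.liminf_le_of_frequently_le' (x := C * ∑' g : ℕ, r ^ g)
    (Filter.Eventually.frequently ?_)) ?_
  · filter_upwards [Filter.eventually_ge_atTop G] with n hn using h2 n hn
  · refine ENNReal.mul_lt_top hC.lt_top ?_
    rw [ENNReal.tsum_geometric]
    exact ENNReal.inv_lt_top.2 (tsub_pos_of_lt hr)

variable {p : ℕ} [hp : Fact p.Prime] {d m : ℕ}

/-- A denominator for which some fraction with coprime numerator is close to a `p`-adic integer is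
prime to `p`. -/
lemma not_dvd_of_norm_sub_div_lt {q : ℕ} {a : ℤ} (hq : 1 ≤ q) (ha : Int.gcd a q = 1) {x : ℤ_[p]}
    {τ : ℝ} (hτ : 0 < τ) (h : ‖(x : ℚ_[p]) - (a : ℚ_[p]) / (q : ℚ_[p])‖ < (q : ℝ) ^ (-τ)) :
    ¬ p ∣ q := by
  intro hpq
  have hqlt : ‖(q : ℚ_[p])‖ < 1 := by
    have := (Padic.norm_intCast_lt_one_iff (p := p) (k := (q : ℤ))).2 (Int.natCast_dvd_natCast.2 hpq)
    simpa using this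
  have ha1 : ‖(a : ℚ_[p])‖ = 1 := by
    refine le_antisymm (Padic.norm_int_le_one a) (not_lt.1 fun h => ?_)
    have h1 := Padic.norm_intCast_lt_one_iff.1 h
    have h2 := Int.dvd_gcd h1 (Int.natCast_dvd_natCast.2 hpq)
    rw [ha] at h2
    exact hp.out.one_lt.ne' (Nat.dvd_one.1 h2)
  have hq0 : (q : ℚ_[p]) ≠ 0 := by exact_mod_cast (by omega : q ≠ 0)
  have h1 : ‖(x : ℚ_[p]) - (a : ℚ_[p]) / (q : ℚ_[p])‖ < 1 := by
    refine h.trans_le (Real.rpow_le_one_of_one_le_of_nonpos (by exact_mod_cast hq) (by linarith))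
  have h2 : ‖(a : ℚ_[p]) / (q : ℚ_[p])‖ ≤ 1 := by
    have e : (a : ℚ_[p]) / (q : ℚ_[p]) = x - (x - a / q) := by ring
    rw [e]
    refine (Padic.nonarchimedean (p := p) _ _).trans ?_ |>.trans' (le_of_eq (by rw [sub_eq_add_neg]))
    rw [norm_neg]
    exact max_le (PadicInt.norm_le_one x) h1.le
  rw [norm_div, ha1, div_le_one (norm_pos_iff.2 hq0)] at h2
  linarith

/-- The congruences that an approximable point satisfies. -/
lemma exists_lat_of_mem_Aset {α : Fin m → ℤ_[p]} {τ : Fin (d + m) → ℝ} (hτ : ∀ i, 0 < τ i)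
    (j₀ : Fin d) {x : Fin d → ℤ_[p]} {g q : ℕ} (hq1 : p ^ g ≤ q) (hq2 : q ≤ p ^ (g + 1))
    (hx : Fin.append x α ∈ Aset τ q) :
    ∃ z ∈ latBox (lat α fun i => ⌊(g : ℝ) * τ (Fin.natAdd d i)⌋₊) 0 (p ^ (g + 1)),
      ∃ w ∈ box (0 : Fin d → ℤ) (p ^ (g + 1)), ¬ (p : ℤ) ∣ z none ∧
        ∀ j, (p : ℤ_[p]) ^ ⌊(g : ℝ) * τ (Fin.castAdd m j)⌋₊ ∣
          (z none : ℤ_[p]) * x j - (w j : ℤ_[p]) := by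
  have hp0 : (0 : ℝ) < p := by exact_mod_cast hp.out.pos
  have hp1 : (1 : ℝ) ≤ p := by exact_mod_cast hp.out.one_le
  obtain ⟨v, hv, hxv⟩ := Set.mem_iUnion₂.1 hx
  have hq : 1 ≤ q := (Nat.one_le_pow _ _ hp.out.pos).trans hq1
  have hpq : ¬ p ∣ q := not_dvd_of_norm_sub_div_lt (hq) (hv (Fin.castAdd m j₀)).2 (hτ _)
    (hxv (Fin.castAdd m j₀))
  have key : ∀ i, (p : ℤ_[p]) ^ ⌊(g : ℝ) * τ i⌋₊ ∣
      (q : ℤ_[p]) * Fin.append x α i - (v i : ℤ_[p]) := by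
    intro i
    rw [← norm_le_iff_dvd, ← norm_sub_div hpq]
    refine (hxv i).le.trans ?_
    calc (q : ℝ) ^ (-(τ i)) ≤ ((p : ℝ) ^ g) ^ (-(τ i)) :=
          Real.rpow_le_rpow_of_nonpos (by positivity) (by exact_mod_cast hq1) (by linarith [hτ i])
      _ = (p : ℝ) ^ (-((g : ℝ) * τ i)) := by
          rw [← Real.rpow_natCast, ← Real.rpow_mul hp0.le]
          congr 1
          ring
      _ ≤ _ := by
          refine Real.rpow_le_rpow_of_exponent_le hp1 (neg_le_neg (Nat.floor_le ?_))
          have := hτ i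
          positivity
  have hbd : ∀ i, |v i| ≤ ((p ^ (g + 1) : ℕ) : ℤ) := fun i => (hv i).1.trans (by exact_mod_cast hq2)
  refine ⟨fun o => o.elim (q : ℤ) fun i => v (Fin.natAdd d i), mem_latBox.2 ⟨?_, ?_⟩,
    fun j => v (Fin.castAdd m j), mem_box.2 fun j => ?_, ?_, fun j => ?_⟩
  · rintro (_ | i)
    · simp only [Option.elim, Pi.zero_apply, sub_zero]
      rw [abs_of_nonneg (by positivity)]
      exact_mod_cast hq2
    · simp only [Option.elim, Pi.zero_apply, sub_zero]
      exact hbd _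
  · rw [lat_eq_zero]
    intro i
    have := key (Fin.natAdd d i)
    rw [Fin.append_right] at this
    simpa using this
  · simp only [Pi.zero_apply, sub_zero]
    exact hbd _
  · simp only [Option.elim]
    exact fun h => hpq (Int.natCast_dvd_natCast.1 h)
  · have := key (Fin.castAdd m j)
    rw [Fin.append_left] at this
    simpa using this

set_option maxHeartbeats 1000000 in
/-- Upper bound for the dimension. The points approximable with a denominator between `p ^ g` and
`p ^ (g + 1)` lie in boxes with sides about `p ^ (-g τ j)`; those sides longer than `p ^ (-g τ i₀)`
are subdivided, and the resulting balls of radius about `p ^ (-g τ i₀)` are counted. Since the lattice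
of `α` has small covering radius, it has as few points in large boxes as its covolume predicts. -/
lemma dimH_le_of_lt_mul (hm : 1 ≤ m) {α : Fin m → ℤ_[p]} (hα : dioExp α = (m : ℝ) + 1)
    {τ : Fin (d + m) → ℝ} (h₁ : ∑ i : Fin m, τ (Fin.natAdd d i) < (m : ℝ) + 1) (h₃ : ∀ i, 1 < τ i)
    (i₀ : Fin d) {s : ℝ} (hs : ((d : ℝ) + m + 1 - ∑ i : Fin m, τ (Fin.natAdd d i)) +
      ∑ j : Fin d, max (τ (Fin.castAdd m i₀) - τ (Fin.castAdd m j)) 0 < s * τ (Fin.castAdd m i₀)) :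
    dimH {x : Fin d → ℤ_[p] | Fin.append x α ∈ Wset τ} ≤ ENNReal.ofReal s := by
  have hp0 : (0 : ℝ) < p := by exact_mod_cast hp.out.pos
  have hp1 : (1 : ℝ) < p := by exact_mod_cast hp.out.one_lt
  set σ : Fin m → ℝ := fun i => τ (Fin.natAdd d i) with hσ
  set θ : Fin d → ℝ := fun j => τ (Fin.castAdd m j) with hθ
  have hσ1 : ∀ i, 1 < σ i := fun i => h₃ _
  have hθ1 : ∀ j, 1 < θ j := fun j => h₃ _
  set R : ℝ := ((d : ℝ) + m + 1 - ∑ i, σ i) + ∑ j, max (θ i₀ - θ j) 0 with hR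
  have hR0 : 0 < R := by
    have : 0 ≤ ∑ j, max (θ i₀ - θ j) 0 := Finset.sum_nonneg fun j _ => le_max_right _ _
    have : (0 : ℝ) ≤ d := Nat.cast_nonneg d
    linarith
  have hs0 : 0 < s := by
    by_contra! h
    have := hθ1 i₀
    have : s * θ i₀ ≤ 0 := mul_nonpos_of_nonpos_of_nonneg h (by linarith)
    linarith
  set t : ℕ → Fin d → ℕ := fun g j => ⌊(g : ℝ) * θ j⌋₊ with ht
  set k : ℕ → Fin m → ℕ := fun g i => ⌊(g : ℝ) * σ i⌋₊ with hk
  have ht1 : ∀ g j, (t g j : ℝ) ≤ g * θ j := fun g j => Nat.floor_le (by have := hθ1 j; positivity)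
  have ht2 : ∀ (g : ℕ) j, (g : ℝ) * θ j < t g j + 1 := fun g j => Nat.lt_floor_add_one _
  have hk1 : ∀ g i, (k g i : ℝ) ≤ g * σ i := fun g j => Nat.floor_le (by have := hσ1 j; positivity)
  have hk2 : ∀ (g : ℕ) i, (g : ℝ) * σ i < k g i + 1 := fun g j => Nat.lt_floor_add_one _
  let I : ℕ → Finset ((Option (Fin m) → ℤ) × (Fin d → ℤ) × (Fin d → ℕ)) := fun g =>
    ((latBox (lat α (k g)) 0 (p ^ (g + 1))).filter fun z => ¬ (p : ℤ) ∣ z none) ×ˢ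
      box 0 (p ^ (g + 1)) ×ˢ Fintype.piFinset fun j => Finset.range (p ^ (t g i₀ - t g j))
  let B : ℕ → (Option (Fin m) → ℤ) × (Fin d → ℤ) × (Fin d → ℕ) → Set (Fin d → ℤ_[p]) := fun g i =>
    {x | ∀ j, (p : ℤ_[p]) ^ t g i₀ ∣
      (i.1 none : ℤ_[p]) * x j - (i.2.1 j : ℤ_[p]) - (p : ℤ_[p]) ^ t g j * (i.2.2 j : ℤ_[p])}
  let D : ℕ → ℝ≥0∞ := fun g => ENNReal.ofReal (p * (p : ℝ) ^ (-(g * θ i₀)))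
  set C : ℝ := 5 ^ (d + m + 1) * (p : ℝ) ^ (((d : ℝ) + m + 1) + m + d + s) with hC
  set r : ℝ := (p : ℝ) ^ (R - s * θ i₀) with hr
  refine dimH_le_of_frequently_mem hs0.le I B ?_ (D := D) ?_ ?_ ?_ (C := ENNReal.ofReal C)
    (r := ENNReal.ofReal r) ENNReal.ofReal_ne_top ?_ ?_
  · intro x hx
    rw [Filter.frequently_atTop]
    intro G
    obtain ⟨q, hGq, hq⟩ := Set.mem_iUnion₂.1 (Set.mem_iInter.1 hx (p ^ G))
    have hq0 : q ≠ 0 := by have := Nat.one_le_pow G p hp.out.pos; omega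
    obtain ⟨z, hz, w, hw, hpz, hzw⟩ := exists_lat_of_mem_Aset (fun i => zero_lt_one.trans (h₃ i)) i₀
      (Nat.pow_log_le_self p hq0) (Nat.lt_pow_succ_log_self hp.out.one_lt q).le hq
    refine ⟨Nat.log p q, Nat.le_log_of_pow_le hp.out.one_lt hGq, ?_⟩
    set g := Nat.log p q with hg
    -- the remaining digits of the point, relative to the centre of its rectangle
    have hy : ∀ j, ∃ y : ℕ, y < p ^ (t g i₀ - t g j) ∧ (p : ℤ_[p]) ^ t g i₀ ∣
        (z none : ℤ_[p]) * x j - (w j : ℤ_[p]) - (p : ℤ_[p]) ^ t g j * (y : ℤ_[p]) := by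
      intro j
      obtain ⟨a, ha⟩ := hzw j
      obtain ⟨b, hb⟩ := exists_int_dvd_sub a (t g i₀ - t g j)
      have hpos : (0 : ℤ) < (p : ℤ) ^ (t g i₀ - t g j) := by have := hp.out.pos; positivity
      refine ⟨(b % (p : ℤ) ^ (t g i₀ - t g j)).toNat, ?_, ?_⟩
      · zify
        rw [Int.toNat_of_nonneg (Int.emod_nonneg _ hpos.ne')]
        exact Int.emod_lt_of_pos _ hpos
      · have e : (((b % (p : ℤ) ^ (t g i₀ - t g j)).toNat : ℕ) : ℤ_[p]) =
            ((b % (p : ℤ) ^ (t g i₀ - t g j) : ℤ) : ℤ_[p]) := by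
          rw [← Int.cast_natCast, Int.toNat_of_nonneg (Int.emod_nonneg _ hpos.ne')]
        rw [ha, e, ← mul_sub]
        have h1 : (p : ℤ_[p]) ^ (t g i₀ - t g j) ∣
            a - ((b % (p : ℤ) ^ (t g i₀ - t g j) : ℤ) : ℤ_[p]) := by
          have h2 : (p : ℤ_[p]) ^ (t g i₀ - t g j) ∣
              ((b - b % (p : ℤ) ^ (t g i₀ - t g j) : ℤ) : ℤ_[p]) := by
            have := Int.dvd_self_sub_emod (x := b) (m := (p : ℤ) ^ (t g i₀ - t g j))
            obtain ⟨e, he⟩ := this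
            rw [he]
            push_cast
            exact Dvd.intro _ rfl
          have h3 := dvd_add hb h2
          convert h3 using 1
          push_cast
          ring
        calc (p : ℤ_[p]) ^ t g i₀ ∣ (p : ℤ_[p]) ^ t g j * (p : ℤ_[p]) ^ (t g i₀ - t g j) := by
              rw [← pow_add]
              exact pow_dvd_pow _ (by omega)
          _ ∣ _ := mul_dvd_mul_left _ h1
    choose y hy1 hy2 using hy
    refine ⟨(z, w, y), ?_, hy2⟩
    exact Finset.mem_product.2 ⟨Finset.mem_filter.2 ⟨hz, hpz⟩, Finset.mem_product.2 ⟨hw,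
      Fintype.mem_piFinset.2 fun j => Finset.mem_range.2 (hy1 j)⟩⟩
  · intro g g' hgg'
    refine ENNReal.ofReal_le_ofReal ?_
    have := hθ1 i₀
    have h2 : (g : ℝ) ≤ g' := by exact_mod_cast hgg'
    have h3 := hp1.le
    gcongr
  · rw [← ENNReal.ofReal_zero]
    refine ENNReal.tendsto_ofReal ?_
    have h1 : Filter.Tendsto (fun g : ℕ => (p : ℝ) * ((p : ℝ) ^ (-θ i₀)) ^ g) Filter.atTop
        (nhds ((p : ℝ) * 0)) := by
      refine (tendsto_pow_atTop_nhds_zero_of_lt_one (by positivity) ?_).const_mul _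
      exact Real.rpow_lt_one_of_one_lt_of_neg hp1 (by linarith [hθ1 i₀])
    rw [mul_zero] at h1
    refine h1.congr fun g => ?_
    rw [← Real.rpow_natCast, ← Real.rpow_mul hp0.le]
    congr 2
    ring
  · rintro g ⟨z, w, y⟩ hi
    have hpz : ¬ (p : ℤ) ∣ z none := (Finset.mem_filter.1 (Finset.mem_product.1 hi).1).2
    have hz1 : ‖(z none : ℤ_[p])‖ = 1 := by
      refine le_antisymm (PadicInt.norm_le_one _) (not_lt.1 fun h => hpz ?_)
      exact PadicInt.norm_intCast_lt_one_iff.1 h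
    refine Metric.ediam_le fun x hx x' hx' => ?_
    rw [edist_dist]
    refine ENNReal.ofReal_le_ofReal ((dist_pi_le_iff (by positivity)).2 fun j => ?_)
    rw [dist_eq_norm, ← one_mul ‖x j - x' j‖, ← hz1, ← norm_mul]
    have h1 := dvd_sub (hx j) (hx' j)
    have h2 : (p : ℤ_[p]) ^ t g i₀ ∣ (z none : ℤ_[p]) * (x j - x' j) := by
      convert h1 using 1
      ring
    refine (norm_le_iff_dvd.2 h2).trans ?_
    calc (p : ℝ) ^ (-(t g i₀ : ℝ)) ≤ (p : ℝ) ^ (1 + -(g * θ i₀)) :=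
          Real.rpow_le_rpow_of_exponent_le hp1.le (by linarith [ht2 g i₀])
      _ = _ := by rw [Real.rpow_add hp0, Real.rpow_one]
  · rw [← ENNReal.ofReal_one]
    refine (ENNReal.ofReal_lt_ofReal_iff zero_lt_one).2 ?_
    exact Real.rpow_lt_one_of_one_lt_of_neg hp1 (by linarith)
  · obtain ⟨δ, hδ, hcov⟩ := exists_covers hm hα hσ1 h₁ 1
    filter_upwards [hcov] with g hg
    obtain ⟨L, hL1, hL2, hL⟩ := hg (k g) fun i => by
      rw [abs_le]; constructor <;> linarith [hk1 g i, hk2 g i]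
    have hLg : L ≤ p ^ (g + 1) := by
      calc L ≤ L * p ^ ⌊δ * g⌋₊ := Nat.le_mul_of_pos_right _ (by have := hp.out.pos; positivity)
        _ ≤ p ^ g := hL2
        _ ≤ p ^ (g + 1) := Nat.pow_le_pow_right hp.out.pos (by omega)
    have hP1 : 1 ≤ p ^ (g + 1) := Nat.one_le_pow _ _ hp.out.pos
    have h1 : (latBox (lat α (k g)) 0 (p ^ (g + 1))).card * p ^ ∑ i, k g i ≤
        (5 * p ^ (g + 1)) ^ (m + 1) := by
      have := card_latBox_mul_le hL 0 (p ^ (g + 1))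
      rw [card_lat, Fintype.card_option, Fintype.card_fin] at this
      exact this.trans (Nat.pow_le_pow_left (by omega) _)
    have h2 : (box (0 : Fin d → ℤ) (p ^ (g + 1))).card ≤ (5 * p ^ (g + 1)) ^ d := by
      rw [card_box, Fintype.card_fin]
      exact Nat.pow_le_pow_left (by omega) _
    have h3 : (I g).card * p ^ ∑ i, k g i ≤
        (5 * p ^ (g + 1)) ^ (d + m + 1) * p ^ ∑ j, (t g i₀ - t g j) := by
      have e : (Fintype.piFinset fun j => Finset.range (p ^ (t g i₀ - t g j))).card =
          p ^ ∑ j, (t g i₀ - t g j) := by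
        rw [Fintype.card_piFinset]
        simp only [Finset.card_range]
        rw [Finset.prod_pow_eq_pow_sum]
      simp only [I]
      rw [Finset.card_product, Finset.card_product, e]
      calc _ ≤ (latBox (lat α (k g)) 0 (p ^ (g + 1))).card * ((box (0 : Fin d → ℤ) (p ^ (g + 1))).card *
            p ^ ∑ j, (t g i₀ - t g j)) * p ^ ∑ i, k g i := by
            gcongr
            exact Finset.filter_subset _ _
        _ = ((latBox (lat α (k g)) 0 (p ^ (g + 1))).card * p ^ ∑ i, k g i) *
            (box (0 : Fin d → ℤ) (p ^ (g + 1))).card * p ^ ∑ j, (t g i₀ - t g j) := by ring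
        _ ≤ (5 * p ^ (g + 1)) ^ (m + 1) * (5 * p ^ (g + 1)) ^ d * p ^ ∑ j, (t g i₀ - t g j) := by
            gcongr
        _ = _ := by ring
    have h4 : ((I g).card : ℝ) * (p : ℝ) ^ ((∑ i, k g i : ℕ) : ℝ) ≤ 5 ^ (d + m + 1) *
        (p : ℝ) ^ (((d : ℝ) + m + 1) * (g + 1) + ((∑ j, (t g i₀ - t g j) : ℕ) : ℝ)) := by
      have e : (p : ℝ) ^ (((d : ℝ) + m + 1) * (g + 1) + ((∑ j, (t g i₀ - t g j) : ℕ) : ℝ)) =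
          (p : ℝ) ^ ((g + 1) * (d + m + 1)) * (p : ℝ) ^ (∑ j, (t g i₀ - t g j)) := by
        rw [Real.rpow_add hp0, Real.rpow_natCast, ← Real.rpow_natCast p ((g + 1) * (d + m + 1))]
        congr 2
        push_cast
        ring
      rw [e, Real.rpow_natCast, pow_mul, ← mul_assoc, ← mul_pow]
      have := (Nat.cast_le (α := ℝ)).2 h3
      rwa [Nat.cast_mul, Nat.cast_mul, Nat.cast_pow, Nat.cast_pow, Nat.cast_pow, Nat.cast_mul,
        Nat.cast_pow, Nat.cast_ofNat] at this
    have h5 : ((∑ j, (t g i₀ - t g j) : ℕ) : ℝ) ≤ g * ∑ j, max (θ i₀ - θ j) 0 + d := by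
      have e : (g : ℝ) * ∑ j, max (θ i₀ - θ j) 0 + d = ∑ j, (g * max (θ i₀ - θ j) 0 + 1) := by
        rw [Finset.sum_add_distrib, Finset.mul_sum]; simp
      rw [e, Nat.cast_sum]
      refine Finset.sum_le_sum fun j _ => ?_
      rw [mul_max_of_nonneg _ _ (Nat.cast_nonneg g), mul_zero]
      rcases le_total (t g j) (t g i₀) with h | h
      · rw [Nat.cast_sub h]
        have := le_max_left ((g : ℝ) * (θ i₀ - θ j)) 0
        linarith [ht1 g i₀, ht2 g j]
      · rw [Nat.sub_eq_zero_of_le h, Nat.cast_zero]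
        have := le_max_right ((g : ℝ) * (θ i₀ - θ j)) 0
        linarith
    have h6 : g * ∑ i, σ i - m ≤ ((∑ i, k g i : ℕ) : ℝ) := by
      have e : (g : ℝ) * ∑ i, σ i - m = ∑ i, (g * σ i - 1) := by
        rw [Finset.sum_sub_distrib, Finset.mul_sum]; simp
      rw [e, Nat.cast_sum]
      exact Finset.sum_le_sum fun i _ => by linarith [hk2 g i]
    have h7 : ((I g).card : ℝ) * (p * (p : ℝ) ^ (-(g * θ i₀))) ^ s ≤ C * r ^ g := by
      have e1 : (p * (p : ℝ) ^ (-(g * θ i₀))) ^ s = (p : ℝ) ^ (s - g * (s * θ i₀)) := by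
        rw [Real.mul_rpow hp0.le (by positivity), ← Real.rpow_mul hp0.le, ← Real.rpow_add hp0]
        congr 1
        ring
      have e2 : r ^ g = (p : ℝ) ^ (g * (R - s * θ i₀)) := by
        rw [hr, ← Real.rpow_natCast, ← Real.rpow_mul hp0.le]
        congr 1
        ring
      have e3 : ((I g).card : ℝ) = ((I g).card : ℝ) * (p : ℝ) ^ ((∑ i, k g i : ℕ) : ℝ) *
          (p : ℝ) ^ (-((∑ i, k g i : ℕ) : ℝ)) := by
        rw [mul_assoc, ← Real.rpow_add hp0, add_neg_cancel, Real.rpow_zero, mul_one]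
      rw [e1, e2, e3, hC]
      calc _ ≤ 5 ^ (d + m + 1) *
            (p : ℝ) ^ (((d : ℝ) + m + 1) * (g + 1) + ((∑ j, (t g i₀ - t g j) : ℕ) : ℝ)) *
            (p : ℝ) ^ (-((∑ i, k g i : ℕ) : ℝ)) * (p : ℝ) ^ (s - g * (s * θ i₀)) := by gcongr
        _ = 5 ^ (d + m + 1) * (p : ℝ) ^ (((d : ℝ) + m + 1) * (g + 1) +
            ((∑ j, (t g i₀ - t g j) : ℕ) : ℝ) + -((∑ i, k g i : ℕ) : ℝ) + (s - g * (s * θ i₀))) := by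
            simp only [mul_assoc, ← Real.rpow_add hp0]
        _ ≤ 5 ^ (d + m + 1) * (p : ℝ) ^ ((((d : ℝ) + m + 1) + m + d + s) +
            g * (R - s * θ i₀)) := by
            gcongr ?_ * ?_
            refine Real.rpow_le_rpow_of_exponent_le hp1.le ?_
            rw [hR]
            linarith
        _ = _ := by rw [Real.rpow_add hp0]; ring
    calc ((I g).card : ℝ≥0∞) * D g ^ s = ENNReal.ofReal (((I g).card : ℝ) *
          (p * (p : ℝ) ^ (-(g * θ i₀))) ^ s) := by
          rw [ENNReal.ofReal_mul (by positivity), ENNReal.ofReal_natCast,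
            ENNReal.ofReal_rpow_of_nonneg (by positivity) hs0.le]
      _ ≤ ENNReal.ofReal (C * r ^ g) := ENNReal.ofReal_le_ofReal h7
      _ = _ := by rw [ENNReal.ofReal_mul (by positivity), ENNReal.ofReal_pow (by positivity)]

end Upper

/-! ### Identification of the hyperplane with `ℤ_p^d` -/

section Assembly

variable {p : ℕ} [hp : Fact p.Prime] {d m : ℕ}

lemma isometry_append (α : Fin m → ℤ_[p]) :
    Isometry fun x : Fin d → ℤ_[p] => (Fin.append x α : Fin (d + m) → ℤ_[p]) := by
  refine Isometry.of_dist_eq fun x y => le_antisymm ?_ ?_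
  · refine (dist_pi_le_iff dist_nonneg).2 fun i => ?_
    refine Fin.addCases (fun j => ?_) (fun i => ?_) i
    · rw [Fin.append_left, Fin.append_left]
      exact dist_le_pi_dist x y j
    · rw [Fin.append_right, Fin.append_right, dist_self]
      exact dist_nonneg
  · refine (dist_pi_le_iff dist_nonneg).2 fun j => ?_
    have := dist_le_pi_dist (Fin.append x α : Fin (d + m) → ℤ_[p]) (Fin.append y α) (Fin.castAdd m j)
    rwa [Fin.append_left, Fin.append_left] at this

lemma Wset_inter_Pialpha (α : Fin m → ℤ_[p]) (τ : Fin (d + m) → ℝ) :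
    Wset τ ∩ Pialpha α = (fun x : Fin d → ℤ_[p] => (Fin.append x α : Fin (d + m) → ℤ_[p])) ''
      {x | Fin.append x α ∈ Wset τ} := by
  ext y
  constructor
  · rintro ⟨h1, h2⟩
    have e : Fin.append (fun j => y (Fin.castAdd m j)) α = y := by
      funext i
      refine Fin.addCases (fun j => ?_) (fun i => ?_) i
      · rw [Fin.append_left]
      · rw [Fin.append_right]
        exact (h2 i).symm
    exact ⟨_, by rw [Set.mem_ofPred_eq, e]; exact h1, e⟩
  · rintro ⟨x, hx, rfl⟩
    exact ⟨hx, fun i => Fin.append_right _ _ _⟩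

lemma sum_filter_eq_sum_max (θ : Fin d → ℝ) (v : ℝ) :
    ∑ j ∈ Finset.univ.filter (fun j => θ j ≤ v), (v - θ j) = ∑ j, max (v - θ j) 0 := by
  rw [Finset.sum_filter]
  refine Finset.sum_congr rfl fun j _ => ?_
  split_ifs with h
  · rw [max_eq_left (by linarith)]
  · rw [max_eq_right (by linarith)]

end Assembly

end PadicHyperplane

open PadicHyperplane

/-- Theorem 2: the Hausdorff dimension of `𝔚_n(τ) ∩ Π_α`, and the infinitude of the
`s`-dimensional Hausdorff measure at the dimension value. -/
theorem dimH_Wset_inter_hyperplane {p : ℕ} [Fact p.Prime] {d m : ℕ}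
    (hd : 1 ≤ d) (hm : 1 ≤ m) (α : Fin m → ℤ_[p])
    (hα : dioExp α = (m : ℝ) + 1) (τ : Fin (d + m) → ℝ)
    (hτpos : ∀ i, 0 < τ i)
    (h₁ : ∑ i : Fin m, τ (Fin.natAdd d i) < (m : ℝ) + 1)
    (h₂ : ((d : ℝ) + m) + 1 < ∑ i, τ i)
    (h₃ : ∀ i, 1 < τ i) (s : ℝ)
    (hs : s = ⨅ i : Fin d,
      (((d : ℝ) + m + 1 - ∑ i' : Fin m, τ (Fin.natAdd d i') +
        ∑ j ∈ Finset.univ.filter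
          (fun j : Fin d => τ (Fin.castAdd m j) ≤ τ (Fin.castAdd m i)),
          (τ (Fin.castAdd m i) - τ (Fin.castAdd m j))) / τ (Fin.castAdd m i))) :
    dimH (Wset τ ∩ Pialpha α) = ENNReal.ofReal s ∧
      μH[s] (Wset τ ∩ Pialpha α) = ∞ := by
  have : Nonempty (Fin d) := ⟨⟨0, hd⟩⟩
  have hd' : (1 : ℝ) ≤ d := by exact_mod_cast hd
  simp only [sum_filter_eq_sum_max (fun j => τ (Fin.castAdd m j))] at hs
  set K : ℝ := (d : ℝ) + m + 1 - ∑ i' : Fin m, τ (Fin.natAdd d i') with hK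
  set θ : Fin d → ℝ := fun j => τ (Fin.castAdd m j) with hθ
  set f : Fin d → ℝ := fun i => (K + ∑ j, max (θ i - θ j) 0) / θ i with hf
  change s = ⨅ i, f i at hs
  have hθ1 : ∀ j, 1 < θ j := fun j => h₃ _
  have hθ0 : ∀ j, 0 < θ j := fun j => hτpos _
  have hfs : ∀ i, s ≤ f i := fun i => hs ▸ ciInf_le (Finite.bddBelow_range f) i
  have hmax0 : ∀ i, 0 ≤ ∑ j, max (θ i - θ j) 0 :=
    fun i => Finset.sum_nonneg fun j _ => le_max_right _ _
  have hK0 : 0 < K := by linarith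
  obtain ⟨i₀, hi₀⟩ := exists_eq_ciInf_of_finite (f := f)
  rw [← hs] at hi₀
  have hs0 : 0 < s := by
    rw [← hi₀]
    exact div_pos (by linarith [hmax0 i₀]) (hθ0 _)
  have hsd : s < d := by
    obtain ⟨i, hi⟩ := Finite.exists_max θ
    refine (hfs i).trans_lt ?_
    simp only [hf]
    rw [div_lt_iff₀ (hθ0 i), Finset.sum_congr rfl fun j _ => max_eq_left (sub_nonneg.2 (hi j)),
      Finset.sum_sub_distrib, Finset.sum_const, Finset.card_univ, Fintype.card_fin, nsmul_eq_mul]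
    rw [Fin.sum_univ_add] at h₂
    linarith
  have hkink : ∀ v : ℝ, s * v ≤ K + ∑ j, max (v - θ j) 0 :=
    mul_le_of_le_at_kinks hs0 hsd fun i => by
      rw [← le_div_iff₀ (hθ0 i)]
      exact hfs i
  have hiso := isometry_append (d := d) α
  have hinf : μH[s] {x : Fin d → ℤ_[p] | Fin.append x α ∈ Wset τ} = ∞ := by
    obtain ⟨A, hA⟩ := locUbiq_approxSet hm hα h₁ h₂ h₃ hkink
    refine top_le_iff.1 ((hA.measure_eq_top hs0 hsd).ge.trans (measure_mono fun x hx => ?_))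
    exact frequently_approxSet hx
  rw [Wset_inter_Pialpha, hiso.dimH_image, hiso.hausdorffMeasure_image (Or.inl hs0.le)]
  refine ⟨le_antisymm ?_ ?_, hinf⟩
  · refine le_of_forall_gt_imp_ge_of_dense fun a ha => ?_
    rcases eq_or_ne a ∞ with rfl | hatop
    · exact le_top
    rw [← ENNReal.ofReal_toReal hatop] at ha ⊢
    have ha' : s < a.toReal := (ENNReal.ofReal_lt_ofReal_iff_of_nonneg hs0.le).1 ha
    refine dimH_le_of_lt_mul hm hα h₁ h₃ i₀ ?_
    rw [← div_lt_iff₀ (hθ0 i₀)]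
    exact hi₀.trans_lt ha'
  · refine le_dimH_of_hausdorffMeasure_eq_top (d := s.toNNReal) ?_
    rwa [Real.coe_toNNReal _ hs0.le]
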